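/- arXiv:2308.12975 — 2 statements merged into one kernel-verified Lean document; each statement's English description precedes it below -/
import Mathlib

section
/- Fix d ∈ ℕ and a non-empty bounded set F ⊂ ℝ^d, and let (φ^{(α)})_{α∈A} be a family of dimension functions indexed by a set A. Suppose A = ∪_{i=1}^∞ A_i where for each i and all α, β ∈ A_i the limit lim_{R→0} φ^{(α)}(R)/φ^{(β)}(R) exists in [0,∞]. Then there exists a homogeneous Moran set M ⊂ ℝ^d such that dim_A F = dim_A M, and such that for every α ∈ A and every dimension function ψ with lim_{R→0} ψ(R)/φ^{(α)}(R) ∈ (0,∞), both dim_A^ψ F = dim_A^ψ M and dim_A^{ψ,up} F = dim_A^{ψ,up} M. -/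
/-!
The proof discretises to dyadic scales, where a set `E` is described by its *profile*: `prof E m w` is
`log₂` of the largest number of dyadic cells of side `2 ^ (-(m + w))` that meet `E` inside one dyadic
cell of side `2 ^ (-m)`. Up to additive constants it determines all covering numbers. Setting
`Φ m = m * φ (2 ^ (-m))`, the covering condition defining the `φ`-Assouad dimension becomes
`prof E m ⌊Φ m⌋ ≤ C + s * ⌊Φ m⌋` (`phiCond_iff`), and the one defining the upper `φ`-Assouad dimension
becomes `prof E m w ≤ C + s * w` for all `w ≥ ⌊Φ m⌋` (`upCond_iff`). The Assouad dimension is the upper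
dimension for `φ = 0`.

A homogeneous Moran set whose contraction ratios are powers of two has, up to an additive constant,
profile `d` times the number of its construction levels in `[m, m + w)`. Hence for every sequence of
rates `0 ≤ a n ≤ d` there is a Moran set with profile `∑ l ∈ [m, m + w), a l` up to `o(w)`
(`exists_moran`), and it remains to choose the rates. In general no choice makes these sums equal to a
given profile `D`. They can however be made to *shadow* `D` (`Shadow`, `exists_rate`), where `w` is the
length of a window and `m` its starting level:

* upper bounds: the sum over a window is at most `D m' w + ε w` for some `m'` near `m`;
* short windows: when `w` is small relative to `m`, `D m w` is at most the sum over a window of length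
  `w` starting near `m`, up to `ε w`. For the remaining windows the alternative `D m w ≤ (B + ε) w`
  is available, where `B = largeExp D` is the asymptotically optimal such bound;
* windows with `w / m` bounded away from `0` and `∞`: the pair `(w / m, D m w / w)` is approximated by
  windows of the rate sequence arbitrarily far out, with the second coordinate bounded from above.

The rates have two ingredients. The levels are cut into blocks of relative length tending to zero. An
initial *zone* of each block, a negligible part of it, contains for each size in a slowly growing
geometric sequence a copy of the window of that size in the block where `D` is largest. The copies are
separated so widely that no window can profit from two of them. This takes care of short windows. Outside
the zones there is a *background*: along an extremely sparse sequence of levels `p q`, the growth of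
`D (p q)` is replayed up to length `q * p q` and followed by silence. The levels are selected so that
every approximate value of `(w / m, D m w / w)` that occurs arbitrarily far out is replayed arbitrarily
far out, which takes care of long windows.

Shadowing preserves both kinds of dimension condition up to an arbitrary loss in the exponent. From `D`
to the Moran set the upper bounds suffice (`PhiBound.of_shadow`, `UpBound.of_shadow`). For the converse
(`PhiBound.of_shadow'`, `UpBound.of_shadow'`) let `u` be the limit of `Φ m / m`, which exists since
`φ` is monotone. If `u > 0`, the relevant windows have `w / m` about `u` or at least about `u`, so the
third property applies. If `u = 0`, the bound for the Moran set first propagates to all windows with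
`w / m` bounded below (by subadditivity, when only one scale is controlled), so the third property
gives `B ≤ s`, and then the second property covers the remaining windows. The rates depend on the
profile alone, so one Moran set works for all dimension functions simultaneously.
-/

open Filter Metric Set Bornology MeasureTheory

noncomputable def coverNumber {X : Type*} [PseudoMetricSpace X] (E : Set X) (r : ℝ) : ENNReal :=
  sInf {n : ENNReal | ∃ S : Finset X, (S.card : ENNReal) = n ∧ E ⊆ ⋃ x ∈ S, Metric.ball x r}

noncomputable def phiAssouad {X : Type*} [PseudoMetricSpace X] (F : Set X) (φ : ℝ → ℝ) : ℝ :=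
  sInf {s : ℝ | 0 ≤ s ∧ ∃ C : ℝ, 0 < C ∧ ∀ R ∈ Set.Ioo (0:ℝ) 1, ∀ x ∈ F,
    coverNumber (F ∩ Metric.ball x R) (R ^ (1 + φ R)) ≤ ENNReal.ofReal (C * R ^ (-(φ R * s)))}

noncomputable def phiAssouadUpper {X : Type*} [PseudoMetricSpace X] (F : Set X) (φ : ℝ → ℝ) : ℝ :=
  sInf {s : ℝ | 0 ≤ s ∧ ∃ C : ℝ, 0 < C ∧ ∀ r R : ℝ, 0 < r → r ≤ R ^ (1 + φ R) →
    R ^ (1 + φ R) ≤ R → R < 1 → ∀ x ∈ F,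
    coverNumber (F ∩ Metric.ball x R) r ≤ ENNReal.ofReal (C * (R / r) ^ s)}

noncomputable def assouadDim {X : Type*} [PseudoMetricSpace X] (F : Set X) : ℝ :=
  sInf {s : ℝ | 0 ≤ s ∧ ∃ C : ℝ, 0 < C ∧ ∀ r R : ℝ, 0 < r → r ≤ R → R < 1 → ∀ x ∈ F,
    coverNumber (F ∩ Metric.ball x R) r ≤ ENNReal.ofReal (C * (R / r) ^ s)}

noncomputable def upperBoxDim {X : Type*} [PseudoMetricSpace X] (F : Set X) : ℝ :=
  Filter.limsup (fun r : ℝ => Real.log (coverNumber F r).toReal / Real.log (1 / r))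
    (nhdsWithin 0 (Set.Ioi 0))

def DoublingWith {X : Type*} [PseudoMetricSpace X] (F : Set X) (M : ℕ) : Prop :=
  ∀ x ∈ F, ∀ r : ℝ, 0 < r → ∃ S : Finset X, S.card ≤ M ∧
    F ∩ Metric.ball x r ⊆ ⋃ y ∈ S, Metric.ball y (r / 2)

def IsDimFunction (φ : ℝ → ℝ) : Prop :=
  (∀ R ∈ Set.Ioo (0:ℝ) 1, 0 < φ R) ∧
  (∀ R₁ ∈ Set.Ioo (0:ℝ) 1, ∀ R₂ ∈ Set.Ioo (0:ℝ) 1, R₁ ≤ R₂ →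
    φ R₂ * Real.log (1 / R₂) ≤ φ R₁ * Real.log (1 / R₁) ∧ φ R₁ ≤ φ R₂) ∧
  Filter.Tendsto (fun R => φ R * Real.log (1 / R)) (nhdsWithin 0 (Set.Ioo 0 1)) Filter.atTop

def moranMap (d : ℕ) (ρ : ℝ) (b : Fin d → Bool) (x : Fin d → ℝ) : Fin d → ℝ :=
  fun j => ρ * x j + (if b j then 1 - ρ else 0)

def moranComp (d : ℕ) (r : ℕ → ℝ) : ℕ → List (Fin d → Bool) → (Fin d → ℝ) → (Fin d → ℝ)
  | _, [], x => x
  | n, b :: σ, x => moranMap d (r n) b (moranComp d r (n + 1) σ x)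

def moranSet (d : ℕ) (r : ℕ → ℝ) : Set (Fin d → ℝ) :=
  ⋂ n : ℕ, ⋃ σ ∈ {l : List (Fin d → Bool) | l.length = n},
    moranComp d r 0 σ '' Set.Icc (0 : Fin d → ℝ) 1

def IsHomogeneousMoran (d : ℕ) (M : Set (Fin d → ℝ)) : Prop :=
  ∃ r : ℕ → ℝ, (∀ n, 0 < r n ∧ r n ≤ 1 / 2) ∧ M = moranSet d r

namespace MoranGeneric

section
/-! ### Profiles -/

/-- The growth rules of dyadic branching: `D m w` is `log₂` of the largest number of descendants, `w`
levels further down, of a cell of level `m` in a tree in which every cell has at most `2 ^ d` children. -/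
structure IsProfile (d : ℕ) (D : ℕ → ℕ → ℝ) : Prop where
  nonneg : ∀ m w, 0 ≤ D m w
  le : ∀ m w, D m w ≤ d * w
  sub : ∀ m v w, D m (v + w) ≤ D m v + D (m + v) w
  mono : ∀ m v w, v ≤ w → D m v ≤ D m w
  anti : ∀ m v w, D (m + v) w ≤ D m (v + w)

namespace IsProfile

variable {d : ℕ} {D : ℕ → ℕ → ℝ}

lemma zero (h : IsProfile d D) (m : ℕ) : D m 0 = 0 :=
  le_antisymm (by simpa using h.le m 0) (h.nonneg m 0)

lemma inc (h : IsProfile d D) (m : ℕ) {v w : ℕ} (hvw : v ≤ w) :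
    D m w - D m v ≤ D (m + v) (w - v) := by
  have := h.sub m v (w - v)
  rw [Nat.add_sub_cancel' hvw] at this
  linarith

lemma lip (h : IsProfile d D) (m : ℕ) {v w : ℕ} (hvw : v ≤ w) :
    D m w ≤ D m v + d * ((w : ℝ) - v) := by
  have h1 := h.inc m hvw
  have h2 := h.le (m + v) (w - v)
  rw [Nat.cast_sub hvw] at h2
  linarith

lemma lip_abs (h : IsProfile d D) (m v w : ℕ) :
    D m w ≤ D m v + d * |(w : ℝ) - v| := by
  rcases le_total v w with hvw | hvw
  · have := h.lip m hvw
    rwa [abs_of_nonneg (by simpa using hvw)]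
  · have := h.mono m _ _ hvw
    have : 0 ≤ (d : ℝ) * |(w : ℝ) - v| := by positivity
    linarith

/-- Skipping the first `m' - m` levels of a window costs at most `d` for each of them. -/
lemma shift (h : IsProfile d D) {m m' : ℕ} (hm : m ≤ m') (w : ℕ) :
    D m w ≤ d * ((m' : ℝ) - m) + D m' w := by
  obtain ⟨v, rfl⟩ := Nat.exists_eq_add_of_le hm
  have h1 := h.mono m w (v + w) (by omega)
  have h2 := h.sub m v w
  have h3 := h.le m v
  push_cast
  linarith [show (d : ℝ) * ((m : ℝ) + v - m) = d * v by ring]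

lemma anti' (h : IsProfile d D) {m m' w w' : ℕ} (hm : m ≤ m') (hw : m' + w' = m + w) :
    D m' w' ≤ D m w := by
  obtain ⟨v, rfl⟩ := Nat.exists_eq_add_of_le hm
  have := h.anti m v w'
  rwa [show v + w' = w by omega] at this

end IsProfile

/-! ### Rates defined block by block -/

/-- The index of the block containing `n`: for strictly increasing `X` with `X 0 = 0`, the number `i` with
`X i ≤ n < X (i + 1)`. -/
def blk (X : ℕ → ℕ) (n : ℕ) : ℕ := Nat.findGreatest (fun i => X i ≤ n) n

lemma blk_le {X : ℕ → ℕ} (h0 : X 0 = 0) (n : ℕ) : X (blk X n) ≤ n := by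
  have := Nat.findGreatest_spec (P := fun i => X i ≤ n) (n := n) (m := 0) (by omega) (by simp [h0])
  exact this

lemma lt_blk {X : ℕ → ℕ} (hX : StrictMono X) (n : ℕ) : n < X (blk X n + 1) := by
  by_contra! hcon
  have h1 : blk X n + 1 ≤ n := le_trans (hX.id_le _) hcon
  have := Nat.le_findGreatest (P := fun i => X i ≤ n) h1 hcon
  simp only [blk] at *
  omega

lemma blk_eq {X : ℕ → ℕ} (hX : StrictMono X) (h0 : X 0 = 0) {i n : ℕ} (h1 : X i ≤ n)
    (h2 : n < X (i + 1)) : blk X n = i := by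
  have h3 := blk_le h0 n
  have h4 := lt_blk hX n
  have h5 : blk X n < i + 1 := hX.lt_iff_lt.1 (lt_of_le_of_lt h3 h2)
  have h6 : i < blk X n + 1 := hX.lt_iff_lt.1 (lt_of_le_of_lt h1 h4)
  omega

lemma le_blk {X : ℕ → ℕ} (hX : StrictMono X) {i n : ℕ} (h1 : X i ≤ n) : i ≤ blk X n := by
  have h6 : i < blk X n + 1 := hX.lt_iff_lt.1 (lt_of_le_of_lt h1 (lt_blk hX n))
  omega

/-- The rate sequence whose sum over the first `t` levels of block `i`, which starts at level `X i`, is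
`Z i t - Z i 0`. -/
def rate (X : ℕ → ℕ) (Z : ℕ → ℕ → ℝ) (n : ℕ) : ℝ :=
  Z (blk X n) (n + 1 - X (blk X n)) - Z (blk X n) (n - X (blk X n))

lemma sum_rate {X : ℕ → ℕ} (hX : StrictMono X) (h0 : X 0 = 0) (Z : ℕ → ℕ → ℝ) {i m n : ℕ}
    (hm : X i ≤ m) (hmn : m ≤ n) (hn : n ≤ X (i + 1)) :
    ∑ l ∈ Finset.Ico m n, rate X Z l = Z i (n - X i) - Z i (m - X i) := by
  induction n, hmn using Nat.le_induction with
  | base => simp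
  | succ n hmn ih =>
    rw [Finset.sum_Ico_succ_top hmn, ih (by omega), rate, blk_eq hX h0 (le_trans hm hmn) (by omega)]
    ring

lemma sum_full {X : ℕ → ℕ} (hX : StrictMono X) (h0 : X 0 = 0) {Z : ℕ → ℕ → ℝ}
    (hZ0 : ∀ i, Z i 0 = 0) {ε : ℝ} {i₀ : ℕ}
    (h : ∀ i ≥ i₀, Z i (X (i + 1) - X i) ≤ ε * ((X (i + 1) : ℝ) - X i)) {i : ℕ} (hi : i₀ ≤ i) :
    ∑ l ∈ Finset.Ico (X i₀) (X i), rate X Z l ≤ ε * ((X i : ℝ) - X i₀) := by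
  induction i, hi using Nat.le_induction with
  | base => simp
  | succ i hi ih =>
    have h1 : X i₀ ≤ X i := hX.monotone hi
    have h2 : X i ≤ X (i + 1) := hX.monotone (Nat.le_succ i)
    rw [← Finset.sum_Ico_consecutive _ h1 h2, sum_rate hX h0 Z le_rfl h2 le_rfl]
    have := h i hi
    simp only [Nat.sub_self, hZ0]
    linarith

lemma rate_nonneg (X : ℕ → ℕ) {Z : ℕ → ℕ → ℝ} (hZ : ∀ i, Monotone (Z i)) (n : ℕ) :
    0 ≤ rate X Z n :=
  sub_nonneg.2 (hZ _ (by omega))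

/-! ### The sparse background -/

/-- Growth of the background in block `q`: it follows `D (p q)` for `L q` levels and then stays constant. -/
def bgZ (D : ℕ → ℕ → ℝ) (p L : ℕ → ℕ) (q t : ℕ) : ℝ := D (p q) (min t (L q))

section background
variable {d : ℕ} {D : ℕ → ℕ → ℝ}

lemma bgZ_mono (h : IsProfile d D) (p L : ℕ → ℕ) (q : ℕ) : Monotone (bgZ D p L q) :=
  fun _ _ hst => h.mono _ _ _ (min_le_min_right _ hst)

lemma bg_rate_le (h : IsProfile d D) (p L : ℕ → ℕ) (h0 : p 0 = 0) (n : ℕ) :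
    rate p (bgZ D p L) n ≤ d := by
  unfold rate bgZ
  set q := blk p n
  have hq : p q ≤ n := blk_le h0 n
  have h1 := h.inc (p q) (v := min (n - p q) (L q)) (w := min (n + 1 - p q) (L q)) (by omega)
  have h2 := h.le (p q + min (n - p q) (L q)) (min (n + 1 - p q) (L q) - min (n - p q) (L q))
  have h3 : ((min (n + 1 - p q) (L q) - min (n - p q) (L q) : ℕ) : ℝ) ≤ 1 := by
    exact_mod_cast (by omega : min (n + 1 - p q) (L q) - min (n - p q) (L q) ≤ 1)
  have h4 : (d : ℝ) * ((min (n + 1 - p q) (L q) - min (n - p q) (L q) : ℕ) : ℝ) ≤ d * 1 := by gcongr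
  linarith

lemma bg_sum_le (h : IsProfile d D) (p L : ℕ → ℕ) (h0 : p 0 = 0) (m n : ℕ) (hmn : m ≤ n) :
    ∑ l ∈ Finset.Ico m n, rate p (bgZ D p L) l ≤ d * ((n : ℝ) - m) := by
  calc _ ≤ ∑ l ∈ Finset.Ico m n, (d : ℝ) := Finset.sum_le_sum fun l _ => bg_rate_le h p L h0 l
    _ = _ := by simp [Nat.cast_sub hmn]; ring

lemma bg_upper_block (h : IsProfile d D) {p L : ℕ → ℕ} (hp : StrictMono p) (h0 : p 0 = 0)
    {q m w : ℕ} (hm : p q ≤ m) (hn : m + w ≤ p (q + 1)) :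
    ∑ l ∈ Finset.Ico m (m + w), rate p (bgZ D p L) l ≤ D m w := by
  rw [sum_rate hp h0 _ hm (by omega) hn]
  unfold bgZ
  by_cases hL : L q ≤ m - p q
  · rw [min_eq_right hL, min_eq_right (by omega), sub_self]
    exact h.nonneg _ _
  · have h1 := h.inc (p q) (v := min (m - p q) (L q)) (w := min (m + w - p q) (L q)) (by omega)
    refine h1.trans ?_
    rw [show p q + min (m - p q) (L q) = m by omega]
    exact h.mono _ _ _ (by omega)

/-- If the silence before each `p (q + 1)` is much longer than all that precedes it, the background never
grows faster than the profile itself, up to a vanishing rate. A window meeting a single replay is bounded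
because `D` is a profile. A window meeting several contains a whole silent stretch, so that what it
collects before its last replay is negligible. -/
lemma bg_upper (h : IsProfile d D) {p L : ℕ → ℕ} (hp : StrictMono p) (h0 : p 0 = 0)
    (hL : ∀ q, (q + 2) * (p q + L q) ≤ p (q + 1)) (m w : ℕ) :
    ∑ l ∈ Finset.Ico m (m + w), rate p (bgZ D p L) l ≤ D m w + d / (blk p m + 1) * w := by
  have herr : 0 ≤ (d : ℝ) / (blk p m + 1) * w := by positivity
  set q' := blk p (m + w) with hq'
  have h1 : p q' ≤ m + w := blk_le h0 _
  have h2 : m + w < p (q' + 1) := lt_blk hp _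
  by_cases hm : p q' ≤ m
  · have := bg_upper_block h (L := L) hp h0 hm h2.le
    linarith
  push Not at hm
  obtain ⟨r, hr⟩ : ∃ r, q' = r + 1 := ⟨q' - 1, by
    have : q' ≠ 0 := by rintro h; rw [h, h0] at hm; omega
    omega⟩
  rw [hr] at h1 h2 hm
  have hbr : blk p m ≤ r := by
    have : blk p m < r + 1 := hp.lt_iff_lt.1 (lt_of_le_of_lt (blk_le h0 m) hm)
    omega
  rw [← Finset.sum_Ico_consecutive _ hm.le h1]
  have hA : ∑ l ∈ Finset.Ico (p (r + 1)) (m + w), rate p (bgZ D p L) l ≤ D m w := by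
    have := bg_upper_block h (L := L) (q := r + 1) (m := p (r + 1)) (w := m + w - p (r + 1)) hp h0
      le_rfl (by omega)
    rw [show p (r + 1) + (m + w - p (r + 1)) = m + w by omega] at this
    exact this.trans (h.anti' hm.le (by omega))
  have hH : p r + L r ≤ p (r + 1) := by have := hL r; nlinarith
  have hzero : ∀ s, p r + L r ≤ s → s ≤ p (r + 1) →
      ∑ l ∈ Finset.Ico s (p (r + 1)), rate p (bgZ D p L) l = 0 := by
    intro s hs hs'
    rw [sum_rate hp h0 _ (i := r) (by omega) hs' le_rfl]
    simp only [bgZ]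
    rw [min_eq_right (by omega), min_eq_right (by omega), sub_self]
  have hB : ∑ l ∈ Finset.Ico m (p (r + 1)), rate p (bgZ D p L) l ≤ d / (blk p m + 1) * w := by
    by_cases hmH : p r + L r ≤ m
    · rw [hzero m hmH hm.le]; exact herr
    · push Not at hmH
      rw [← Finset.sum_Ico_consecutive _ hmH.le hH, hzero _ le_rfl hH, add_zero]
      have h3 := bg_sum_le h p L h0 m (p r + L r) hmH.le
      refine h3.trans ?_
      -- the silent stretch before `p (r + 1)` is `r + 1` times longer than everything before it
      have h4 : (r + 1) * (p r + L r) ≤ w := by have := hL r; nlinarith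
      have h5 : (blk p m + 1) * (p r + L r) ≤ w := le_trans (by gcongr) h4
      have h6 : ((blk p m : ℝ) + 1) * ((p r + L r : ℕ) : ℝ) ≤ w := by exact_mod_cast h5
      have h7 : ((p r + L r : ℕ) : ℝ) ≤ w / (blk p m + 1) := by
        rw [le_div_iff₀ (by positivity)]; linarith
      calc (d : ℝ) * (((p r + L r : ℕ) : ℝ) - m) ≤ d * (w / (blk p m + 1)) := by
            gcongr
            have : (0 : ℝ) ≤ m := by positivity
            linarith
        _ = _ := by ring
  linarith

end background

end

section
/-! ### Zones -/

/-- The window sizes available for parameter `k`: a sequence starting at `1` with successive ratios about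
`1 + 1 / k`. -/
def size (k : ℕ) : ℕ → ℕ
  | 0 => 1
  | j + 1 => size k j + 1 + size k j / k

/-- The position factor: the window of size `s` starts at distance `lam k * s` from the start of the zone.
It is so large that consecutive windows are at least `(k + 1) ^ 2` times the smaller size apart
(`window_gap`). -/
def lam (k : ℕ) : ℕ := k * ((k + 1) ^ 2 + 1)

lemma size_lt (k j : ℕ) : size k j < size k (j + 1) := by
  rw [size]; exact Nat.lt_of_lt_of_le (Nat.lt_succ_self _) (Nat.le_add_right _ _)

lemma size_strictMono (k : ℕ) : StrictMono (size k) := strictMono_nat_of_lt_succ (size_lt k)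

lemma lt_size (k j : ℕ) : j < size k j := by
  induction j with
  | zero => simp [size]
  | succ j ih => have := size_lt k j; omega

lemma size_gap {k : ℕ} (hk : 0 < k) (j : ℕ) : k * size k j + size k j ≤ k * size k (j + 1) := by
  rw [size]
  have := Nat.lt_mul_div_succ (size k j) hk
  nlinarith

/-- All windows before the `j`-th have total length at most `k` times its length. -/
lemma sum_size {k : ℕ} (hk : 0 < k) (j : ℕ) : ∑ i ∈ Finset.range j, size k i ≤ k * size k j := by
  induction j with
  | zero => simp
  | succ j ih =>
    rw [Finset.sum_range_succ]
    have := size_gap hk j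
    omega

lemma sum_size' {k : ℕ} (hk : 0 < k) (j : ℕ) :
    ∑ i ∈ Finset.range (j + 1), size k i ≤ (k + 1) * size k j := by
  rw [Finset.sum_range_succ]
  have := sum_size hk j
  nlinarith

lemma window_gap {k : ℕ} (hk : 0 < k) (j : ℕ) :
    lam k * size k j + size k j + (k + 1) ^ 2 * size k j ≤ lam k * size k (j + 1) := by
  have := Nat.mul_le_mul_left ((k + 1) ^ 2 + 1) (size_gap hk j)
  unfold lam
  nlinarith

/-- Every length is approximated from below by a window size, up to a relative error `1 / k`. -/
lemma exists_size {k : ℕ} {w : ℕ} (hw : 1 ≤ w) :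
    ∃ j, size k j ≤ w ∧ w ≤ size k j + size k j / k := by
  obtain ⟨j, hj⟩ : ∃ j, w < size k j := ⟨w, lt_size k w⟩
  classical
  have hex : ∃ j, w < size k j := ⟨j, hj⟩
  have h1 := Nat.find_spec hex
  have h0 : Nat.find hex ≠ 0 := by
    intro h
    rw [h] at h1
    simp [size] at h1
    omega
  obtain ⟨i, hi⟩ := Nat.exists_eq_succ_of_ne_zero h0
  have h2 := Nat.find_min hex (m := i) (by omega)
  rw [hi, Nat.succ_eq_add_one, size] at h1
  exact ⟨i, by omega, by omega⟩

/-- Growth over the first `t` levels of a zone with `J` windows. The `j`-th window starts at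
`lam k * size k j`, has length `size k j`, and copies the growth of `D (x j)`. The truncated subtraction
makes it contribute `0` before its start. -/
def zoneZ (D : ℕ → ℕ → ℝ) (k J : ℕ) (x : ℕ → ℕ) (t : ℕ) : ℝ :=
  ∑ j ∈ Finset.range J, D (x j) (min (size k j) (t - lam k * size k j))

section zone
variable {d : ℕ} {D : ℕ → ℕ → ℝ}

lemma zone_mono (h : IsProfile d D) (k J : ℕ) (x : ℕ → ℕ) : Monotone (zoneZ D k J x) :=
  fun _ _ hst => Finset.sum_le_sum fun _ _ => h.mono _ _ _ (by omega)

lemma zone_zero (h : IsProfile d D) (k J : ℕ) (x : ℕ → ℕ) : zoneZ D k J x 0 = 0 := by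
  simp [zoneZ, h.zero]

lemma zone_const (D : ℕ → ℕ → ℝ) {k J cap : ℕ} (x : ℕ → ℕ) (hJ : ∀ j < J, size k j ≤ cap) {t : ℕ}
    (ht : (lam k + 1) * cap ≤ t) : zoneZ D k J x t = ∑ j ∈ Finset.range J, D (x j) (size k j) := by
  refine Finset.sum_congr rfl fun j hj => ?_
  congr 1
  have h1 := hJ j (Finset.mem_range.1 hj)
  have h2 : (lam k + 1) * size k j ≤ (lam k + 1) * cap := Nat.mul_le_mul_left _ h1
  rw [add_mul] at h2
  omega

lemma zone_window (h : IsProfile d D) {k J : ℕ} (x : ℕ → ℕ) {j : ℕ} (hj : j < J) :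
    D (x j) (size k j) ≤
      zoneZ D k J x (lam k * size k j + size k j) - zoneZ D k J x (lam k * size k j) := by
  rw [zoneZ, zoneZ, ← Finset.sum_sub_distrib]
  have h1 : ∀ i ∈ Finset.range J, 0 ≤
      D (x i) (min (size k i) (lam k * size k j + size k j - lam k * size k i)) -
      D (x i) (min (size k i) (lam k * size k j - lam k * size k i)) :=
    fun i _ => sub_nonneg.2 (h.mono _ _ _ (by omega))
  refine le_trans ?_ (Finset.single_le_sum h1 (Finset.mem_range.2 hj))
  simp [h.zero]

/-- Before level `t`, either no window has started or there is a last one that has. -/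
lemma zone_last {k J t : ℕ} :
    (∀ j < J, t ≤ lam k * size k j) ∨
    ∃ j < J, lam k * size k j < t ∧ ∀ i < J, j < i → t ≤ lam k * size k i := by
  by_cases hex : ∃ j < J, lam k * size k j < t
  · right
    obtain ⟨j, hj, hmax⟩ := Finset.exists_max_image
      ((Finset.range J).filter fun j => lam k * size k j < t) id (by
        obtain ⟨j, hj⟩ := hex; exact ⟨j, by simpa using hj⟩)
    simp only [Finset.mem_filter, Finset.mem_range, id] at hj hmax
    refine ⟨j, hj.1, hj.2, fun i hi hji => ?_⟩
    by_contra! hcon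
    have := hmax i ⟨hi, hcon⟩
    omega
  · left
    push Not at hex
    exact hex

/-- A zone has small density at every stage, since each window starts late relative to the total length
of the windows up to and including itself. -/
lemma zone_le (h : IsProfile d D) {k : ℕ} (hk : 0 < k) (J : ℕ) (x : ℕ → ℕ) (t : ℕ) :
    zoneZ D k J x t ≤ d / (k + 1) * t := by
  rcases zone_last (k := k) (J := J) (t := t) with hlast | ⟨j, hj, hjt, hlast⟩
  · have : zoneZ D k J x t = 0 := Finset.sum_eq_zero fun j hj => by
      rw [Nat.sub_eq_zero_of_le (hlast j (Finset.mem_range.1 hj)), Nat.min_zero, h.zero]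
    rw [this]; positivity
  · have h1 : zoneZ D k J x t ≤ ∑ i ∈ Finset.range (j + 1), (d : ℝ) * size k i := by
      rw [zoneZ, ← Finset.sum_range_add_sum_Ico _ (show j + 1 ≤ J by omega)]
      have h2 : ∑ i ∈ Finset.Ico (j + 1) J,
          D (x i) (min (size k i) (t - lam k * size k i)) = 0 := Finset.sum_eq_zero fun i hi => by
        rw [Finset.mem_Ico] at hi
        rw [Nat.sub_eq_zero_of_le (hlast i hi.2 (by omega)), Nat.min_zero, h.zero]
      rw [h2, add_zero]
      refine Finset.sum_le_sum fun i _ => (h.mono _ _ (size k i) (by omega)).trans (h.le _ _)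
    refine h1.trans ?_
    rw [← Finset.mul_sum, div_mul_eq_mul_div, mul_div_assoc]
    gcongr
    rw [le_div_iff₀ (by positivity)]
    have h3 := sum_size' hk j
    have h4 : (k + 1) ^ 2 * size k j ≤ lam k * size k j := by
      unfold lam; gcongr; nlinarith
    have h5 : (∑ i ∈ Finset.range (j + 1), size k i) * (k + 1) ≤ t := by nlinarith
    exact_mod_cast h5

/-- The growth over a stretch of length `v` is bounded by the growth of `D` over `v` levels from some level
of the last window met. An earlier window can contribute as well only if the stretch covers the gap between
them, and then the contribution of all earlier windows is negligible. -/
lemma zone_inc (h : IsProfile d D) {k : ℕ} (hk : 0 < k) (J : ℕ) (x : ℕ → ℕ) (t v : ℕ) :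
    zoneZ D k J x (t + v) - zoneZ D k J x t ≤ 0 ∨
    ∃ j < J, ∃ a ≤ size k j,
      zoneZ D k J x (t + v) - zoneZ D k J x t ≤ D (x j + a) v ∨
      (k + 1) ^ 2 ≤ v ∧
        zoneZ D k J x (t + v) - zoneZ D k J x t ≤ D (x j + a) v + d / (k + 1) * v := by
  set f : ℕ → ℝ := fun i => D (x i) (min (size k i) (t + v - lam k * size k i)) -
      D (x i) (min (size k i) (t - lam k * size k i)) with hf
  have hsum : zoneZ D k J x (t + v) - zoneZ D k J x t = ∑ i ∈ Finset.range J, f i := by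
    rw [zoneZ, zoneZ, ← Finset.sum_sub_distrib]
  rw [hsum]
  have hnull : ∀ i, t + v ≤ lam k * size k i → f i = 0 := by
    intro i hi
    simp only [hf]
    rw [Nat.sub_eq_zero_of_le hi, Nat.sub_eq_zero_of_le (by omega), sub_self]
  rcases zone_last (k := k) (J := J) (t := t + v) with hlast | ⟨j, hj, hjt, hlast⟩
  · left
    exact (Finset.sum_eq_zero fun i hi => hnull i (hlast i (Finset.mem_range.1 hi))).le
  right
  refine ⟨j, hj, min (size k j) (t - lam k * size k j), by omega, ?_⟩
  have hj' : f j ≤ D (x j + min (size k j) (t - lam k * size k j)) v :=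
    (h.inc _ (by omega)).trans (h.mono _ _ _ (by omega))
  have hsplit : ∑ i ∈ Finset.range J, f i = ∑ i ∈ Finset.range j, f i + f j := by
    rw [← Finset.sum_range_add_sum_Ico _ (show j + 1 ≤ J by omega), Finset.sum_range_succ]
    have : ∑ i ∈ Finset.Ico (j + 1) J, f i = 0 := Finset.sum_eq_zero fun i hi => by
      rw [Finset.mem_Ico] at hi
      exact hnull i (hlast i hi.2 (by omega))
    rw [this, add_zero]
  rw [hsplit]
  rcases Nat.eq_zero_or_pos j with rfl | hjpos
  · left; simpa using hj'
  obtain ⟨i, rfl⟩ : ∃ i, j = i + 1 := ⟨j - 1, by omega⟩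
  by_cases hti : lam k * size k i + size k i ≤ t
  · left
    have : ∑ l ∈ Finset.range (i + 1), f l = 0 := Finset.sum_eq_zero fun l hl => by
      have h1 : size k l ≤ size k i :=
        (size_strictMono k).monotone (by have := Finset.mem_range.1 hl; omega)
      have h2 := Nat.mul_le_mul_left (lam k) h1
      simp only [hf]
      rw [min_eq_left (by omega), min_eq_left (by omega), sub_self]
    rw [this, zero_add]
    exact hj'
  · right
    push Not at hti
    have hgap := window_gap hk i
    have hv : (k + 1) ^ 2 * size k i ≤ v := by omega
    have hpos := lt_size k i
    refine ⟨by nlinarith, ?_⟩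
    have h1 : ∑ l ∈ Finset.range (i + 1), f l ≤ ∑ l ∈ Finset.range (i + 1), (d : ℝ) * size k l := by
      refine Finset.sum_le_sum fun l _ => ?_
      have h2 := h.nonneg (x l) (min (size k l) (t - lam k * size k l))
      have h3 := (h.mono (x l) (min (size k l) (t + v - lam k * size k l)) (size k l)
        (by omega)).trans (h.le _ _)
      simp only [hf]
      linarith
    have h4 : ∑ l ∈ Finset.range (i + 1), (d : ℝ) * size k l ≤ d / (k + 1) * v := by
      rw [← Finset.mul_sum, div_mul_eq_mul_div, mul_div_assoc]
      gcongr
      rw [le_div_iff₀ (by positivity)]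
      have h3 := sum_size' hk i
      have h5 : (∑ i ∈ Finset.range (i + 1), size k i) * (k + 1) ≤ v := by nlinarith
      exact_mod_cast h5
    linarith

end zone

end

section
/-! ### Shadowing -/

/-- The bound `D m w ≤ b * w` holds for all large `m`, as long as the ratio `w / m` stays bounded below. -/
def LargeBound (D : ℕ → ℕ → ℝ) (b : ℝ) : Prop :=
  ∀ H : ℕ, ∃ K : ℕ, ∀ m ≥ K, ∀ w, m ≤ H * w → D m w ≤ b * w

/-- The optimal exponent for windows with `w / m` bounded below. The set is nonempty for a profile, as it
contains `d`. -/
noncomputable def largeExp (D : ℕ → ℕ → ℝ) : ℝ := sInf {b | 0 ≤ b ∧ LargeBound D b}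

lemma largeExp_nonneg (D : ℕ → ℕ → ℝ) : 0 ≤ largeExp D := Real.sInf_nonneg fun _ hb => hb.1

lemma largeExp_le {D : ℕ → ℕ → ℝ} {b : ℝ} (hb : 0 ≤ b) (h : LargeBound D b) : largeExp D ≤ b :=
  csInf_le ⟨0, fun _ hb => hb.1⟩ ⟨hb, h⟩

lemma largeBound_of_lt {d : ℕ} {D : ℕ → ℕ → ℝ} (h : IsProfile d D) {b : ℝ} (hb : largeExp D < b) :
    LargeBound D b := by
  obtain ⟨c, hc, hcb⟩ := exists_lt_of_csInf_lt (s := {b | 0 ≤ b ∧ LargeBound D b})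
    ⟨d, by positivity, fun H => ⟨0, fun m _ w _ => h.le m w⟩⟩ hb
  intro H
  obtain ⟨K, hK⟩ := hc.2 H
  refine ⟨K, fun m hm w hw => (hK m hm w hw).trans ?_⟩
  gcongr

/-- `S` shadows `D` with exponent `B`. `upper`: up to a small relative displacement of the starting level,
`S` is not larger than `D`. `lower`: likewise `D` is not larger than `S`, except where `D` grows at rate at
most `B`. `mid`: for a window of ratio `w / m ∈ [δ, A]`, arbitrarily far out there are windows of nearly the
same ratio over which `S` grows at nearly the rate of `D`, or faster. -/
structure Shadow (B : ℝ) (D S : ℕ → ℕ → ℝ) : Prop where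
  upper : ∀ ε > (0 : ℝ), ∃ K : ℕ, ∀ m ≥ K, ∀ w ≥ K, ∃ m' : ℕ,
    |(m' : ℝ) - m| ≤ ε * m ∧ S m w ≤ D m' w + ε * w
  lower : ∀ ε > (0 : ℝ), ∃ K : ℕ, ∀ m ≥ K, ∀ w ≥ K,
    (∃ m' : ℕ, |(m' : ℝ) - m| ≤ ε * m ∧ D m w ≤ S m' w + ε * w) ∨ D m w ≤ (B + ε) * w
  mid : ∀ δ > (0 : ℝ), ∀ A : ℝ, ∀ ε > (0 : ℝ), ∃ K : ℕ, ∀ m ≥ K, ∀ w : ℕ, δ * m ≤ w → w ≤ A * m →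
    ∀ N : ℕ, ∃ m' ≥ N, ∃ w' ≥ N,
      |(w' : ℝ) / m' - w / m| ≤ ε ∧ D m w ≤ (S m' w' / w' + ε) * w

/-- A sequence tending to infinity so slowly that `k i` may be used from index `K (k i)` on. -/
lemma exists_slow (K : ℕ → ℕ) : ∃ k : ℕ → ℕ, Monotone k ∧ (∀ i, 1 ≤ k i) ∧
    Tendsto k atTop atTop ∧ ∃ i₀, ∀ i ≥ i₀, K (k i) ≤ i := by
  classical
  set g : ℕ → ℕ := fun i => Nat.findGreatest (fun k => K k ≤ i) i with hg
  have hmono : Monotone g := fun i i' hi =>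
    Nat.findGreatest_mono (fun k hk => le_trans hk hi) hi
  have hbig : ∀ k i, K k ≤ i → k ≤ i → k ≤ g i := fun k i h1 h2 => Nat.le_findGreatest h2 h1
  refine ⟨fun i => max 1 (g i), fun i i' hi => max_le_max le_rfl (hmono hi), fun i => le_max_left _ _,
    ?_, K 1 + 1, fun i hi => ?_⟩
  · refine tendsto_atTop.2 fun k => ?_
    filter_upwards [eventually_ge_atTop (max (K k) k)] with i hi
    exact le_max_of_le_right (hbig k i (le_trans (le_max_left _ _) hi) (le_trans (le_max_right _ _) hi))
  · have h1 : 1 ≤ g i := hbig 1 i (by omega) (by omega)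
    simp only [max_eq_right h1]
    exact Nat.findGreatest_spec (P := fun k => K k ≤ i) (m := 1) (by omega) (by omega)

/-! ### Blocks and their zones -/

/-- Start of block `i`: a sequence with increments about `bx k i / k i`. -/
def bx (k : ℕ → ℕ) : ℕ → ℕ
  | 0 => 0
  | i + 1 => bx k i + 1 + bx k i / k i

lemma bx_strictMono (k : ℕ → ℕ) : StrictMono (bx k) := strictMono_nat_of_lt_succ fun i => by
  rw [bx]; exact Nat.lt_of_lt_of_le (Nat.lt_succ_self _) (Nat.le_add_right _ _)

/-- The largest admissible window size in the zone of block `i`. -/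
def cap (k : ℕ → ℕ) (i : ℕ) : ℕ := bx k i / (2 * (lam (k i) + 1) * k i ^ 2)

/-- Length of the zone of block `i`. The windows are confined to its first half, so a stretch that starts
in one of them and leaves the zone is long. -/
def zl (k : ℕ → ℕ) (i : ℕ) : ℕ := 2 * ((lam (k i) + 1) * cap k i)

/-- Number of windows in the zone of block `i`, those of size at most `cap k i`. -/
def nb (k : ℕ → ℕ) (i : ℕ) : ℕ :=
  Nat.find (⟨_, lt_size (k i) (cap k i)⟩ : ∃ j, cap k i < size (k i) j)

lemma lt_nb {k : ℕ → ℕ} {i j : ℕ} : j < nb k i ↔ size (k i) j ≤ cap k i := by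
  unfold nb
  rw [Nat.lt_find_iff]
  push Not
  exact ⟨fun h => h j le_rfl, fun h m hm => le_trans ((size_strictMono _).monotone hm) h⟩

lemma zl_le (k : ℕ → ℕ) (i : ℕ) : k i ^ 2 * zl k i ≤ bx k i := by
  have := Nat.mul_div_le (bx k i) (2 * (lam (k i) + 1) * k i ^ 2)
  unfold zl cap
  nlinarith

lemma zl_le' {k : ℕ → ℕ} (hk : ∀ i, 1 ≤ k i) (i : ℕ) : k i * zl k i ≤ bx k (i + 1) - bx k i := by
  have h1 := zl_le k i
  have h2 := Nat.lt_mul_div_succ (bx k i) (hk i)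
  have h3 : bx k (i + 1) - bx k i = bx k i / k i + 1 := by
    rw [bx]; generalize bx k i / k i = q; omega
  rw [h3]
  have h4 : k i * (k i * zl k i) < k i * (bx k i / k i + 1) := by nlinarith
  exact (Nat.lt_of_mul_lt_mul_left h4).le

lemma zl_le'' {k : ℕ → ℕ} (hk : ∀ i, 1 ≤ k i) (i : ℕ) : bx k i + zl k i ≤ bx k (i + 1) := by
  have h1 := zl_le' hk i
  have h2 : bx k i < bx k (i + 1) := bx_strictMono k (Nat.lt_succ_self i)
  have h3 : 1 * zl k i ≤ k i * zl k i := Nat.mul_le_mul_right _ (hk i)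
  omega

lemma cap_le_zl (k : ℕ → ℕ) (i : ℕ) : cap k i ≤ zl k i := by
  unfold zl; nlinarith [Nat.zero_le (lam (k i) * cap k i)]

lemma bx_len (k : ℕ → ℕ) (i : ℕ) : (bx k (i + 1) : ℝ) - bx k i ≤ bx k i / k i + 1 := by
  rw [bx]; push_cast
  have := @Nat.cast_div_le ℝ _ _ _ (bx k i) (k i)
  linarith

/-- Lengths too large to be represented in the zone are not small compared to the level: the ratio is
bounded in terms of `k i`. -/
lemma le_of_cap_lt {k : ℕ → ℕ} (hk : ∀ i, 1 ≤ k i) {i m w : ℕ} (hm : m < bx k (i + 1)) (hw : cap k i < w) :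
    m ≤ 4 * (lam (k i) + 1) * k i ^ 2 * w := by
  set c := 2 * (lam (k i) + 1) * k i ^ 2 with hc
  have hc0 : 0 < c := by have := hk i; positivity
  have h1 : bx k i < c * w := by
    have := Nat.lt_mul_div_succ (bx k i) hc0
    have h2 : c * (bx k i / c + 1) ≤ c * w := Nat.mul_le_mul_left _ hw
    omega
  have h3 : bx k (i + 1) ≤ 2 * bx k i + 1 := by
    rw [bx]; have := Nat.div_le_self (bx k i) (k i); omega
  have : 4 * (lam (k i) + 1) * k i ^ 2 * w = 2 * (c * w) := by rw [hc]; ring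
  omega

/-- The data of the construction: a profile `D`, a parameter `k i → ∞` governing the relative length of block
`i`, and a level `x i j` of block `i` at which the growth of `D` over `size (k i) j` levels is largest among
all levels of the block. -/
structure Blocks (d : ℕ) (D : ℕ → ℕ → ℝ) (k : ℕ → ℕ) (x : ℕ → ℕ → ℕ) : Prop where
  prof : IsProfile d D
  mono : Monotone k
  pos : ∀ i, 1 ≤ k i
  lim : Tendsto k atTop atTop
  x_ge : ∀ i j, bx k i ≤ x i j
  x_lt : ∀ i j, x i j < bx k (i + 1)
  x_max : ∀ i j m, bx k i ≤ m → m < bx k (i + 1) →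
    D m (size (k i) j) ≤ D (x i j) (size (k i) j)

lemma exists_blocks {d : ℕ} {D : ℕ → ℕ → ℝ} (h : IsProfile d D) {k : ℕ → ℕ} (mono : Monotone k)
    (pos : ∀ i, 1 ≤ k i) (lim : Tendsto k atTop atTop) : ∃ x, Blocks d D k x := by
  have : ∀ i j, ∃ y ∈ Finset.Ico (bx k i) (bx k (i + 1)), ∀ m ∈ Finset.Ico (bx k i) (bx k (i + 1)),
      D m (size (k i) j) ≤ D y (size (k i) j) := fun i j =>
    Finset.exists_max_image _ (fun m => D m (size (k i) j))
      ⟨bx k i, Finset.mem_Ico.2 ⟨le_rfl, bx_strictMono k (Nat.lt_succ_self i)⟩⟩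
  choose x hx hmax using this
  exact ⟨x, h, mono, pos, lim, fun i j => (Finset.mem_Ico.1 (hx i j)).1,
    fun i j => (Finset.mem_Ico.1 (hx i j)).2,
    fun i j m h1 h2 => hmax i j m (Finset.mem_Ico.2 ⟨h1, h2⟩)⟩

section blocks
variable {d : ℕ} {D : ℕ → ℕ → ℝ} {k : ℕ → ℕ} {x : ℕ → ℕ → ℕ}

/-- The rates coming from the zones. -/
noncomputable def zrate (D : ℕ → ℕ → ℝ) (k : ℕ → ℕ) (x : ℕ → ℕ → ℕ) : ℕ → ℝ :=
  rate (bx k) fun i => zoneZ D (k i) (nb k i) (x i)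

/-- The indicator function of the union of the zones (`inZone_eq`), written as a rate sequence. -/
def inZone (k : ℕ → ℕ) (n : ℕ) : ℝ := rate (bx k) (fun i t => ((min t (zl k i) : ℕ) : ℝ)) n

lemma inZone_eq (k : ℕ → ℕ) (n : ℕ) :
    inZone k n = if n - bx k (blk (bx k) n) < zl k (blk (bx k) n) then 1 else 0 := by
  have hle : bx k (blk (bx k) n) ≤ n := blk_le rfl n
  unfold inZone rate
  beta_reduce
  split_ifs with h
  · rw [min_eq_left (by omega), min_eq_left (by omega),
      show n + 1 - bx k (blk (bx k) n) = n - bx k (blk (bx k) n) + 1 by omega]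
    push_cast; ring
  · rw [min_eq_right (by omega), min_eq_right (by omega), sub_self]

/-- The rates of the construction: the zone rates, and outside the zones a background `a₀`. -/
noncomputable def arate (D : ℕ → ℕ → ℝ) (k : ℕ → ℕ) (x : ℕ → ℕ → ℕ) (a₀ : ℕ → ℝ) (n : ℕ) : ℝ :=
  zrate D k x n + (1 - inZone k n) * a₀ n

lemma zrate_nonneg (h : Blocks d D k x) (n : ℕ) : 0 ≤ zrate D k x n :=
  rate_nonneg _ (fun _ => zone_mono h.prof _ _ _) n

lemma zrate_le (h : Blocks d D k x) (n : ℕ) : zrate D k x n ≤ d := by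
  have hle : bx k (blk (bx k) n) ≤ n := blk_le rfl n
  unfold zrate rate
  set i := blk (bx k) n
  rw [show n + 1 - bx k i = n - bx k i + 1 by omega]
  rcases zone_inc h.prof (h.pos i) (nb k i) (x i) (n - bx k i) 1 with h1 | ⟨j, -, a, -, h1 | ⟨h1, -⟩⟩
  · exact h1.trans (by positivity)
  · exact h1.trans (by simpa using h.prof.le (x i j + a) 1)
  · have := h.pos i; nlinarith

lemma zrate_eq_zero (x : ℕ → ℕ → ℕ) (D : ℕ → ℕ → ℝ) {n i : ℕ} (hi : blk (bx k) n = i)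
    (h2 : (lam (k i) + 1) * cap k i ≤ n - bx k i) : zrate D k x n = 0 := by
  have hle : bx k (blk (bx k) n) ≤ n := blk_le rfl n
  unfold zrate rate
  rw [hi] at *
  beta_reduce
  rw [zone_const D (x i) (fun j hj => lt_nb.1 hj) h2,
    zone_const D (x i) (fun j hj => lt_nb.1 hj) (by omega), sub_self]

lemma arate_bounds (h : Blocks d D k x) {a₀ : ℕ → ℝ} (h0 : ∀ n, 0 ≤ a₀ n ∧ a₀ n ≤ d) (n : ℕ) :
    0 ≤ arate D k x a₀ n ∧ arate D k x a₀ n ≤ d := by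
  unfold arate
  rw [inZone_eq]
  split_ifs with hz
  · simpa using ⟨zrate_nonneg h n, zrate_le h n⟩
  · rw [zrate_eq_zero x D rfl (by unfold zl at hz; omega)]
    simpa using h0 n

/-- From the start of block `i` on, the zone rates have small density. -/
lemma zrate_sum_le (h : Blocks d D k x) {i n : ℕ} (hn : bx k i ≤ n) :
    ∑ l ∈ Finset.Ico (bx k i) n, zrate D k x l ≤ d / (k i + 1) * ((n : ℝ) - bx k i) := by
  set i' := blk (bx k) n with hi'
  have h1 : bx k i' ≤ n := blk_le rfl n
  have h2 : n < bx k (i' + 1) := lt_blk (bx_strictMono k) n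
  have h3 : i ≤ i' := le_blk (bx_strictMono k) hn
  have hk : ∀ j ≥ i, (d : ℝ) / (k j + 1) ≤ d / (k i + 1) := fun j hj => by
    have : (k i : ℝ) ≤ k j := by exact_mod_cast h.mono hj
    gcongr
  rw [← Finset.sum_Ico_consecutive _ ((bx_strictMono k).monotone h3) h1]
  have hfull : ∑ l ∈ Finset.Ico (bx k i) (bx k i'), zrate D k x l ≤
      d / (k i + 1) * ((bx k i' : ℝ) - bx k i) := by
    refine sum_full (bx_strictMono k) rfl (fun j => zone_zero h.prof _ _ _) (fun j hj => ?_) h3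
    have hle : bx k j ≤ bx k (j + 1) := (bx_strictMono k).monotone (Nat.le_succ j)
    refine (zone_le h.prof (h.pos j) _ _ _).trans ?_
    rw [Nat.cast_sub hle]
    have : (bx k j : ℝ) ≤ bx k (j + 1) := by exact_mod_cast hle
    exact mul_le_mul_of_nonneg_right (hk j hj) (by linarith)
  have hpart : ∑ l ∈ Finset.Ico (bx k i') n, zrate D k x l ≤
      d / (k i + 1) * ((n : ℝ) - bx k i') := by
    unfold zrate
    rw [sum_rate (bx_strictMono k) rfl _ le_rfl h1 h2.le, Nat.sub_self, zone_zero h.prof, sub_zero]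
    refine (zone_le h.prof (h.pos i') _ _ _).trans ?_
    rw [Nat.cast_sub h1]
    have : (bx k i' : ℝ) ≤ n := by exact_mod_cast h1
    exact mul_le_mul_of_nonneg_right (hk i' h3) (by linarith)
  linarith

/-- Over a stretch leaving the zone of its first block, the zone rates are negligible. If it starts among the
windows, it contains the empty second half of the zone. -/
lemma zrate_sum_late (h : Blocks d D k x) {m w : ℕ}
    (hm : bx k (blk (bx k) m) + zl k (blk (bx k) m) < m + w) :
    ∑ l ∈ Finset.Ico m (m + w), zrate D k x l ≤ 2 * d / (k (blk (bx k) m) + 1) * w := by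
  set i := blk (bx k) m with hi
  have h1 : bx k i ≤ m := blk_le rfl m
  have h2 : m < bx k (i + 1) := lt_blk (bx_strictMono k) m
  by_cases hl : m - bx k i < (lam (k i) + 1) * cap k i
  · have h3 := zrate_sum_le h (i := i) (n := m + w) (by omega)
    rw [← Finset.sum_Ico_consecutive _ h1 (by omega : m ≤ m + w)] at h3
    have h4 : 0 ≤ ∑ l ∈ Finset.Ico (bx k i) m, zrate D k x l :=
      Finset.sum_nonneg fun l _ => zrate_nonneg h l
    have h5 : ((m + w : ℕ) : ℝ) ≤ bx k i + 2 * w := by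
      unfold zl at hm
      exact_mod_cast (by omega : m + w ≤ bx k i + 2 * w)
    have h6 : (d : ℝ) / (k i + 1) * (((m + w : ℕ) : ℝ) - bx k i) ≤ d / (k i + 1) * (2 * w) := by
      gcongr; linarith
    calc _ ≤ (d : ℝ) / (k i + 1) * (2 * w) := by linarith
      _ = _ := by ring
  · have hz : ∀ n, m ≤ n → n < bx k (i + 1) → zrate D k x n = 0 := fun n hn hn' =>
      zrate_eq_zero x D (blk_eq (bx_strictMono k) rfl (by omega) hn') (by omega)
    by_cases hn : m + w ≤ bx k (i + 1)
    · rw [Finset.sum_eq_zero]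
      · positivity
      · intro l hl'; rw [Finset.mem_Ico] at hl'; exact hz l hl'.1 (by omega)
    · push Not at hn
      rw [← Finset.sum_Ico_consecutive _ h2.le hn.le, Finset.sum_eq_zero (s := Finset.Ico m (bx k (i + 1)))
        (by intro l hl'; rw [Finset.mem_Ico] at hl'; exact hz l hl'.1 hl'.2), zero_add]
      refine (zrate_sum_le h hn.le).trans ?_
      have h7 : (k i : ℝ) ≤ k (i + 1) := by exact_mod_cast h.mono (Nat.le_succ i)
      have h8 : ((m + w : ℕ) : ℝ) - bx k (i + 1) ≤ 2 * w := by
        have : (m : ℝ) ≤ bx k (i + 1) := by exact_mod_cast h2.le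
        have : (0 : ℝ) ≤ w := by positivity
        push_cast; linarith
      calc (d : ℝ) / (k (i + 1) + 1) * (((m + w : ℕ) : ℝ) - bx k (i + 1))
          ≤ d / (k (i + 1) + 1) * (2 * w) := by gcongr
        _ ≤ d / (k i + 1) * (2 * w) := by gcongr
        _ = _ := by ring

lemma inZone_nonneg (k : ℕ → ℕ) (n : ℕ) : 0 ≤ inZone k n := by
  rw [inZone_eq]; split_ifs <;> norm_num

lemma inZone_le (k : ℕ → ℕ) (n : ℕ) : inZone k n ≤ 1 := by
  rw [inZone_eq]; split_ifs <;> norm_num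

/-- Zones cover a negligible share of the levels. -/
lemma inZone_sum_le (h : Blocks d D k x) {m n : ℕ} (hmn : m ≤ n) :
    ∑ l ∈ Finset.Ico m n, inZone k l ≤ 2 / k (blk (bx k) m) * n := by
  set i := blk (bx k) m with hi
  have h1 : bx k i ≤ m := blk_le rfl m
  set i' := blk (bx k) n with hi'
  have h1' : bx k i' ≤ n := blk_le rfl n
  have h2' : n < bx k (i' + 1) := lt_blk (bx_strictMono k) n
  have h3 : i ≤ i' := le_blk (bx_strictMono k) (h1.trans hmn)
  have hkp : ∀ j, (0 : ℝ) < k j := fun j => by exact_mod_cast h.pos j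
  have hk : ∀ j ≥ i, (1 : ℝ) / k j ≤ 1 / k i := fun j hj => by
    have : (k i : ℝ) ≤ k j := by exact_mod_cast h.mono hj
    have := hkp i
    gcongr
  have h4 : 0 ≤ ∑ l ∈ Finset.Ico (bx k i) m, inZone k l :=
      Finset.sum_nonneg fun l _ => inZone_nonneg k l
  have h5 := Finset.sum_Ico_consecutive (inZone k) h1 hmn
  have h6 := Finset.sum_Ico_consecutive (inZone k) ((bx_strictMono k).monotone h3) h1'
  have hfull : ∑ l ∈ Finset.Ico (bx k i) (bx k i'), inZone k l ≤
      1 / k i * ((bx k i' : ℝ) - bx k i) := by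
    refine sum_full (bx_strictMono k) rfl (fun j => by simp) (fun j hj => ?_) h3
    have hle : bx k j ≤ bx k (j + 1) := (bx_strictMono k).monotone (Nat.le_succ j)
    have hle' : (bx k j : ℝ) ≤ bx k (j + 1) := by exact_mod_cast hle
    have ha : ((k j * zl k j : ℕ) : ℝ) ≤ ((bx k (j + 1) - bx k j : ℕ) : ℝ) := by
      exact_mod_cast zl_le' h.pos j
    rw [Nat.cast_sub hle] at ha
    push_cast at ha
    calc ((min (bx k (j + 1) - bx k j) (zl k j) : ℕ) : ℝ) ≤ (zl k j : ℝ) := by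
          exact_mod_cast min_le_right _ _
      _ ≤ 1 / k j * ((bx k (j + 1) : ℝ) - bx k j) := by
          rw [one_div, inv_mul_eq_div, le_div_iff₀ (hkp j)]; linarith
      _ ≤ _ := mul_le_mul_of_nonneg_right (hk j hj) (by linarith)
  have hpart : ∑ l ∈ Finset.Ico (bx k i') n, inZone k l ≤ 1 / k i * (bx k i') := by
    unfold inZone
    rw [sum_rate (bx_strictMono k) rfl _ le_rfl h1' h2'.le, Nat.sub_self]
    have ha : k i' * zl k i' ≤ bx k i' := by
      have := zl_le k i'; have := h.pos i'; nlinarith [Nat.zero_le (k i' * zl k i')]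
    have ha' : (k i' : ℝ) * zl k i' ≤ bx k i' := by exact_mod_cast ha
    calc _ ≤ (zl k i' : ℝ) := by
          simp only [Nat.zero_min, Nat.cast_zero, sub_zero]
          exact_mod_cast min_le_right _ _
      _ ≤ 1 / k i' * bx k i' := by
          rw [one_div, inv_mul_eq_div, le_div_iff₀ (hkp i')]; linarith
      _ ≤ _ := mul_le_mul_of_nonneg_right (hk i' h3) (by positivity)
  have h7 : (bx k i' : ℝ) ≤ n := by exact_mod_cast h1'
  have h8 : (0 : ℝ) ≤ bx k i := by positivity
  have h9 : (0 : ℝ) ≤ 1 / k i := by positivity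
  calc _ ≤ 1 / (k i : ℝ) * (2 * n) := by
        have := mul_le_mul_of_nonneg_left (by linarith : (bx k i' : ℝ) - bx k i + bx k i' ≤ 2 * n) h9
        linarith
    _ = _ := by ring

end blocks

end

section
/-! ### Sampling recurrent windows -/

/-- The window of `w` levels from `m` lies in the cell `c = (H, i, j)` of the grid of mesh `1 / H`:
`w / m ∈ [i / H, (i + 1) / H)` and `D m w / w ∈ [j / H, (j + 1) / H)`. -/
def InCell (D : ℕ → ℕ → ℝ) (c : ℕ × ℕ × ℕ) (m w : ℕ) : Prop :=
  (c.2.1 * m ≤ c.1 * w ∧ c.1 * w < (c.2.1 + 1) * m) ∧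
    ((c.2.2 : ℝ) * w ≤ c.1 * D m w ∧ (c.1 : ℝ) * D m w < (c.2.2 + 1) * w)

/-- The cell contains windows arbitrarily far out. -/
def Recurrent (D : ℕ → ℕ → ℝ) (c : ℕ × ℕ × ℕ) : Prop :=
  ∀ N, ∃ m ≥ N, ∃ w ≥ N, InCell D c m w

lemma exists_cell {d : ℕ} {D : ℕ → ℕ → ℝ} (h : IsProfile d D) (H : ℕ) {m w : ℕ} (hm : 0 < m)
    (hw : 0 < w) : InCell D (H, H * w / m, ⌊H * D m w / w⌋₊) m w := by
  have hw' : (0 : ℝ) < w := by exact_mod_cast hw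
  have h0 : 0 ≤ (H : ℝ) * D m w / w := by have := h.nonneg m w; positivity
  refine ⟨⟨Nat.div_mul_le_self _ _, ?_⟩, ?_, ?_⟩
  · have := Nat.lt_mul_div_succ (H * w) hm
    dsimp only; linarith
  · exact (le_div_iff₀ hw').1 (Nat.floor_le h0)
  · exact (div_lt_iff₀ hw').1 (Nat.lt_floor_add_one _)

lemma cell_close {D : ℕ → ℕ → ℝ} {H i j m w m' w' : ℕ} (hH : 0 < H) (hm : 0 < m) (hw : 0 < w)
    (hm' : 0 < m') (hw' : 0 < w') (h : InCell D (H, i, j) m w) (h' : InCell D (H, i, j) m' w') :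
    |(w' : ℝ) / m' - w / m| ≤ 1 / H ∧ D m w / w ≤ D m' w' / w' + 1 / H := by
  obtain ⟨⟨a1, a2⟩, a3, a4⟩ := h
  obtain ⟨⟨b1, b2⟩, b3, b4⟩ := h'
  dsimp only at *
  have hH' : (0 : ℝ) < H := by exact_mod_cast hH
  have p1 : (0 : ℝ) < m := by exact_mod_cast hm
  have p2 : (0 : ℝ) < w := by exact_mod_cast hw
  have p3 : (0 : ℝ) < m' := by exact_mod_cast hm'
  have p4 : (0 : ℝ) < w' := by exact_mod_cast hw'
  have c1 : (i : ℝ) * m ≤ H * w := by exact_mod_cast a1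
  have c2 : (H : ℝ) * w < (i + 1) * m := by exact_mod_cast a2
  have c3 : (i : ℝ) * m' ≤ H * w' := by exact_mod_cast b1
  have c4 : (H : ℝ) * w' < (i + 1) * m' := by exact_mod_cast b2
  have e1 : (i : ℝ) / H ≤ w / m := by rw [div_le_div_iff₀ hH' p1]; linarith
  have e2 : (w : ℝ) / m < (i + 1) / H := by rw [div_lt_div_iff₀ p1 hH']; linarith
  have e3 : (i : ℝ) / H ≤ w' / m' := by rw [div_le_div_iff₀ hH' p3]; linarith
  have e4 : (w' : ℝ) / m' < (i + 1) / H := by rw [div_lt_div_iff₀ p3 hH']; linarith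
  have f1 : D m w / w < (j + 1) / H := by rw [div_lt_div_iff₀ p2 hH']; linarith
  have f2 : (j : ℝ) / H ≤ D m' w' / w' := by rw [div_le_div_iff₀ hH' p4]; linarith
  rw [add_div] at *
  exact ⟨abs_le.2 ⟨by linarith, by linarith⟩, by linarith⟩

/-- An enumeration that lists every cell infinitely often: the second coordinate of the outer pair is a
dummy. -/
def cellAt (q : ℕ) : ℕ × ℕ × ℕ :=
  ((Nat.unpair q).1.unpair.1, (Nat.unpair q).1.unpair.2.unpair)

/-- A sequence of levels, as sparse as `bg_upper` requires with `L q = q * p q`, from which every recurrent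
cell is visited infinitely often. -/
lemma exists_sample (D : ℕ → ℕ → ℝ) : ∃ p : ℕ → ℕ, StrictMono p ∧ p 0 = 0 ∧
    (∀ q, (q + 2) * (p q + q * p q) ≤ p (q + 1)) ∧
    ∀ c, Recurrent D c → ∀ N, ∃ q ≥ N, ∃ w ≥ N, InCell D c (p (q + 1)) w := by
  have : ∀ q y : ℕ, ∃ P : ℕ, (q + 2) * (y + q * y) + 1 ≤ P ∧
      (Recurrent D (cellAt q) → ∃ w ≥ q, InCell D (cellAt q) P w) := by
    intro q y
    by_cases hr : Recurrent D (cellAt q)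
    · obtain ⟨m, hm, w, hw, hc⟩ := hr ((q + 2) * (y + q * y) + 1 + q)
      exact ⟨m, by omega, fun _ => ⟨w, by omega, hc⟩⟩
    · exact ⟨_, le_rfl, fun h => absurd h hr⟩
  choose P hP hcell using this
  let p : ℕ → ℕ := fun n => Nat.rec 0 P n
  have hs : ∀ q, p (q + 1) = P q (p q) := fun q => rfl
  refine ⟨p, strictMono_nat_of_lt_succ fun q => ?_, rfl, fun q => ?_, fun c hc N => ?_⟩
  · have := hP q (p q)
    rw [hs]
    nlinarith [Nat.zero_le (q * p q), Nat.zero_le (q * (q * p q))]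
  · have := hP q (p q); rw [hs]; omega
  · have hq : cellAt (Nat.pair (Nat.pair c.1 (Nat.pair c.2.1 c.2.2)) N) = c := by simp [cellAt]
    have hN := Nat.right_le_pair (Nat.pair c.1 (Nat.pair c.2.1 c.2.2)) N
    obtain ⟨w, hw, hcl⟩ := hcell (Nat.pair (Nat.pair c.1 (Nat.pair c.2.1 c.2.2)) N)
      (p (Nat.pair (Nat.pair c.1 (Nat.pair c.2.1 c.2.2)) N)) (by rwa [hq])
    rw [hq] at hcl
    exact ⟨_, hN, w, le_trans hN hw, hcl⟩

/-- Far enough out, windows lie in recurrent cells, uniformly over finitely many cells. -/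
lemma exists_recurrent_of_large (D : ℕ → ℕ → ℝ) (T : Finset (ℕ × ℕ × ℕ)) :
    ∃ K : ℕ, ∀ c ∈ T, ∀ m ≥ K, ∀ w ≥ K, InCell D c m w → Recurrent D c := by
  classical
  have : ∀ c, ∃ K : ℕ, ∀ m ≥ K, ∀ w ≥ K, InCell D c m w → Recurrent D c := by
    intro c
    by_cases hc : Recurrent D c
    · exact ⟨0, fun _ _ _ _ _ => hc⟩
    · have hc' := hc
      unfold Recurrent at hc'
      push Not at hc'
      obtain ⟨N, hN⟩ := hc'
      exact ⟨N, fun m hm w hw h => absurd h (hN m hm w hw)⟩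
  choose K hK using this
  exact ⟨T.sup K, fun c hc m hm w hw => hK c m (le_trans (Finset.le_sup hc) hm) w
    (le_trans (Finset.le_sup hc) hw)⟩

/-! ### The construction shadows the profile -/

section
variable {d : ℕ} {D : ℕ → ℕ → ℝ} {k : ℕ → ℕ} {x : ℕ → ℕ → ℕ}

lemma eventually_blk {X : ℕ → ℕ} (hX : StrictMono X) (i : ℕ) :
    ∃ K : ℕ, ∀ m ≥ K, i ≤ blk X m := ⟨X i, fun _ hm => le_blk hX hm⟩

/-- The parameter of the block containing `m` tends to infinity with `m`. -/
lemma blocks_small (h : Blocks d D k x) (c : ℝ) {ε : ℝ} (hε : 0 < ε) :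
    ∃ K : ℕ, ∀ m ≥ K, c / k (blk (bx k) m) ≤ ε := by
  have h1 : Tendsto (fun i => c / (k i : ℝ)) atTop (nhds 0) :=
    (tendsto_natCast_atTop_atTop.comp h.lim).const_div_atTop c
  obtain ⟨i, hi⟩ := eventually_atTop.1 (h1.eventually_le_const hε)
  obtain ⟨K, hK⟩ := eventually_blk (bx_strictMono k) i
  exact ⟨K, fun m hm => hi _ (hK m hm)⟩

/-- Levels of one block, and those slightly beyond its end, are relatively close to each other. -/
lemma block_close (h : Blocks d D k x) {m z : ℕ} (hz : bx k (blk (bx k) m) ≤ z)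
    (hz' : z ≤ bx k (blk (bx k) m + 1) + cap k (blk (bx k) m)) :
    |(z : ℝ) - m| ≤ 2 / k (blk (bx k) m) * m + 1 := by
  set i := blk (bx k) m with hi
  have h1 : bx k i ≤ m := blk_le rfl m
  have h2 : m < bx k (i + 1) := lt_blk (bx_strictMono k) m
  have h3 := bx_len k i
  have hkp : (1 : ℝ) ≤ k i := by exact_mod_cast h.pos i
  have hcap : k i * cap k i ≤ bx k i := by
    have a1 := zl_le k i
    have a2 := cap_le_zl k i
    have a3 := h.pos i
    calc k i * cap k i ≤ k i * zl k i := Nat.mul_le_mul_left _ a2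
      _ ≤ k i ^ 2 * zl k i := Nat.mul_le_mul_right _ (by nlinarith)
      _ ≤ _ := a1
  have hcap' : (cap k i : ℝ) ≤ bx k i / k i := by
    rw [le_div_iff₀ (by linarith)]
    have : ((k i * cap k i : ℕ) : ℝ) ≤ bx k i := by exact_mod_cast hcap
    push_cast at this; linarith
  have h1' : (bx k i : ℝ) ≤ m := by exact_mod_cast h1
  have h2' : (m : ℝ) ≤ bx k (i + 1) := by exact_mod_cast h2.le
  have hz1 : (bx k i : ℝ) ≤ z := by exact_mod_cast hz
  have hz2 : (z : ℝ) ≤ bx k (i + 1) + cap k i := by exact_mod_cast hz'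
  have h4 : (bx k i : ℝ) / k i ≤ m / k i := by gcongr
  have h5 : 0 ≤ (m : ℝ) / k i := by positivity
  have h6 : 2 / (k i : ℝ) * m = 2 * (m / k i) := by ring
  rw [abs_le, h6]
  constructor <;> linarith

lemma block_close' (h : Blocks d D k x) {ε : ℝ} (hε : 0 < ε) :
    ∃ K : ℕ, ∀ m ≥ K, ∀ z, bx k (blk (bx k) m) ≤ z →
      z ≤ bx k (blk (bx k) m + 1) + cap k (blk (bx k) m) → |(z : ℝ) - m| ≤ ε * m := by
  obtain ⟨K, hK⟩ := blocks_small h 2 (half_pos hε)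
  refine ⟨max K ⌈2 / ε⌉₊, fun m hm z hz hz' => (block_close h hz hz').trans ?_⟩
  have h1 := hK m (le_trans (le_max_left _ _) hm)
  have h2 : 2 / ε ≤ m := (Nat.le_ceil _).trans (by exact_mod_cast le_trans (le_max_right _ _) hm)
  rw [div_le_iff₀ hε] at h2
  have h3 : 2 / (k (blk (bx k) m) : ℝ) * m ≤ ε / 2 * m := by gcongr
  nlinarith

variable {p : ℕ → ℕ}

/-- The background rates, with replays of length `q * p q`. -/
noncomputable def bgrate (D : ℕ → ℕ → ℝ) (p : ℕ → ℕ) : ℕ → ℝ := rate p (bgZ D p fun q => q * p q)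

lemma bgrate_bounds (h : IsProfile d D) (p0 : p 0 = 0) (n : ℕ) : 0 ≤ bgrate D p n ∧ bgrate D p n ≤ d :=
  ⟨rate_nonneg _ (bgZ_mono h _ _) n, bg_rate_le h _ _ p0 n⟩

/-- A stretch inside a zone is bounded by `zone_inc`. For any other stretch the zones are negligible and the
background is bounded by `bg_upper`. -/
lemma shadow_upper (h : Blocks d D k x) (hp : StrictMono p) (p0 : p 0 = 0)
    (hL : ∀ q, (q + 2) * (p q + q * p q) ≤ p (q + 1)) (ε : ℝ) (hε : 0 < ε) :
    ∃ K : ℕ, ∀ m ≥ K, ∀ w ≥ K, ∃ m' : ℕ, |(m' : ℝ) - m| ≤ ε * m ∧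
      ∑ l ∈ Finset.Ico m (m + w), arate D k x (bgrate D p) l ≤ D m' w + ε * w := by
  obtain ⟨K1, hK1⟩ := block_close' h hε
  obtain ⟨K2, hK2⟩ := blocks_small h (2 * d) (half_pos hε)
  have ht : Tendsto (fun i : ℕ => (d : ℝ) / (i + 1)) atTop (nhds 0) :=
    (tendsto_atTop_add_const_right _ _ tendsto_natCast_atTop_atTop).const_div_atTop _
  obtain ⟨i0, hi0⟩ := eventually_atTop.1 (ht.eventually_le_const (half_pos hε))
  obtain ⟨K3, hK3⟩ := eventually_blk hp i0
  refine ⟨max K1 (max K2 K3), fun m hm w _ => ?_⟩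
  simp only [ge_iff_le, max_le_iff] at hm
  have hb1 := hK2 m hm.2.1
  have hb2 := hi0 _ (hK3 m hm.2.2)
  have hcl := hK1 m hm.1
  set i := blk (bx k) m with hi
  have h1 : bx k i ≤ m := blk_le rfl m
  have h2 : m < bx k (i + 1) := lt_blk (bx_strictMono k) m
  have hkp : (0 : ℝ) < k i := by exact_mod_cast h.pos i
  have hb1' : (2 * d : ℝ) / (k i + 1) ≤ ε / 2 := by
    refine le_trans ?_ hb1
    gcongr; linarith
  have hw0 : (0 : ℝ) ≤ w := by positivity
  by_cases hA : m + w ≤ bx k i + zl k i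
  · have hzl := zl_le'' h.pos i
    have hS : ∑ l ∈ Finset.Ico m (m + w), arate D k x (bgrate D p) l =
        zoneZ D (k i) (nb k i) (x i) (m - bx k i + w) -
          zoneZ D (k i) (nb k i) (x i) (m - bx k i) := by
      have : ∀ l ∈ Finset.Ico m (m + w), arate D k x (bgrate D p) l = zrate D k x l := by
        intro l hl
        rw [Finset.mem_Ico] at hl
        have hbl : blk (bx k) l = i := blk_eq (bx_strictMono k) rfl (by omega) (by omega)
        rw [arate, inZone_eq, hbl, if_pos (by omega)]
        ring
      rw [Finset.sum_congr rfl this, zrate,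
        sum_rate (bx_strictMono k) rfl _ h1 (by omega) (by omega),
        show m + w - bx k i = m - bx k i + w by omega]
    rw [hS]
    have hpos : ∀ m', 0 ≤ D m' w + ε * w := fun m' => by
      have := h.prof.nonneg m' w; positivity
    rcases zone_inc h.prof (h.pos i) (nb k i) (x i) (m - bx k i) w with h3 | ⟨j, hj, a, ha, h3⟩
    · exact ⟨m, by simpa using by positivity, h3.trans (hpos m)⟩
    · have hac := ha.trans (lt_nb.1 hj)
      refine ⟨x i j + a, hcl _ ?_ ?_, ?_⟩
      · have := h.x_ge i j; omega
      · have := h.x_lt i j; omega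
      · rcases h3 with h3 | ⟨-, h3⟩
        · have : 0 ≤ ε * (w : ℝ) := by positivity
          linarith
        · refine h3.trans ?_
          have : (d : ℝ) / (k i + 1) ≤ ε := by
            have e : (2 * d : ℝ) / (k i + 1) = 2 * (d / (k i + 1)) := by ring
            rw [e] at hb1'
            have : 0 ≤ (d : ℝ) / (k i + 1) := by positivity
            linarith
          gcongr
  · push Not at hA
    refine ⟨m, by simpa using by positivity, ?_⟩
    have h3 := zrate_sum_late h (m := m) (w := w) hA
    have h4 := bg_upper h.prof (L := fun q => q * p q) hp p0 hL m w
    have h5 : ∑ l ∈ Finset.Ico m (m + w), arate D k x (bgrate D p) l ≤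
        ∑ l ∈ Finset.Ico m (m + w), (zrate D k x l + bgrate D p l) := by
      refine Finset.sum_le_sum fun l _ => ?_
      unfold arate
      have := (bgrate_bounds h.prof p0 l).1
      have := inZone_nonneg k l
      nlinarith
    rw [Finset.sum_add_distrib] at h5
    have h6 : (2 * d : ℝ) / (k i + 1) * w ≤ ε / 2 * w := by gcongr
    have h7 : (d : ℝ) / (blk p m + 1) * w ≤ ε / 2 * w := by gcongr
    unfold bgrate at *
    linarith

/-- A length `w` of at most `cap` is represented by a window of the zone, which dominates `D` at all levels of
the block. Longer windows have `w / m` bounded below in terms of `k i`, and `k` grows slowly enough for the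
bound `hB` with `k = k i` to apply. -/
lemma shadow_lower (h : Blocks d D k x) {a₀ : ℕ → ℝ} (h0 : ∀ n, 0 ≤ a₀ n ∧ a₀ n ≤ d) {B : ℝ}
    {K₀ : ℕ → ℕ}
    (hB : ∀ k, ∀ m ≥ K₀ k, ∀ w, m ≤ 4 * (lam k + 1) * k ^ 2 * w → D m w ≤ (B + 1 / (k + 1)) * w)
    {i₀ : ℕ} (hK₀ : ∀ i ≥ i₀, K₀ (k i) ≤ i) (ε : ℝ) (hε : 0 < ε) :
    ∃ K : ℕ, ∀ m ≥ K, ∀ w ≥ K, (∃ m' : ℕ, |(m' : ℝ) - m| ≤ ε * m ∧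
      D m w ≤ ∑ l ∈ Finset.Ico m' (m' + w), arate D k x a₀ l + ε * w) ∨ D m w ≤ (B + ε) * w := by
  obtain ⟨K1, hK1⟩ := block_close' h hε
  obtain ⟨K2, hK2⟩ := blocks_small h (d + 1) hε
  obtain ⟨K3, hK3⟩ := eventually_blk (bx_strictMono k) i₀
  refine ⟨max (max K1 1) (max K2 K3), fun m hm w hw => ?_⟩
  simp only [ge_iff_le, max_le_iff] at hm hw
  have hb := hK2 m hm.2.1
  have hi₀ := hK3 m hm.2.2
  have hcl := hK1 m hm.1.1
  set i := blk (bx k) m with hi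
  have h1 : bx k i ≤ m := blk_le rfl m
  have h2 : m < bx k (i + 1) := lt_blk (bx_strictMono k) m
  have hkp : (0 : ℝ) < k i := by exact_mod_cast h.pos i
  by_cases hc : w ≤ cap k i
  · left
    obtain ⟨j, hj1, hj2⟩ := exists_size (k := k i) (w := w) hw.1.2
    have hjc : size (k i) j ≤ cap k i := hj1.trans hc
    have hzl := zl_le'' h.pos i
    have hwin : lam (k i) * size (k i) j + size (k i) j ≤ zl k i := by
      have := Nat.mul_le_mul_left (lam (k i) + 1) hjc
      unfold zl; nlinarith
    refine ⟨bx k i + lam (k i) * size (k i) j, hcl _ (by omega) (by omega), ?_⟩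
    set z := bx k i + lam (k i) * size (k i) j with hz
    have hS1 : ∑ l ∈ Finset.Ico z (z + size (k i) j), zrate D k x l =
        zoneZ D (k i) (nb k i) (x i) (lam (k i) * size (k i) j + size (k i) j) -
          zoneZ D (k i) (nb k i) (x i) (lam (k i) * size (k i) j) := by
      rw [zrate, sum_rate (bx_strictMono k) rfl _ (i := i) (by omega) (by omega) (by omega),
        show z + size (k i) j - bx k i = lam (k i) * size (k i) j + size (k i) j by omega,
        show z - bx k i = lam (k i) * size (k i) j by omega]
    have hS2 : ∑ l ∈ Finset.Ico z (z + size (k i) j), zrate D k x l ≤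
        ∑ l ∈ Finset.Ico z (z + w), arate D k x a₀ l := by
      calc _ ≤ ∑ l ∈ Finset.Ico z (z + size (k i) j), arate D k x a₀ l := by
            refine Finset.sum_le_sum fun l _ => ?_
            unfold arate
            have := inZone_le k l
            have := (h0 l).1
            nlinarith
        _ ≤ _ := Finset.sum_le_sum_of_subset_of_nonneg (Finset.Ico_subset_Ico le_rfl (by omega))
            fun l _ _ => (arate_bounds h h0 l).1
    have h3 := zone_window (k := k i) h.prof (x i) (lt_nb.2 hjc)
    have h4 := h.x_max i j m h1 h2
    have h5 := h.prof.lip m hj1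
    have h6 : (w : ℝ) - size (k i) j ≤ w / k i := by
      have e1 : ((size (k i) j / k i : ℕ) : ℝ) ≤ (size (k i) j : ℝ) / k i := Nat.cast_div_le
      have e2 : (w : ℝ) ≤ size (k i) j + (size (k i) j / k i : ℕ) := by exact_mod_cast hj2
      have e3 : (size (k i) j : ℝ) / k i ≤ w / k i := by gcongr
      linarith
    have h7 : (d : ℝ) * ((w : ℝ) - size (k i) j) ≤ ε * w := by
      calc (d : ℝ) * ((w : ℝ) - size (k i) j) ≤ (d + 1) * (w / k i) := by
            have : (size (k i) j : ℝ) ≤ w := by exact_mod_cast hj1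
            apply mul_le_mul <;> first | positivity | linarith
        _ = (d + 1) / k i * w := by ring
        _ ≤ _ := by gcongr
    linarith
  · right
    push Not at hc
    have hmi : i ≤ m := le_trans ((bx_strictMono k).id_le i) h1
    refine (hB (k i) m (le_trans (hK₀ i hi₀) hmi) w (le_of_cap_lt h.pos h2 hc)).trans ?_
    gcongr
    refine le_trans ?_ hb
    have : (0 : ℝ) ≤ d := by positivity
    gcongr <;> linarith

/-- The cell of `(m, w)` is recurrent, so the background replays a window from the same cell arbitrarily far
out, at `m' = p (q + 1)`. Little of it is lost to the zones. -/
lemma shadow_mid (h : Blocks d D k x) (hp : StrictMono p) (p0 : p 0 = 0)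
    (hL : ∀ q, (q + 2) * (p q + q * p q) ≤ p (q + 1))
    (hvis : ∀ c, Recurrent D c → ∀ N, ∃ q ≥ N, ∃ w ≥ N, InCell D c (p (q + 1)) w)
    (δ : ℝ) (hδ : 0 < δ) (A : ℝ) (ε : ℝ) (hε : 0 < ε) :
    ∃ K : ℕ, ∀ m ≥ K, ∀ w : ℕ, δ * m ≤ w → w ≤ A * m → ∀ N : ℕ, ∃ m' ≥ N, ∃ w' ≥ N,
      |(w' : ℝ) / m' - w / m| ≤ ε ∧
      D m w ≤ ((∑ l ∈ Finset.Ico m' (m' + w'), arate D k x (bgrate D p) l) / w' + ε) * w := by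
  obtain ⟨H, hH⟩ := exists_nat_gt (max (2 / ε) (2 / δ))
  have hH1 : 2 / ε < H := lt_of_le_of_lt (le_max_left _ _) hH
  have hH2 : 2 / δ < H := lt_of_le_of_lt (le_max_right _ _) hH
  have hHp : (0 : ℝ) < H := lt_trans (by positivity) hH1
  have hHε : 1 / (H : ℝ) ≤ ε / 2 := by
    rw [div_lt_iff₀ hε] at hH1; rw [div_le_iff₀ hHp]; linarith
  have hHδ : 1 / (H : ℝ) ≤ δ / 2 := by
    rw [div_lt_iff₀ hδ] at hH2; rw [div_le_iff₀ hHp]; linarith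
  obtain ⟨K1, hK1⟩ := exists_recurrent_of_large D
    ({H} ×ˢ Finset.range (⌊H * A⌋₊ + 1) ×ˢ Finset.range (H * d + 1))
  obtain ⟨K2, hK2⟩ := exists_nat_gt (K1 / δ)
  -- `η` bounds `1 / k`, hence the share of the levels covered by zones, where the background is dropped
  set η : ℝ := ε / 2 / ((d + 1) * (2 * (2 / δ + 1))) with hη
  have hηp : 0 < η := by positivity
  obtain ⟨K3, hK3⟩ := blocks_small h 1 hηp
  refine ⟨max (max K1 1) K2, fun m hm w hw1 hw2 N => ?_⟩
  simp only [ge_iff_le, max_le_iff] at hm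
  have hm0 : 0 < m := hm.1.2
  have hm0' : (0 : ℝ) < m := by exact_mod_cast hm0
  have hwK : (K1 : ℝ) < w := by
    have : (K2 : ℝ) ≤ m := by exact_mod_cast hm.2
    rw [div_lt_iff₀ hδ] at hK2
    nlinarith
  have hwK' : K1 < w := by exact_mod_cast hwK
  have hw0 : 0 < w := by omega
  have hw0' : (0 : ℝ) < w := by exact_mod_cast hw0
  have hcell := exists_cell h.prof H hm0 hw0
  have hrec := hK1 _ (by
    simp only [Finset.mem_product, Finset.mem_singleton, Finset.mem_range, true_and]
    constructor
    · refine Nat.lt_succ_of_le (Nat.le_floor ?_)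
      calc ((H * w / m : ℕ) : ℝ) ≤ ((H * w : ℕ) : ℝ) / m := Nat.cast_div_le
        _ ≤ H * A := by
          rw [div_le_iff₀ hm0']; push_cast; nlinarith
    · refine Nat.lt_succ_of_le (Nat.floor_le_of_le ?_)
      rw [div_le_iff₀ hw0']
      have := h.prof.le m w
      push_cast; nlinarith) m hm.1.1 w hwK'.le hcell
  obtain ⟨q, hq, w', hw', hc⟩ := hvis _ hrec (N + 1 + K3 + ⌈A + 1 / H⌉₊)
  have hqp : q + 1 ≤ p (q + 1) := hp.id_le _
  have hpp : 0 < p (q + 1) := by omega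
  have hpp' : (0 : ℝ) < p (q + 1) := by exact_mod_cast hpp
  have hw0'' : (0 : ℝ) < w' := by exact_mod_cast (by omega : 0 < w')
  obtain ⟨hr, hDD⟩ := cell_close (by exact_mod_cast hHp) hm0 hw0 hpp (by omega) hcell hc
  have hr' := abs_le.1 hr
  refine ⟨p (q + 1), by omega, w', by omega, hr.trans (by linarith), ?_⟩
  set m' := p (q + 1) with hm'
  have hwL : w' ≤ (q + 1) * m' := by
    have e1 : (w' : ℝ) / m' ≤ A + 1 / H := by
      have : (w : ℝ) / m ≤ A := by rw [div_le_iff₀ hm0']; exact hw2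
      linarith
    have e2 : A + 1 / H ≤ ((q + 1 : ℕ) : ℝ) :=
      (Nat.le_ceil _).trans (by exact_mod_cast (by omega : ⌈A + 1 / (H : ℝ)⌉₊ ≤ q + 1))
    have e3 := e1.trans e2
    rw [div_le_iff₀ hpp'] at e3
    exact_mod_cast e3
  have hbg : ∑ l ∈ Finset.Ico m' (m' + w'), bgrate D p l = D m' w' := by
    have e := hL (q + 1)
    rw [bgrate, sum_rate hp p0 _ (i := q + 1) le_rfl (by omega) (by rw [← hm'] at e; nlinarith)]
    simp only [bgZ]
    rw [← hm', Nat.add_sub_cancel_left, min_eq_left hwL, Nat.sub_self, Nat.zero_min, h.prof.zero, sub_zero]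
  have hz := inZone_sum_le h (m := m') (n := m' + w') (by omega)
  have hk3 := hK3 m' (by omega)
  have hS : D m' w' - d * ∑ l ∈ Finset.Ico m' (m' + w'), inZone k l ≤
      ∑ l ∈ Finset.Ico m' (m' + w'), arate D k x (bgrate D p) l := by
    rw [← hbg, Finset.mul_sum, ← Finset.sum_sub_distrib]
    refine Finset.sum_le_sum fun l _ => ?_
    unfold arate
    have e1 := zrate_nonneg h l
    have e2 := bgrate_bounds h.prof p0 l
    have e3 := inZone_nonneg k l
    nlinarith
  have hratio : (m' : ℝ) ≤ 2 / δ * w' := by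
    have e1 : δ ≤ w / m := by rw [le_div_iff₀ hm0']; exact hw1
    have e2 : δ / 2 ≤ w' / m' := by linarith
    rw [le_div_iff₀ hpp'] at e2
    rw [div_mul_eq_mul_div, le_div_iff₀ hδ]; linarith
  have hloss : d * ∑ l ∈ Finset.Ico m' (m' + w'), inZone k l ≤ ε / 2 * w' := by
    calc d * ∑ l ∈ Finset.Ico m' (m' + w'), inZone k l
        ≤ (d + 1) * ((2 * η) * ((2 / δ + 1) * w')) := by
          have e0 : 0 ≤ ∑ l ∈ Finset.Ico m' (m' + w'), inZone k l :=
            Finset.sum_nonneg fun l _ => inZone_nonneg k l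
          have e1 : 2 / (k (blk (bx k) m') : ℝ) ≤ 2 * η := by
            rw [show 2 / (k (blk (bx k) m') : ℝ) = 2 * (1 / k (blk (bx k) m')) by ring]; linarith
          have e2 : ((m' + w' : ℕ) : ℝ) ≤ (2 / δ + 1) * w' := by push_cast; linarith
          have e3 := mul_le_mul e1 e2 (by positivity) (by positivity)
          exact mul_le_mul (by linarith) (hz.trans e3) e0 (by positivity)
      _ = ε / 2 * w' := by rw [hη]; field_simp
  have hfin : D m' w' / w' ≤ (∑ l ∈ Finset.Ico m' (m' + w'), arate D k x (bgrate D p) l) / w' + ε / 2 := by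
    rw [div_add' _ _ _ hw0''.ne', div_le_div_iff_of_pos_right hw0'']
    linarith
  rw [← div_le_iff₀ hw0']
  linarith

/-- Every profile is shadowed by the partial sums of a sequence of rates in `[0, d]`. -/
theorem exists_rate {D : ℕ → ℕ → ℝ} (h : IsProfile d D) :
    ∃ a : ℕ → ℝ, (∀ n, 0 ≤ a n ∧ a n ≤ d) ∧
      Shadow (largeExp D) D fun m w => ∑ l ∈ Finset.Ico m (m + w), a l := by
  have hB : ∀ k : ℕ, ∃ K : ℕ, ∀ m ≥ K, ∀ w, m ≤ 4 * (lam k + 1) * k ^ 2 * w →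
      D m w ≤ (largeExp D + 1 / (k + 1)) * w := fun k =>
    largeBound_of_lt h (lt_add_of_pos_right _ (by positivity)) (4 * (lam k + 1) * k ^ 2)
  choose K₀ hK₀ using hB
  obtain ⟨k, k1, k2, k3, i₀, k4⟩ := exists_slow K₀
  obtain ⟨x, hx⟩ := exists_blocks h k1 k2 k3
  obtain ⟨p, p1, p2, p3, p4⟩ := exists_sample D
  exact ⟨arate D k x (bgrate D p), arate_bounds hx (bgrate_bounds h p2),
    shadow_upper hx p1 p2 p3, shadow_lower hx (bgrate_bounds h p2) hK₀ k4, shadow_mid hx p1 p2 p3 p4⟩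

end

end

section
/-! ### Gauges and growth bounds -/

/-- The properties of `Φ m = m * φ (2 ^ (-m))` for a dimension function `φ`: monotonicity of `Φ` and, as
expressed by `anti`, of `m ↦ Φ m / m`. -/
structure Gauge (Φ : ℕ → ℝ) : Prop where
  nonneg : ∀ m, 0 ≤ Φ m
  mono : Monotone Φ
  anti : ∀ m m', m ≤ m' → Φ m' * m ≤ Φ m * m'

/-- Growth with exponent `s` over the windows prescribed by `Φ`: the profile version of `PhiCond`. -/
def PhiBound (D : ℕ → ℕ → ℝ) (Φ : ℕ → ℝ) (s : ℝ) : Prop :=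
  ∃ C : ℝ, ∀ m, D m ⌊Φ m⌋₊ ≤ C + s * ⌊Φ m⌋₊

/-- Growth with exponent `s` over all windows at least as long as those prescribed by `Φ`: the profile
version of `UpCond`. -/
def UpBound (D : ℕ → ℕ → ℝ) (Φ : ℕ → ℝ) (s : ℝ) : Prop :=
  ∃ C : ℝ, ∀ m w, ⌊Φ m⌋₊ ≤ w → D m w ≤ C + s * w

namespace Gauge
variable {Φ : ℕ → ℝ}

lemma floor_mono (h : Gauge Φ) {m m' : ℕ} (hm : m ≤ m') : ⌊Φ m⌋₊ ≤ ⌊Φ m'⌋₊ :=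
  Nat.floor_mono (h.mono hm)

lemma floor_le (h : Gauge Φ) (m : ℕ) : (⌊Φ m⌋₊ : ℝ) ≤ Φ m := Nat.floor_le (h.nonneg m)

/-- A relative change of the level changes the prescribed length by the same proportion. -/
lemma close (h : Gauge Φ) {ε : ℝ} (hε0 : 0 ≤ ε) (hε1 : ε ≤ 1) {m m' : ℕ} (hm : |(m' : ℝ) - m| ≤ ε * m) :
    |(⌊Φ m'⌋₊ : ℝ) - ⌊Φ m⌋₊| ≤ ε * ⌊Φ m⌋₊ + 2 := by
  have a1 := h.floor_le m
  have a2 := Nat.lt_floor_add_one (Φ m)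
  have a3 := h.floor_le m'
  have a4 := Nat.lt_floor_add_one (Φ m')
  rcases Nat.eq_zero_or_pos m with rfl | hpos
  · have : m' = 0 := by
      have : |(m' : ℝ)| ≤ 0 := by simpa using hm
      simpa using this
    subst this
    simp only [sub_self, abs_zero]
    positivity
  have hp : (0 : ℝ) < m := by exact_mod_cast hpos
  have hm' := abs_le.1 hm
  have key : |Φ m' - Φ m| ≤ ε * Φ m := by
    have hn := h.nonneg m
    rcases le_total m m' with hle | hle
    · have b1 := h.mono hle
      have b2 := h.anti m m' hle
      rw [abs_of_nonneg (by linarith)]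
      have b3 : Φ m' * m ≤ (1 + ε) * Φ m * m := by nlinarith
      have := le_of_mul_le_mul_right b3 hp
      linarith
    · have b1 := h.mono hle
      have b2 := h.anti m' m hle
      rw [abs_of_nonpos (by linarith)]
      have b3 : (Φ m - Φ m') * m ≤ ε * Φ m * m := by nlinarith
      have := le_of_mul_le_mul_right b3 hp
      linarith
  have hk := abs_le.1 key
  have : ε * Φ m ≤ ε * ⌊Φ m⌋₊ + 1 := by nlinarith
  exact abs_le.2 ⟨by linarith, by linarith⟩

/-- `Φ m / m` decreases to a limit `u`. -/
lemma exists_slope (h : Gauge Φ) : ∃ u : ℝ, 0 ≤ u ∧ ∀ ε > 0, ∃ K : ℕ, ∀ m ≥ K,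
    u * m ≤ Φ m ∧ Φ m ≤ (u + ε) * m := by
  have hnn : ∀ m : ℕ, 0 ≤ Φ (m + 1) / ((m : ℝ) + 1) := fun m => by
    have := h.nonneg (m + 1); positivity
  have hbdd : BddBelow (Set.range fun m : ℕ => Φ (m + 1) / ((m : ℝ) + 1)) :=
    ⟨0, by rintro _ ⟨m, rfl⟩; exact hnn m⟩
  refine ⟨⨅ m : ℕ, Φ (m + 1) / ((m : ℝ) + 1), le_ciInf hnn, fun ε hε => ?_⟩
  obtain ⟨k, hk⟩ := exists_lt_of_ciInf_lt (lt_add_of_pos_right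
    (⨅ m : ℕ, Φ (m + 1) / ((m : ℝ) + 1)) hε)
  refine ⟨k + 1, fun m hm => ⟨?_, ?_⟩⟩
  · have h1 := ciInf_le hbdd (m - 1)
    have e : ((m - 1 : ℕ) : ℝ) + 1 = m := by
      have : m - 1 + 1 = m := by omega
      exact_mod_cast this
    rw [e, show m - 1 + 1 = m by omega, le_div_iff₀ (by exact_mod_cast (by omega : 0 < m))] at h1
    exact h1
  · have h2 := h.anti (k + 1) m hm
    rw [div_lt_iff₀ (by positivity)] at hk
    have hm0 : (0 : ℝ) ≤ m := by positivity
    push_cast at h2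
    have h3 : Φ m * ((k : ℝ) + 1) ≤ ((⨅ m : ℕ, Φ (m + 1) / ((m : ℝ) + 1)) + ε) * m * (k + 1) := by
      nlinarith
    exact le_of_mul_le_mul_right h3 (by positivity)

end Gauge

section transfer
variable {d : ℕ} {D G : ℕ → ℕ → ℝ} {Φ : ℕ → ℝ}

/-- It suffices to bound windows with large starting level and large length: the others grow by a bounded
amount, because `⌊Φ m⌋₊ ≤ ⌊Φ K⌋₊` for `m ≤ K`. -/
lemma phiBound_of_eventually (hG : IsProfile d G) (hΦ : Gauge Φ) {t C : ℝ} (ht : 0 ≤ t) {K : ℕ}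
    (h : ∀ m ≥ K, K ≤ ⌊Φ m⌋₊ → G m ⌊Φ m⌋₊ ≤ C + t * ⌊Φ m⌋₊) : PhiBound G Φ t := by
  refine ⟨|C| + d * K + d * ⌊Φ K⌋₊, fun m => ?_⟩
  have h1 := hG.le m ⌊Φ m⌋₊
  have h2 : 0 ≤ t * (⌊Φ m⌋₊ : ℝ) := by positivity
  have h3 : 0 ≤ (d : ℝ) * K := by positivity
  have h4 : 0 ≤ (d : ℝ) * ⌊Φ K⌋₊ := by positivity
  have h5 := abs_nonneg C
  have h6 := le_abs_self C
  rcases lt_or_ge m K with hm | hm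
  · have : (⌊Φ m⌋₊ : ℝ) ≤ ⌊Φ K⌋₊ := by exact_mod_cast hΦ.floor_mono hm.le
    have : (d : ℝ) * ⌊Φ m⌋₊ ≤ d * ⌊Φ K⌋₊ := by gcongr
    linarith
  rcases lt_or_ge ⌊Φ m⌋₊ K with hw | hw
  · have : (⌊Φ m⌋₊ : ℝ) ≤ K := by exact_mod_cast hw.le
    have : (d : ℝ) * ⌊Φ m⌋₊ ≤ d * K := by gcongr
    linarith
  · have := h m hm hw
    linarith

/-- It suffices to bound windows with large starting level and large length: a window starting before `K`
can be restarted at `K` at bounded cost. -/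
lemma upBound_of_eventually (hG : IsProfile d G) {t C : ℝ} (ht : 0 ≤ t) {K : ℕ}
    (h : ∀ m ≥ K, ∀ w ≥ K, ⌊Φ m⌋₊ ≤ w → G m w ≤ C + t * w) : UpBound G Φ t := by
  refine ⟨|C| + 2 * (d * K) + d * ⌊Φ K⌋₊, fun m w hw => ?_⟩
  have h1 := hG.le m w
  have h2 : 0 ≤ t * (w : ℝ) := by positivity
  have h3 : 0 ≤ (d : ℝ) * K := by positivity
  have h4 : 0 ≤ (d : ℝ) * ⌊Φ K⌋₊ := by positivity
  have h5 := abs_nonneg C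
  have h6 := le_abs_self C
  rcases lt_or_ge w K with hwK | hwK
  · have : (w : ℝ) ≤ K := by exact_mod_cast hwK.le
    have : (d : ℝ) * w ≤ d * K := by gcongr
    linarith
  rcases lt_or_ge m K with hm | hm
  · rcases lt_or_ge w ⌊Φ K⌋₊ with hw' | hw'
    · have : (w : ℝ) ≤ ⌊Φ K⌋₊ := by exact_mod_cast hw'.le
      have : (d : ℝ) * w ≤ d * ⌊Φ K⌋₊ := by gcongr
      linarith
    · have h7 := hG.shift hm.le w
      have h8 := h K le_rfl w hwK hw'
      have h9 : (d : ℝ) * ((K : ℝ) - m) ≤ d * K := by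
        gcongr
        have : (0 : ℝ) ≤ m := by positivity
        linarith
      linarith
  · have := h m hm w hwK hw
    linarith

lemma exists_small {s ε : ℝ} (hs : 0 ≤ s) (d : ℕ) (hε : 0 < ε) :
    ∃ ε₁ > 0, ε₁ ≤ 1 ∧ (s + d + 1) * ε₁ ≤ ε := by
  refine ⟨min 1 (ε / (s + d + 1)), by positivity, min_le_left _ _, ?_⟩
  calc (s + d + 1) * min 1 (ε / (s + d + 1)) ≤ (s + d + 1) * (ε / (s + d + 1)) := by
        gcongr; exact min_le_right _ _
    _ = ε := by field_simp

/-- A single-scale bound for `D` passes to any quantity `y` that is at most the growth of `D` over `⌊Φ m⌋₊`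
levels from a nearby level `m'`. -/
lemma phi_step (hD : IsProfile d D) (hΦ : Gauge Φ) {s C ε ε₁ : ℝ} (hs : 0 ≤ s) (hε₀ : 0 ≤ ε₁) (hε₁ : ε₁ ≤ 1)
    (hsmall : (s + d + 1) * ε₁ ≤ ε) (h : ∀ m, D m ⌊Φ m⌋₊ ≤ C + s * ⌊Φ m⌋₊) {m m' : ℕ} {y : ℝ}
    (hm : |(m' : ℝ) - m| ≤ ε₁ * m) (hy : y ≤ D m' ⌊Φ m⌋₊ + ε₁ * ⌊Φ m⌋₊) :
    y ≤ C + 2 * s + 2 * d + (s + ε) * ⌊Φ m⌋₊ := by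
  have h1 := hΦ.close hε₀ hε₁ hm
  have h2 := hD.lip_abs m' ⌊Φ m'⌋₊ ⌊Φ m⌋₊
  rw [abs_sub_comm] at h2
  have h3 := h m'
  have h4 := (abs_le.1 h1).2
  have h5 : (d : ℝ) * |(⌊Φ m'⌋₊ : ℝ) - ⌊Φ m⌋₊| ≤ d * (ε₁ * ⌊Φ m⌋₊ + 2) := by gcongr
  have h6 : s * (⌊Φ m'⌋₊ : ℝ) ≤ s * (⌊Φ m⌋₊ + (ε₁ * ⌊Φ m⌋₊ + 2)) := by gcongr; linarith
  have h7 : (s + d + 1) * ε₁ * (⌊Φ m⌋₊ : ℝ) ≤ ε * ⌊Φ m⌋₊ := by gcongr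
  linarith

/-- A bound for `D` at all scales passes to any quantity `y` that is at most the growth of `D` over `w` levels
from a nearby level `m'`. -/
lemma up_step (hD : IsProfile d D) (hΦ : Gauge Φ) {s C ε ε₁ : ℝ} (hs : 0 ≤ s) (hε₀ : 0 ≤ ε₁)
    (hε₁ : ε₁ ≤ 1)
    (hsmall : (s + d + 1) * ε₁ ≤ ε) (h : ∀ m w, ⌊Φ m⌋₊ ≤ w → D m w ≤ C + s * w) {m m' w : ℕ} {y : ℝ}
    (hw : ⌊Φ m⌋₊ ≤ w)
    (hm : |(m' : ℝ) - m| ≤ ε₁ * m) (hy : y ≤ D m' w + ε₁ * w) :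
    y ≤ C + 2 * s + 2 * d + (s + ε) * w := by
  have h1 := hΦ.close hε₀ hε₁ hm
  have h2 := hD.mono m' w (max w ⌊Φ m'⌋₊) (le_max_left _ _)
  have h3 := h m' _ (le_max_right w ⌊Φ m'⌋₊)
  have h4 := (abs_le.1 h1).2
  have hw' : (⌊Φ m⌋₊ : ℝ) ≤ w := by exact_mod_cast hw
  have h5 : ((max w ⌊Φ m'⌋₊ : ℕ) : ℝ) ≤ w + (ε₁ * w + 2) := by
    push_cast
    refine max_le ?_ ?_
    · have : 0 ≤ ε₁ * (w : ℝ) := by positivity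
      linarith
    · have : ε₁ * (⌊Φ m⌋₊ : ℝ) ≤ ε₁ * w := by gcongr
      linarith
  have h6 : s * ((max w ⌊Φ m'⌋₊ : ℕ) : ℝ) ≤ s * (w + (ε₁ * w + 2)) := by gcongr
  have h7 : (s + d + 1) * ε₁ * (w : ℝ) ≤ ε * w := by gcongr
  have h8 : 0 ≤ (d : ℝ) * (ε₁ * w) := by positivity
  have h9 : (0 : ℝ) ≤ d := by positivity
  linarith

/-- The single-scale bound passes from a profile to its shadow. -/
theorem PhiBound.of_shadow {B : ℝ} (hD : IsProfile d D) (hG : IsProfile d G) (hS : Shadow B D G)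
    (hΦ : Gauge Φ) {s ε : ℝ} (hs : 0 ≤ s) (hε : 0 < ε) (h : PhiBound D Φ s) :
    PhiBound G Φ (s + ε) := by
  obtain ⟨C, hC⟩ := h
  obtain ⟨ε₁, h0, h1, h2⟩ := exists_small hs d hε
  obtain ⟨K, hK⟩ := hS.upper ε₁ h0
  refine phiBound_of_eventually hG hΦ (by positivity) (K := K) (C := C + 2 * s + 2 * d) fun m hm hw => ?_
  obtain ⟨m', hm', hy⟩ := hK m hm _ hw
  exact phi_step hD hΦ hs h0.le h1 h2 hC hm' hy

/-- The bound at all scales passes from a profile to its shadow. -/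
theorem UpBound.of_shadow {B : ℝ} (hD : IsProfile d D) (hG : IsProfile d G) (hS : Shadow B D G)
    (hΦ : Gauge Φ) {s ε : ℝ} (hs : 0 ≤ s) (hε : 0 < ε) (h : UpBound D Φ s) :
    UpBound G Φ (s + ε) := by
  obtain ⟨C, hC⟩ := h
  obtain ⟨ε₁, h0, h1, h2⟩ := exists_small hs d hε
  obtain ⟨K, hK⟩ := hS.upper ε₁ h0
  refine upBound_of_eventually hG (by positivity) (K := K) (C := C + 2 * s + 2 * d) fun m hm w hw hf => ?_
  obtain ⟨m', hm', hy⟩ := hK m hm _ hw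
  exact up_step hD hΦ hs h0.le h1 h2 hC hf hm' hy

/-- A bound for windows with ratio `w / m` in every compact subset of `(0, ∞)` extends to arbitrarily large
ratios: a window with huge ratio can be restarted at a later level at small relative cost. -/
lemma large_of_mid (hD : IsProfile d D) {t : ℝ} (f : ℕ → ℕ) {a : ℝ} {K₀ : ℕ}
    (hf : ∀ m ≥ K₀, (f m : ℝ) ≤ a * m)
    (h : ∀ δ > (0 : ℝ), ∀ A : ℝ, ∀ η > (0 : ℝ), ∃ K : ℕ, ∀ m ≥ K, ∀ w : ℕ, δ * m ≤ w → w ≤ A * m →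
      f m ≤ w → D m w ≤ (t + η) * w)
    {δ η : ℝ} (hδ : 0 < δ) (hη : 0 < η) :
    ∃ K : ℕ, ∀ m ≥ K, ∀ w : ℕ, δ * m ≤ w → f m ≤ w → D m w ≤ (t + η) * w := by
  obtain ⟨A, hA⟩ : ∃ A : ℕ, max (max 1 (2 * |a|)) (max (2 * δ) (4 * d / η)) ≤ A := exists_nat_ge _
  simp only [max_le_iff] at hA
  obtain ⟨⟨hA1, hA2⟩, hA3, hA4⟩ := hA
  have hAp : (0 : ℝ) < A := by linarith
  have hAp' : 0 < A := by exact_mod_cast hAp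
  obtain ⟨K, hK⟩ := h δ hδ A (η / 2) (half_pos hη)
  refine ⟨max (max K K₀) 1, fun m hm w hw hfw => ?_⟩
  simp only [ge_iff_le, max_le_iff] at hm
  rcases le_or_gt (w : ℝ) (A * m) with hwA | hwA
  · refine (hK m hm.1.1 w hw hwA hfw).trans ?_
    gcongr; linarith
  -- restart at the level `w / A + 1`, where the ratio is about `A`
  set m₁ := w / A + 1 with hm₁
  have hwA' : A * m < w := by exact_mod_cast hwA
  have hwA2 : A ≤ w := by nlinarith [hm.2]
  have hmm : m ≤ m₁ := by
    have := (Nat.le_div_iff_mul_le hAp').2 (by rw [mul_comm]; exact hwA'.le : m * A ≤ w)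
    omega
  have h1 : w < A * m₁ := Nat.lt_mul_div_succ w hAp'
  have h1' : (w : ℝ) ≤ A * m₁ := by exact_mod_cast h1.le
  have h2 : A * m₁ ≤ 2 * w := by
    have := Nat.mul_div_le w A
    rw [hm₁]; nlinarith
  have h2' : (A : ℝ) * m₁ ≤ 2 * w := by exact_mod_cast h2
  have hm₁p : (0 : ℝ) ≤ m₁ := by positivity
  have h3 : δ * m₁ ≤ w := by nlinarith
  have h4 : f m₁ ≤ w := by
    have := hf m₁ (by omega)
    have h5 : a * m₁ ≤ |a| * m₁ := by gcongr; exact le_abs_self a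
    have : (f m₁ : ℝ) ≤ w := by nlinarith
    exact_mod_cast this
  have h5 := hK m₁ (by omega) w h3 h1' h4
  have h6 := hD.shift hmm w
  have h7 : (d : ℝ) * ((m₁ : ℝ) - m) ≤ η / 2 * w := by
    have a1 : (d : ℝ) * ((m₁ : ℝ) - m) ≤ d * m₁ := by
      gcongr
      have : (0 : ℝ) ≤ m := by positivity
      linarith
    rw [div_le_iff₀ hη] at hA4
    have a2 : (4 * d : ℝ) * m₁ ≤ A * η * m₁ := by gcongr
    nlinarith
  linarith

/-- By subadditivity, the bound at the prescribed lengths iterates to every length, with an overshoot of at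
most one prescribed length. -/
lemma phi_iterate (hG : IsProfile d G) (hΦ : Gauge Φ) {s' : ℝ} (hs' : 0 ≤ s') {K : ℕ}
    (hpos : ∀ m ≥ K, 1 ≤ ⌊Φ m⌋₊) (h : ∀ m ≥ K, G m ⌊Φ m⌋₊ ≤ s' * ⌊Φ m⌋₊) (w : ℕ) :
    ∀ m ≥ K, G m w ≤ s' * (w + ⌊Φ (m + w)⌋₊) := by
  induction w using Nat.strong_induction_on with
  | _ w ih =>
    intro m hm
    have hp := hpos m hm
    have h1 := h m hm
    rcases le_or_gt w ⌊Φ m⌋₊ with hw | hw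
    · have h2 := hG.mono m _ _ hw
      have h3 : (⌊Φ m⌋₊ : ℝ) ≤ ⌊Φ (m + w)⌋₊ := by exact_mod_cast hΦ.floor_mono (Nat.le_add_right m w)
      have h4 : s' * (⌊Φ m⌋₊ : ℝ) ≤ s' * (w + ⌊Φ (m + w)⌋₊) := by
        have : (0 : ℝ) ≤ w := by positivity
        gcongr; linarith
      linarith
    · have h2 := hG.sub m ⌊Φ m⌋₊ (w - ⌊Φ m⌋₊)
      have h3 := ih (w - ⌊Φ m⌋₊) (by omega) (m + ⌊Φ m⌋₊) (by omega)
      rw [Nat.add_sub_cancel' hw.le] at h2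
      rw [show m + ⌊Φ m⌋₊ + (w - ⌊Φ m⌋₊) = m + w by omega, Nat.cast_sub hw.le] at h3
      linarith

/-- If `Φ m = o(m)`, a single-scale bound yields the same exponent for all windows with `w / m` bounded
below, since the overshoot in `phi_iterate` is then negligible. -/
lemma phi_large (hG : IsProfile d G) (hΦ : Gauge Φ) (hlim : Tendsto Φ atTop atTop) {s : ℝ}
    (hs : 0 ≤ s) (h : PhiBound G Φ s)
    (h0 : ∀ ε > 0, ∃ K : ℕ, ∀ m ≥ K, Φ m ≤ ε * m) {δ η : ℝ} (hδ : 0 < δ) (hη : 0 < η) :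
    ∃ K : ℕ, ∀ m ≥ K, ∀ w : ℕ, δ * m ≤ w → G m w ≤ (s + η) * w := by
  obtain ⟨C, hC⟩ := h
  obtain ⟨K1, hK1⟩ := eventually_atTop.1 (hlim.eventually_ge_atTop (max 1 (2 * |C| / η) + 1))
  set c := η / 2 / ((s + η / 2) * (1 / δ + 1)) with hc
  obtain ⟨K2, hK2⟩ := h0 c (by positivity)
  have hbig : ∀ m ≥ K1, 1 ≤ ⌊Φ m⌋₊ ∧ 2 * |C| / η ≤ (⌊Φ m⌋₊ : ℝ) := fun m hm => by
    have h1 := hK1 m hm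
    have h2 := Nat.lt_floor_add_one (Φ m)
    have h3 := le_max_left 1 (2 * |C| / η)
    have h4 := le_max_right 1 (2 * |C| / η)
    exact ⟨by exact_mod_cast (by linarith : (1 : ℝ) ≤ ⌊Φ m⌋₊), by linarith⟩
  refine ⟨max K1 K2, fun m hm w hw => ?_⟩
  simp only [ge_iff_le, max_le_iff] at hm
  have h1 := phi_iterate hG hΦ (s' := s + η / 2) (by positivity) (K := K1) (fun m hm => (hbig m hm).1)
    (fun m hm => by
      have e1 := hC m
      have e2 := (hbig m hm).2
      rw [div_le_iff₀ hη] at e2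
      have := le_abs_self C
      linarith) w m hm.1
  have h2 := hK2 (m + w) (by omega)
  have h3 := hΦ.floor_le (m + w)
  have h4 : (m : ℝ) ≤ 1 / δ * w := by rw [one_div, inv_mul_eq_div, le_div_iff₀ hδ]; linarith
  have h5 : (⌊Φ (m + w)⌋₊ : ℝ) ≤ c * ((1 / δ + 1) * w) := by
    refine h3.trans (h2.trans ?_)
    push_cast
    have : 0 ≤ c := by positivity
    gcongr; linarith
  calc G m w ≤ (s + η / 2) * (w + c * ((1 / δ + 1) * w)) := h1.trans (by gcongr)
    _ = (s + η) * w := by rw [hc]; field_simp; ring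

/-- If `G` satisfies exponent `s` for all windows with `w / m` bounded below, so does `D` by the `mid`
property of shadows. -/
lemma largeExp_le_of_large {B : ℝ} (hD : IsProfile d D) (hS : Shadow B D G) {s : ℝ} (hs : 0 ≤ s)
    (h : ∀ δ > (0 : ℝ), ∀ η > (0 : ℝ), ∃ K : ℕ, ∀ m ≥ K, ∀ w : ℕ, δ * m ≤ w → G m w ≤ (s + η) * w) :
    largeExp D ≤ s := by
  have hmid : ∀ δ > (0 : ℝ), ∀ η > (0 : ℝ), ∃ K : ℕ, ∀ m ≥ K, ∀ w : ℕ, δ * m ≤ w → 0 ≤ w →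
      D m w ≤ (s + η) * w := by
    intro δ hδ η hη
    refine large_of_mid hD (fun _ => 0) (a := 0) (K₀ := 0) (by simp) (fun δ hδ A η hη => ?_) hδ hη
    · clear * - hS h hδ hη
      obtain ⟨K2, hK2⟩ := h (δ / 2) (half_pos hδ) (η / 2) (half_pos hη)
      obtain ⟨K1, hK1⟩ := hS.mid δ hδ A (min (δ / 2) (η / 2)) (by positivity)
      refine ⟨max K1 1, fun m hm w hw1 hw2 _ => ?_⟩
      simp only [ge_iff_le, max_le_iff] at hm
      obtain ⟨m', hm', w', hw', hr, hDG⟩ := hK1 m hm.1 w hw1 hw2 (max K2 1)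
      simp only [ge_iff_le, max_le_iff] at hm' hw'
      have hmp : (0 : ℝ) < m := by exact_mod_cast hm.2
      have hmp' : (0 : ℝ) < m' := by exact_mod_cast hm'.2
      have hwp' : (0 : ℝ) < w' := by exact_mod_cast hw'.2
      have e1 : δ ≤ w / m := by rw [le_div_iff₀ hmp]; exact hw1
      have e2 := (abs_le.1 hr).1
      have e3 := min_le_left (δ / 2) (η / 2)
      have e4 := min_le_right (δ / 2) (η / 2)
      have e5 : δ / 2 ≤ w' / m' := by linarith
      rw [le_div_iff₀ hmp'] at e5
      have e6 := hK2 m' hm'.1 w' e5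
      rw [← div_le_iff₀ hwp'] at e6
      exact hDG.trans (mul_le_mul_of_nonneg_right (by linarith) (by positivity))
  refine le_of_forall_pos_le_add fun η hη => largeExp_le (by positivity) fun H => ?_
  obtain ⟨K, hK⟩ := hmid (1 / (H + 1)) (by positivity) η hη
  refine ⟨K, fun m hm w hw => hK m hm w ?_ (Nat.zero_le _)⟩
  rw [one_div, inv_mul_eq_div, div_le_iff₀ (by positivity)]
  have : (m : ℝ) ≤ H * w := by exact_mod_cast hw
  have : (0 : ℝ) ≤ w := by positivity
  linarith

/-- The single-scale bound passes from a shadow to the profile. -/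
theorem PhiBound.of_shadow' (hD : IsProfile d D) (hG : IsProfile d G)
    (hS : Shadow (largeExp D) D G)
    (hΦ : Gauge Φ) (hlim : Tendsto Φ atTop atTop) {s ε : ℝ} (hs : 0 ≤ s) (hε : 0 < ε)
    (h : PhiBound G Φ s) : PhiBound D Φ (s + ε) := by
  obtain ⟨u, hu, hslope⟩ := hΦ.exists_slope
  rcases hu.eq_or_lt with rfl | hu
  -- sublinear gauge: `largeExp D ≤ s`, so both alternatives of `lower` give the bound
  · have hB := largeExp_le_of_large hD hS hs fun δ hδ η hη => phi_large hG hΦ hlim hs h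
      (fun ε hε => by
        obtain ⟨K, hK⟩ := hslope ε hε
        exact ⟨K, fun m hm => by simpa using (hK m hm).2⟩) hδ hη
    obtain ⟨C, hC⟩ := h
    obtain ⟨ε₁, h0, h1, h2⟩ := exists_small hs d hε
    obtain ⟨K, hK⟩ := hS.lower ε₁ h0
    refine phiBound_of_eventually hD hΦ (by positivity) (K := K) (C := |C| + 2 * s + 2 * d)
      fun m hm hw => ?_
    rcases hK m hm _ hw with ⟨m', hm', hy⟩ | hy
    · have := phi_step hG hΦ hs h0.le h1 h2 hC hm' hy
      have := le_abs_self C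
      linarith
    · have e : ε₁ ≤ ε := by nlinarith [show (0 : ℝ) ≤ d by positivity]
      have : (largeExp D + ε₁) * (⌊Φ m⌋₊ : ℝ) ≤ (s + ε) * ⌊Φ m⌋₊ := by gcongr
      have : 0 ≤ |C| + 2 * s + 2 * d := by positivity
      linarith
  -- linear gauge: the window has ratio about `u`, and so does the one supplied by `mid`, whose length
  -- is therefore close to the length prescribed at its own level
  · obtain ⟨C, hC⟩ := h
    obtain ⟨ε₁, h0, h1, h2⟩ := exists_small hs d (by positivity : 0 < ε / 2)
    -- `ρ` is the permitted error in all ratios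
    set ρ : ℝ := min (u / 8) (u / 16 * ε₁) with hρ
    have hρp : 0 < ρ := by positivity
    have hρ1 : ρ ≤ u / 8 := min_le_left _ _
    have hρ2 : ρ ≤ u / 16 * ε₁ := min_le_right _ _
    obtain ⟨K1, hK1⟩ := hslope ρ hρp
    obtain ⟨K2, hK2⟩ := hS.mid (u / 2) (by positivity) (u + ρ) (min ρ (ε / 4)) (by positivity)
    obtain ⟨K3, hK3⟩ := exists_nat_ge (1 / ρ)
    obtain ⟨K4, hK4⟩ := exists_nat_ge (|C| / (ε / 4))
    refine phiBound_of_eventually hD hΦ (by positivity) (K := max (max K1 K2) (max K3 1)) (C := 0)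
      fun m hm hw => ?_
    simp only [ge_iff_le, max_le_iff] at hm
    have hfl : ∀ n ≥ K1, n ≥ K3 → (u - ρ) * n ≤ (⌊Φ n⌋₊ : ℝ) ∧ (⌊Φ n⌋₊ : ℝ) ≤ (u + ρ) * n := fun n hn hn' => by
      have e1 := hK1 n hn
      have e2 := hΦ.floor_le n
      have e3 := Nat.lt_floor_add_one (Φ n)
      have e4 : 1 / ρ ≤ n := hK3.trans (by exact_mod_cast hn')
      rw [div_le_iff₀ hρp] at e4
      exact ⟨by linarith, by linarith⟩
    have hfm := hfl m hm.1.1 hm.2.1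
    have hmp : (0 : ℝ) < m := by exact_mod_cast hm.2.2
    obtain ⟨m', hm', w', hw', hr, hDG⟩ := hK2 m hm.1.2 ⌊Φ m⌋₊ (by nlinarith) hfm.2
      (max (max K1 K3) (max K4 1))
    simp only [ge_iff_le, max_le_iff] at hm' hw'
    have hfm' := hfl m' hm'.1.1 hm'.1.2
    have hmp' : (0 : ℝ) < m' := by exact_mod_cast hm'.2.2
    have hwp' : (0 : ℝ) < w' := by exact_mod_cast hw'.2.2
    have hr1 := abs_le.1 (hr.trans (min_le_left _ _))
    have e1 : (⌊Φ m⌋₊ : ℝ) / m ≤ u + ρ := by rw [div_le_iff₀ hmp]; exact hfm.2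
    have e2 : u - ρ ≤ (⌊Φ m⌋₊ : ℝ) / m := by rw [le_div_iff₀ hmp]; exact hfm.1
    have e3 : (w' : ℝ) ≤ (u + 2 * ρ) * m' := by
      rw [← div_le_iff₀ hmp']; linarith
    have e4 : (u - 2 * ρ) * m' ≤ (w' : ℝ) := by
      rw [← le_div_iff₀ hmp']; linarith
    have e5 : (m' : ℝ) ≤ 2 / u * w' := by
      rw [div_mul_eq_mul_div, le_div_iff₀ hu]; nlinarith
    have e6 : |(w' : ℝ) - ⌊Φ m'⌋₊| ≤ ε₁ * w' := by
      have : 4 * ρ * m' ≤ ε₁ * w' := by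
        calc 4 * ρ * m' ≤ 4 * (u / 16 * ε₁) * (2 / u * w') := by gcongr
          _ = ε₁ * w' / 2 := by field_simp; ring
          _ ≤ ε₁ * w' := by have : 0 ≤ ε₁ * (w' : ℝ) := by positivity
                            linarith
      rw [abs_le]
      constructor <;> nlinarith
    have e7 := hG.lip_abs m' ⌊Φ m'⌋₊ w'
    have e8 := hC m'
    have e9 : s * (⌊Φ m'⌋₊ : ℝ) ≤ s * (w' + ε₁ * w') := by
      have := (abs_le.1 e6).1
      gcongr; linarith
    have e10 : (d : ℝ) * |(w' : ℝ) - ⌊Φ m'⌋₊| ≤ d * (ε₁ * w') := by gcongr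
    have e11 : C ≤ ε / 4 * w' := by
      have : |C| / (ε / 4) ≤ w' := hK4.trans (by exact_mod_cast hw'.2.1)
      rw [div_le_iff₀ (by positivity)] at this
      have := le_abs_self C
      linarith
    have e12 : (s + d + 1) * ε₁ * w' ≤ ε / 2 * w' := by gcongr
    have e13 : 0 ≤ ε₁ * (w' : ℝ) := by positivity
    have e14 : G m' w' / w' ≤ s + 3 * ε / 4 := by
      rw [div_le_iff₀ hwp']; linarith
    have e15 := min_le_right ρ (ε / 4)
    have e16 : (G m' w' / w' + min ρ (ε / 4)) * (⌊Φ m⌋₊ : ℝ) ≤ (s + ε) * ⌊Φ m⌋₊ :=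
      mul_le_mul_of_nonneg_right (by linarith) (by positivity)
    linarith

/-- A bound at all scales for a shadow of `D` gives one for `D` over the admissible windows with `w / m` bounded
below. -/
lemma up_large {B : ℝ} (hD : IsProfile d D) (hG : IsProfile d G) (hS : Shadow B D G) (hΦ : Gauge Φ)
    {s : ℝ} (hs : 0 ≤ s) (h : UpBound G Φ s) {δ η : ℝ} (hδ : 0 < δ) (hη : 0 < η) :
    ∃ K : ℕ, ∀ m ≥ K, ∀ w : ℕ, δ * m ≤ w → ⌊Φ m⌋₊ ≤ w → D m w ≤ (s + η) * w := by
  obtain ⟨C, hC⟩ := h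
  obtain ⟨u, hu, hslope⟩ := hΦ.exists_slope
  obtain ⟨K₀, hK₀⟩ := hslope 1 one_pos
  refine large_of_mid hD (fun m => ⌊Φ m⌋₊) (a := u + 1) (K₀ := K₀)
    (fun m hm => (hΦ.floor_le m).trans (hK₀ m hm).2) (fun δ hδ A η hη => ?_) hδ hη
  set ρ := min (δ / 2) (δ * η / (16 * (s + 1))) with hρ
  have hρp : 0 < ρ := by positivity
  have hρ1 : ρ ≤ δ / 2 := min_le_left _ _
  have hρ2 : ρ ≤ δ * η / (16 * (s + 1)) := min_le_right _ _
  rw [le_div_iff₀ (by positivity)] at hρ2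
  obtain ⟨K1, hK1⟩ := hS.mid δ hδ A (min ρ (η / 4)) (by positivity)
  obtain ⟨K2, hK2⟩ := exists_nat_ge (1 / ρ)
  obtain ⟨K3, hK3⟩ := exists_nat_ge (|C| / (η / 4))
  refine ⟨max (max K1 1) K2, fun m hm w hw1 hw2 hf => ?_⟩
  simp only [ge_iff_le, max_le_iff] at hm
  have hmp : (0 : ℝ) < m := by exact_mod_cast hm.1.2
  obtain ⟨m', hm', w', hw', hr, hDG⟩ := hK1 m hm.1.1 w hw1 hw2 (max m (max K3 1))
  simp only [ge_iff_le, max_le_iff] at hm' hw'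
  have hmp' : (0 : ℝ) < m' := by exact_mod_cast hm'.2.2
  have hwp' : (0 : ℝ) < w' := by exact_mod_cast hw'.2.2
  have hr1 := abs_le.1 (hr.trans (min_le_left _ _))
  have e1 : δ ≤ w / m := by rw [le_div_iff₀ hmp]; exact hw1
  have e2 : (m' : ℝ) ≤ 2 / δ * w' := by
    have : δ / 2 ≤ w' / m' := by linarith
    rw [le_div_iff₀ hmp'] at this
    rw [div_mul_eq_mul_div, le_div_iff₀ hδ]; linarith
  have e3 : (⌊Φ m'⌋₊ : ℝ) ≤ w' + 2 * ρ * m' := by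
    have a1 := hΦ.floor_le m'
    have a2 := hΦ.anti m m' hm'.1
    have a3 := Nat.lt_floor_add_one (Φ m)
    have a4 : (⌊Φ m⌋₊ : ℝ) ≤ w := by exact_mod_cast hf
    have a5 : Φ m' ≤ (w + 1) / m * m' := by
      rw [div_mul_eq_mul_div, le_div_iff₀ hmp]
      nlinarith
    have a6 : 1 / ρ ≤ m := hK2.trans (by exact_mod_cast hm.2)
    have a7 : 1 / (m : ℝ) ≤ ρ := by
      rw [div_le_iff₀ hρp] at a6; rw [div_le_iff₀ hmp]; linarith
    have a8 : (w : ℝ) / m ≤ w' / m' + ρ := by linarith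
    calc (⌊Φ m'⌋₊ : ℝ) ≤ (w / m + 1 / m) * m' := by rw [← add_div]; linarith
      _ ≤ (w' / m' + ρ + ρ) * m' := by gcongr
      _ = w' + 2 * ρ * m' := by field_simp; ring
  have e4 : 2 * ρ * m' * s ≤ η / 4 * w' := by
    have : ρ * s ≤ δ * η / 16 := by nlinarith
    calc 2 * ρ * m' * s = 2 * (ρ * s) * m' := by ring
      _ ≤ 2 * (δ * η / 16) * (2 / δ * w') := by gcongr
      _ = η / 4 * w' := by field_simp; ring
  have e5 := hG.mono m' w' (max w' ⌊Φ m'⌋₊) (le_max_left _ _)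
  have e6 := hC m' _ (le_max_right w' ⌊Φ m'⌋₊)
  have e7 : ((max w' ⌊Φ m'⌋₊ : ℕ) : ℝ) ≤ w' + 2 * ρ * m' := by
    push_cast
    exact max_le (by have : 0 ≤ 2 * ρ * (m' : ℝ) := by positivity
                     linarith) e3
  have e8 : s * ((max w' ⌊Φ m'⌋₊ : ℕ) : ℝ) ≤ s * (w' + 2 * ρ * m') := by gcongr
  have e11 : C ≤ η / 4 * w' := by
    have : |C| / (η / 4) ≤ w' := hK3.trans (by exact_mod_cast hw'.2.1)
    rw [div_le_iff₀ (by positivity)] at this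
    have := le_abs_self C
    linarith
  have e14 : G m' w' / w' ≤ s + η / 2 := by
    rw [div_le_iff₀ hwp']; linarith
  have e15 := min_le_right ρ (η / 4)
  exact hDG.trans (mul_le_mul_of_nonneg_right (by linarith) (by positivity))

/-- The bound at all scales passes from a shadow to the profile. -/
theorem UpBound.of_shadow' (hD : IsProfile d D) (hG : IsProfile d G)
    (hS : Shadow (largeExp D) D G) (hΦ : Gauge Φ) {s ε : ℝ} (hs : 0 ≤ s) (hε : 0 < ε)
    (h : UpBound G Φ s) : UpBound D Φ (s + ε) := by
  obtain ⟨u, hu, hslope⟩ := hΦ.exists_slope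
  rcases hu.eq_or_lt with rfl | hu
  -- sublinear gauge: windows with `w / m` bounded below are eventually admissible, so `largeExp D ≤ s`
  · have hB : largeExp D ≤ s := by
      refine le_of_forall_pos_le_add fun η hη => largeExp_le (by positivity) fun H => ?_
      obtain ⟨K1, hK1⟩ := up_large hD hG hS hΦ hs h (δ := 1 / (H + 1)) (by positivity) hη
      obtain ⟨K2, hK2⟩ := hslope (1 / (H + 1)) (by positivity)
      refine ⟨max K1 K2, fun m hm w hw => ?_⟩
      simp only [ge_iff_le, max_le_iff] at hm
      have e1 : 1 / ((H : ℝ) + 1) * m ≤ w := by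
        rw [one_div, inv_mul_eq_div, div_le_iff₀ (by positivity)]
        have : (m : ℝ) ≤ H * w := by exact_mod_cast hw
        have : (0 : ℝ) ≤ w := by positivity
        linarith
      have e2 := (hK2 m hm.2).2
      have e3 := hΦ.floor_le m
      refine hK1 m hm.1 w e1 ?_
      have : (⌊Φ m⌋₊ : ℝ) ≤ w := by linarith
      exact_mod_cast this
    obtain ⟨C, hC⟩ := h
    obtain ⟨ε₁, h0, h1, h2⟩ := exists_small hs d hε
    obtain ⟨K, hK⟩ := hS.lower ε₁ h0
    refine upBound_of_eventually hD (by positivity) (K := K) (C := |C| + 2 * s + 2 * d)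
      fun m hm w hw hf => ?_
    rcases hK m hm _ hw with ⟨m', hm', hy⟩ | hy
    · have := up_step hG hΦ hs h0.le h1 h2 hC hf hm' hy
      have := le_abs_self C
      linarith
    · have e : ε₁ ≤ ε := by nlinarith [show (0 : ℝ) ≤ d by positivity]
      have : (largeExp D + ε₁) * (w : ℝ) ≤ (s + ε) * w := by gcongr
      have : 0 ≤ |C| + 2 * s + 2 * d := by positivity
      linarith
  -- linear gauge: all admissible windows have `w / m ≥ u / 2` from some level on
  · obtain ⟨K1, hK1⟩ := up_large hD hG hS hΦ hs h (δ := u / 2) (by positivity) hε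
    obtain ⟨K2, hK2⟩ := hslope 1 one_pos
    obtain ⟨K3, hK3⟩ := exists_nat_ge (2 / u)
    refine upBound_of_eventually hD (by positivity) (K := max K1 (max K2 K3)) (C := 0)
      fun m hm w hw hf => ?_
    simp only [ge_iff_le, max_le_iff] at hm
    have e1 := (hK2 m hm.2.1).1
    have e2 := Nat.lt_floor_add_one (Φ m)
    have e3 : (⌊Φ m⌋₊ : ℝ) ≤ w := by exact_mod_cast hf
    have e4 : 2 / u ≤ m := hK3.trans (by exact_mod_cast hm.2.2)
    rw [div_le_iff₀ hu] at e4
    have := hK1 m hm.1 w (by nlinarith) hf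
    linarith

end transfer

end

section
/-! ### The dyadic profile of a set -/

/-- The half-open dyadic cube of side `2 ^ (-n)` containing `x`, given by its integer coordinates. -/
noncomputable def cell {d : ℕ} (n : ℕ) (x : Fin d → ℝ) : Fin d → ℤ := fun j => ⌊2 ^ n * x j⌋

/-- The cells of level `n` meeting `E` at points of the level-`m` cell `c`. -/
def kids {d : ℕ} (E : Set (Fin d → ℝ)) (m n : ℕ) (c : Fin d → ℤ) : Set (Fin d → ℤ) :=
  {v | ∃ x ∈ E, cell m x = c ∧ cell n x = v}

/-- The largest number of cells of level `m + w` met by `E` inside one cell of level `m`. The supremum is over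
a bounded family (`num_bdd`). -/
noncomputable def num {d : ℕ} (E : Set (Fin d → ℝ)) (m w : ℕ) : ℕ :=
  ⨆ c, (kids E m (m + w) c).ncard

/-- The profile of `E`: its binary logarithmic dyadic branching numbers. -/
noncomputable def prof {d : ℕ} (E : Set (Fin d → ℝ)) (m w : ℕ) : ℝ := Real.logb 2 (num E m w)

variable {d : ℕ} {E : Set (Fin d → ℝ)}

lemma cell_div (n k : ℕ) (x : Fin d → ℝ) (j : Fin d) : cell (n + k) x j / 2 ^ k = cell n x j := by
  have h := Int.natCast_mul_floor_div_cancel (R := ℝ) (n := 2 ^ k) (by positivity) (2 ^ n * x j)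
  push_cast at h
  simp only [cell]
  rw [← h, pow_add, ← mul_assoc, mul_comm ((2 : ℝ) ^ n)]

lemma cell_eq_of_le {m n : ℕ} (h : m ≤ n) {x y : Fin d → ℝ} (hxy : cell n x = cell n y) :
    cell m x = cell m y := by
  obtain ⟨k, rfl⟩ := Nat.exists_eq_add_of_le h
  funext j
  rw [← cell_div m k, ← cell_div m k, hxy]

lemma dist_lt_of_cell {n : ℕ} {x y : Fin d → ℝ} (h : cell n x = cell n y) :
    dist x y < (2 ^ n)⁻¹ := by
  rw [dist_pi_lt_iff (by positivity)]
  intro j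
  have h1 := Int.abs_sub_lt_one_of_floor_eq_floor (congrFun h j)
  rw [← mul_sub, abs_mul, abs_of_pos (by positivity)] at h1
  rw [Real.dist_eq, ← one_div, lt_div_iff₀' (by positivity)]
  exact h1

/-- Points at distance less than `2 ^ (-n)` lie in neighbouring or equal cells of level `n`. -/
lemma cell_mem_of_dist {n : ℕ} {x y : Fin d → ℝ} (h : dist x y < (2 ^ n)⁻¹) :
    cell n x ∈ Fintype.piFinset fun j => Finset.Icc (cell n y j - 1) (cell n y j + 1) := by
  rw [dist_pi_lt_iff (by positivity)] at h
  rw [Fintype.mem_piFinset]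
  intro j
  have h1 := h j
  rw [Real.dist_eq] at h1
  have h2 : |2 ^ n * x j - 2 ^ n * y j| < 1 := by
    rw [← mul_sub, abs_mul, abs_of_pos (by positivity)]
    calc (2 : ℝ) ^ n * |x j - y j| < 2 ^ n * (2 ^ n)⁻¹ := by gcongr
      _ = 1 := by field_simp
  rw [abs_lt] at h2
  simp only [cell, Finset.mem_Icc]
  constructor
  · rw [Int.le_floor]; push_cast
    linarith [Int.floor_le (2 ^ n * y j)]
  · rw [← Int.lt_add_one_iff, Int.floor_lt]; push_cast
    linarith [Int.lt_floor_add_one (2 ^ n * y j)]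

lemma card_near (c : Fin d → ℤ) :
    (Fintype.piFinset fun j => Finset.Icc (c j - 1) (c j + 1)).card = 3 ^ d := by
  rw [Fintype.card_piFinset]
  simp [show ∀ z : ℤ, z + 1 + 1 - (z - 1) = 3 by intro z; ring]

lemma kids_subset (m w : ℕ) (c : Fin d → ℤ) : kids E m (m + w) c ⊆
    (Fintype.piFinset fun j => Finset.Ico (c j * 2 ^ w) (c j * 2 ^ w + 2 ^ w) : Finset (Fin d → ℤ)) := by
  rintro v ⟨x, -, rfl, rfl⟩
  rw [Finset.mem_coe, Fintype.mem_piFinset]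
  intro j
  rw [← cell_div m w, Finset.mem_Ico]
  exact ⟨Int.ediv_mul_le _ (pow_ne_zero _ two_ne_zero), by
    have := Int.lt_ediv_add_one_mul_self (cell (m + w) x j) (Int.pow_pos two_pos : (0 : ℤ) < 2 ^ w)
    linarith⟩

lemma kids_finite (m w : ℕ) (c : Fin d → ℤ) : (kids E m (m + w) c).Finite :=
  (Finset.finite_toSet _).subset (kids_subset m w c)

lemma ncard_kids_le (m w : ℕ) (c : Fin d → ℤ) : (kids E m (m + w) c).ncard ≤ (2 ^ w) ^ d := by
  refine (ncard_le_ncard (kids_subset m w c) (Finset.finite_toSet _)).trans ?_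
  rw [ncard_coe_finset, Fintype.card_piFinset]
  have : ((2 : ℤ) ^ w).toNat = 2 ^ w := by
    rw [show (2 : ℤ) ^ w = ((2 ^ w : ℕ) : ℤ) by push_cast; rfl, Int.toNat_natCast]
  simp [this]

lemma num_bdd (m w : ℕ) : BddAbove (range fun c : Fin d → ℤ => (kids E m (m + w) c).ncard) :=
  ⟨(2 ^ w) ^ d, by rintro _ ⟨c, rfl⟩; exact ncard_kids_le m w c⟩

lemma le_num (m w : ℕ) (c : Fin d → ℤ) : (kids E m (m + w) c).ncard ≤ num E m w :=
  le_ciSup (num_bdd m w) c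

lemma exists_num (E : Set (Fin d → ℝ)) (m w : ℕ) : ∃ c, (kids E m (m + w) c).ncard = num E m w :=
  Nat.sSup_mem (range_nonempty _) (num_bdd m w)

lemma num_le_of {m w k : ℕ} (h : ∀ c, (kids E m (m + w) c).ncard ≤ k) : num E m w ≤ k := ciSup_le h

lemma num_le (m w : ℕ) : num E m w ≤ (2 ^ w) ^ d := num_le_of (ncard_kids_le m w)

lemma num_pos (hE : E.Nonempty) (m w : ℕ) : 0 < num E m w := by
  obtain ⟨x, hx⟩ := hE
  refine lt_of_lt_of_le ?_ (le_num m w (cell m x))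
  exact (ncard_pos (kids_finite m w _)).2 ⟨_, x, hx, rfl, rfl⟩

lemma num_sub (m v w : ℕ) : num E m (v + w) ≤ num E m v * num E (m + v) w := by
  classical
  refine num_le_of fun c => ?_
  have hsub : kids E m (m + (v + w)) c ⊆ ((kids_finite (E := E) m v c).toFinset.biUnion fun c' =>
      (kids_finite (E := E) (m + v) w c').toFinset : Finset (Fin d → ℤ)) := by
    rintro _ ⟨x, hx, hc, rfl⟩
    simp only [Finset.coe_biUnion, Set.mem_iUnion, Finset.mem_coe, Finite.mem_toFinset]
    exact ⟨cell (m + v) x, ⟨x, hx, hc, rfl⟩, x, hx, rfl, by rw [add_assoc]⟩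
  refine (ncard_le_ncard hsub (Finset.finite_toSet _)).trans ?_
  rw [ncard_coe_finset]
  refine (Finset.card_biUnion_le_card_mul _ _ (num E (m + v) w) fun c' _ => ?_).trans ?_
  · rw [← ncard_eq_toFinset_card _ (kids_finite _ _ _)]; exact le_num _ _ _
  · rw [← ncard_eq_toFinset_card _ (kids_finite _ _ _)]; exact Nat.mul_le_mul_right _ (le_num _ _ _)

lemma num_mono (m : ℕ) {v w : ℕ} (h : v ≤ w) : num E m v ≤ num E m w := by
  refine num_le_of fun c => ?_
  obtain ⟨k, rfl⟩ := Nat.exists_eq_add_of_le h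
  have : kids E m (m + v) c = (fun z j => z j / 2 ^ k) '' kids E m (m + (v + k)) c := by
    have hx : ∀ x : Fin d → ℝ, (fun j => cell (m + (v + k)) x j / 2 ^ k) = cell (m + v) x := by
      intro x; funext j; rw [← add_assoc, cell_div]
    ext z
    constructor
    · rintro ⟨x, hxE, hc, rfl⟩
      exact ⟨_, ⟨x, hxE, hc, rfl⟩, hx x⟩
    · rintro ⟨_, ⟨x, hxE, hc, rfl⟩, rfl⟩
      exact ⟨x, hxE, hc, (hx x).symm⟩
  rw [this]
  exact (ncard_image_le (kids_finite m _ c)).trans (le_num _ _ _)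

lemma num_anti (m v w : ℕ) : num E (m + v) w ≤ num E m (v + w) := by
  refine num_le_of fun c => ?_
  rcases (kids E (m + v) (m + v + w) c).eq_empty_or_nonempty with h | ⟨_, x, hx, rfl, rfl⟩
  · simp [h]
  refine (ncard_le_ncard ?_ (kids_finite m (v + w) (cell m x))).trans (le_num m (v + w) (cell m x))
  rintro _ ⟨y, hy, hc, rfl⟩
  exact ⟨y, hy, cell_eq_of_le (Nat.le_add_right m v) hc, by rw [add_assoc]⟩

theorem isProfile_prof (hE : E.Nonempty) : IsProfile d (prof E) := by
  have hp : ∀ m w, (0 : ℝ) < num E m w := fun m w => by exact_mod_cast num_pos hE m w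
  have hl : ∀ {a b : ℝ}, 0 < a → a ≤ b → Real.logb 2 a ≤ Real.logb 2 b := fun ha hab =>
    Real.logb_le_logb_of_le one_lt_two ha hab
  refine ⟨fun m w => ?_, fun m w => ?_, fun m v w => ?_, fun m v w h => ?_, fun m v w => ?_⟩
  · exact Real.logb_nonneg one_lt_two (by exact_mod_cast num_pos hE m w)
  · have := hl (hp m w) (b := (2 ^ w) ^ d) (by exact_mod_cast num_le m w)
    refine this.trans_eq ?_
    rw [← pow_mul, Real.logb_pow, Real.logb_self_eq_one one_lt_two]
    push_cast; ring
  · unfold prof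
    rw [← Real.logb_mul (hp _ _).ne' (hp _ _).ne']
    exact hl (hp _ _) (by exact_mod_cast num_sub m v w)
  · exact hl (hp _ _) (by exact_mod_cast num_mono m h)
  · exact hl (hp _ _) (by exact_mod_cast num_anti m v w)

lemma num_eq_rpow (hE : E.Nonempty) (m w : ℕ) : (num E m w : ℝ) = 2 ^ prof E m w := by
  rw [prof, Real.rpow_logb two_pos (by norm_num) (by exact_mod_cast num_pos hE m w)]

lemma coverNumber_anti {X : Type*} [PseudoMetricSpace X] (E : Set X) {r r' : ℝ} (h : r ≤ r') :
    coverNumber E r' ≤ coverNumber E r := by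
  refine sInf_le_sInf ?_
  rintro _ ⟨S, rfl, hS⟩
  exact ⟨S, rfl, hS.trans (iUnion₂_mono fun x _ => ball_subset_ball h)⟩

/-- A ball of radius at most `2 ^ (-m)` meets at most `3 ^ d` cells of level `m`, and each cell of level
`m + w` meeting `E` is covered by one ball. -/
lemma coverNumber_le (x : Fin d → ℝ) {m w : ℕ} {R r : ℝ} (hR : R ≤ (2 ^ m)⁻¹)
    (hr : (2 ^ (m + w))⁻¹ ≤ r) :
    coverNumber (E ∩ ball x R) r ≤ ((3 ^ d * num E m w : ℕ) : ENNReal) := by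
  classical
  set near := Fintype.piFinset fun j => Finset.Icc (cell m x j - 1) (cell m x j + 1)
  set T := near.biUnion fun c => (kids_finite (E := E) m w c).toFinset
  have hT : T.card ≤ 3 ^ d * num E m w := by
    refine (Finset.card_biUnion_le_card_mul _ _ (num E m w) fun c' _ => ?_).trans_eq
      (by rw [card_near])
    rw [← ncard_eq_toFinset_card _ (kids_finite _ _ _)]; exact le_num _ _ _
  have hg : ∀ v ∈ T, ∃ y, cell (m + w) y = v := by
    intro v hv
    simp only [T, Finset.mem_biUnion, Finite.mem_toFinset] at hv
    obtain ⟨c, -, y, -, -, hy⟩ := hv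
    exact ⟨y, hy⟩
  choose! g hg using hg
  have hcard : ((T.image g).card : ENNReal) ≤ ((3 ^ d * num E m w : ℕ) : ENNReal) := by
    exact_mod_cast Finset.card_image_le.trans hT
  unfold coverNumber
  refine le_trans (sInf_le ⟨T.image g, rfl, ?_⟩) hcard
  rintro y ⟨hyE, hyx⟩
  have hyT : cell (m + w) y ∈ T := by
    simp only [T, Finset.mem_biUnion, Finite.mem_toFinset]
    exact ⟨cell m y, cell_mem_of_dist ((mem_ball.1 hyx).trans_le hR), y, hyE, rfl, rfl⟩
  simp only [mem_iUnion]
  exact ⟨_, Finset.mem_image_of_mem _ hyT, (dist_lt_of_cell (hg _ hyT).symm).trans_le hr⟩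

/-- A cell of level `m` attaining the maximum lies in a ball centred in `E`, and each ball of radius
`2 ^ (-(m + w))` meets at most `3 ^ d` cells of level `m + w`. -/
lemma num_le_coverNumber (hE : E.Nonempty) (m w : ℕ) : ∃ y ∈ E,
    (num E m w : ENNReal) ≤ 3 ^ d * coverNumber (E ∩ ball y (2 ^ m)⁻¹) (2 ^ (m + w))⁻¹ := by
  classical
  obtain ⟨c, hc⟩ := exists_num E m w
  have hne : (kids E m (m + w) c).Nonempty := by
    rw [← ncard_pos (kids_finite m w c), hc]; exact num_pos hE m w
  obtain ⟨_, y, hy, hyc, -⟩ := hne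
  refine ⟨y, hy, ?_⟩
  rw [mul_comm]
  refine (ENNReal.div_le_iff_le_mul (by simp) (by simp)).1 ?_
  refine le_sInf ?_
  rintro _ ⟨S, rfl, hS⟩
  refine (ENNReal.div_le_iff_le_mul (by simp) (by simp)).2 ?_
  have hsub : kids E m (m + w) c ⊆ (S.biUnion fun s => Fintype.piFinset fun j =>
      Finset.Icc (cell (m + w) s j - 1) (cell (m + w) s j + 1) : Finset (Fin d → ℤ)) := by
    rintro _ ⟨z, hz, hzc, rfl⟩
    have : z ∈ E ∩ ball y (2 ^ m)⁻¹ := ⟨hz, dist_lt_of_cell (hzc.trans hyc.symm)⟩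
    have := hS this
    simp only [mem_iUnion] at this
    obtain ⟨s, hs, hzs⟩ := this
    rw [Finset.coe_biUnion]
    exact mem_biUnion hs (cell_mem_of_dist hzs)
  have h1 := ncard_le_ncard hsub (Finset.finite_toSet _)
  rw [hc, ncard_coe_finset] at h1
  have h2 := h1.trans (Finset.card_biUnion_le_card_mul _ _ (3 ^ d) fun s _ => (card_near _).le)
  exact_mod_cast h2

end

section
variable {d : ℕ} {E : Set (Fin d → ℝ)}

lemma coverNumber_le_two (hE : E.Nonempty) (x : Fin d → ℝ) {m w : ℕ} {R r t : ℝ}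
    (hR : R ≤ (2 ^ m)⁻¹) (hr : (2 ^ (m + w))⁻¹ ≤ r) (ht : 2 * d + prof E m w ≤ t) :
    coverNumber (E ∩ ball x R) r ≤ ENNReal.ofReal (2 ^ t) := by
  refine (coverNumber_le x hR hr).trans ?_
  rw [← ENNReal.ofReal_natCast]
  refine ENNReal.ofReal_le_ofReal (le_trans ?_ (Real.rpow_le_rpow_of_exponent_le one_le_two ht))
  push_cast
  rw [num_eq_rpow hE, Real.rpow_add two_pos, Real.rpow_mul two_pos.le, Real.rpow_natCast]
  gcongr
  norm_num

lemma prof_le_of_cover (hE : E.Nonempty) {m w : ℕ} {t : ℝ}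
    (h : ∀ y ∈ E, coverNumber (E ∩ ball y (2 ^ m)⁻¹) (2 ^ (m + w))⁻¹ ≤ ENNReal.ofReal (2 ^ t)) :
    prof E m w ≤ 2 * d + t := by
  obtain ⟨y, hy, h1⟩ := num_le_coverNumber hE m w
  have h2 : (num E m w : ENNReal) ≤ ENNReal.ofReal (2 ^ (2 * d + t)) := by
    refine h1.trans ?_
    rw [Real.rpow_add two_pos, ENNReal.ofReal_mul (by positivity)]
    refine mul_le_mul' ?_ (h y hy)
    rw [Real.rpow_mul two_pos.le, Real.rpow_natCast, ENNReal.ofReal_pow (by positivity)]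
    gcongr
    rw [show (3 : ENNReal) = ENNReal.ofReal 3 by simp]
    exact ENNReal.ofReal_le_ofReal (by norm_num)
  rw [← ENNReal.ofReal_natCast, ENNReal.ofReal_le_ofReal_iff (by positivity), num_eq_rpow hE,
    Real.rpow_le_rpow_left_iff one_lt_two] at h2
  exact h2

/-! ### Dimensions in terms of profiles -/

/-- A dimension function without the requirements of positivity and of `φ R * log (1 / R) → ∞`. Unlike
`IsDimFunction` this admits `φ = 0`, which gives the Assouad dimension. -/
structure WeakDim (φ : ℝ → ℝ) : Prop where
  nonneg : ∀ R ∈ Ioo (0 : ℝ) 1, 0 ≤ φ R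
  mul_log : ∀ R₁ ∈ Ioo (0 : ℝ) 1, ∀ R₂ ∈ Ioo (0 : ℝ) 1, R₁ ≤ R₂ →
    φ R₂ * Real.log (1 / R₂) ≤ φ R₁ * Real.log (1 / R₁)
  mono : ∀ R₁ ∈ Ioo (0 : ℝ) 1, ∀ R₂ ∈ Ioo (0 : ℝ) 1, R₁ ≤ R₂ → φ R₁ ≤ φ R₂

lemma _root_.IsDimFunction.weakDim {φ : ℝ → ℝ} (h : IsDimFunction φ) : WeakDim φ :=
  ⟨fun R hR => (h.1 R hR).le, fun R₁ h₁ R₂ h₂ h₃ => (h.2.1 R₁ h₁ R₂ h₂ h₃).1,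
    fun R₁ h₁ R₂ h₂ h₃ => (h.2.1 R₁ h₁ R₂ h₂ h₃).2⟩

lemma weakDim_zero : WeakDim fun _ => 0 := ⟨by simp, by simp, by simp⟩

/-- For `R = 2 ^ (-m)` one has `R ^ (1 + φ R) = 2 ^ (-(m + gauge φ m))`. -/
noncomputable def gauge (φ : ℝ → ℝ) (m : ℕ) : ℝ := φ (2 ^ (-(m : ℝ))) * m

lemma two_mem {x : ℝ} (hx : 0 < x) : (2 : ℝ) ^ (-x) ∈ Ioo (0 : ℝ) 1 :=
  ⟨by positivity, Real.rpow_lt_one_of_one_lt_of_neg one_lt_two (by linarith)⟩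

lemma two_neg_nat (m : ℕ) : (2 : ℝ) ^ (-(m : ℝ)) = (2 ^ m)⁻¹ := by
  rw [Real.rpow_neg two_pos.le, Real.rpow_natCast]

section
variable {φ : ℝ → ℝ} (h : WeakDim φ)
include h

lemma WeakDim.exp_nonneg {x : ℝ} (hx : 0 < x) : 0 ≤ φ (2 ^ (-x)) := h.nonneg _ (two_mem hx)

lemma WeakDim.exp_mono {x y : ℝ} (hx : 0 < x) (hxy : x ≤ y) : φ (2 ^ (-y)) ≤ φ (2 ^ (-x)) :=
  h.mono _ (two_mem (hx.trans_le hxy)) _ (two_mem hx)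
    (Real.rpow_le_rpow_of_exponent_le one_le_two (by linarith))

lemma WeakDim.exp_mul {x y : ℝ} (hx : 0 < x) (hxy : x ≤ y) :
    φ (2 ^ (-x)) * x ≤ φ (2 ^ (-y)) * y := by
  have := h.mul_log _ (two_mem (hx.trans_le hxy)) _ (two_mem hx)
    (Real.rpow_le_rpow_of_exponent_le one_le_two (by linarith))
  have e : ∀ z : ℝ, Real.log (1 / 2 ^ (-z)) = z * Real.log 2 := fun z => by
    rw [one_div, ← Real.rpow_neg two_pos.le, neg_neg, Real.log_rpow two_pos]
  rw [e, e, ← mul_assoc, ← mul_assoc] at this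
  exact le_of_mul_le_mul_right this (Real.log_pos one_lt_two)

lemma WeakDim.gauge_nonneg (m : ℕ) : 0 ≤ gauge φ m := by
  rcases Nat.eq_zero_or_pos m with rfl | hm
  · simp [gauge]
  · exact mul_nonneg (h.exp_nonneg (by exact_mod_cast hm)) (by positivity)

lemma WeakDim.gauge_le {m : ℕ} {x : ℝ} (hx : 0 < x) (hmx : m ≤ x) :
    gauge φ m ≤ φ (2 ^ (-x)) * x := by
  rcases Nat.eq_zero_or_pos m with rfl | hm
  · simpa [gauge] using mul_nonneg (h.exp_nonneg hx) hx.le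
  · exact h.exp_mul (by exact_mod_cast hm) hmx

lemma WeakDim.le_gauge {m : ℕ} {x : ℝ} (hx : 0 < x) (hmx : m ≤ x) (hxm : x ≤ m + 1) :
    φ (2 ^ (-x)) * x ≤ gauge φ m + φ (2 ^ (-1 : ℝ)) := by
  rcases Nat.eq_zero_or_pos m with rfl | hm
  · have := h.exp_mul (y := 1) hx (by simpa using hxm)
    simpa [gauge] using this
  · have hm' : (1 : ℝ) ≤ m := by exact_mod_cast hm
    have h1 := h.exp_mono (x := m) (by linarith) hmx
    have h2 := h.exp_mono (x := 1) (y := m) one_pos hm'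
    have h3 := h.exp_nonneg (x := m) (by linarith)
    calc φ (2 ^ (-x)) * x ≤ φ (2 ^ (-(m : ℝ))) * x := by gcongr
      _ = gauge φ m + φ (2 ^ (-(m : ℝ))) * (x - m) := by rw [gauge]; ring
      _ ≤ gauge φ m + φ (2 ^ (-(m : ℝ))) * 1 := by gcongr; linarith
      _ ≤ _ := by rw [mul_one]; gcongr

lemma WeakDim.gauge : Gauge (gauge φ) := by
  refine ⟨h.gauge_nonneg, fun m m' hm => ?_, fun m m' hm => ?_⟩
  · rcases Nat.eq_zero_or_pos m' with rfl | hm'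
    · rw [Nat.le_zero.1 hm]
    · exact h.gauge_le (by exact_mod_cast hm') (by exact_mod_cast hm)
  · rcases Nat.eq_zero_or_pos m with rfl | hm'
    · simp [MoranGeneric.gauge]
    · have := h.exp_mono (x := m) (y := m') (by exact_mod_cast hm') (by exact_mod_cast hm)
      calc MoranGeneric.gauge φ m' * m = φ (2 ^ (-(m' : ℝ))) * (m * m') := by
            rw [MoranGeneric.gauge]; ring
        _ ≤ φ (2 ^ (-(m : ℝ))) * (m * m') := by gcongr
        _ = _ := by rw [MoranGeneric.gauge]; ring

end

lemma tendsto_gauge {φ : ℝ → ℝ} (h : IsDimFunction φ) : Tendsto (gauge φ) atTop atTop := by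
  have h1 : Tendsto (fun m : ℕ => (2 : ℝ) ^ (-(m : ℝ))) atTop (nhdsWithin 0 (Ioo 0 1)) := by
    refine tendsto_nhdsWithin_iff.2 ⟨?_, ?_⟩
    · simp_rw [two_neg_nat]
      exact tendsto_inv_atTop_zero.comp (tendsto_pow_atTop_atTop_of_one_lt one_lt_two)
    · filter_upwards [eventually_ge_atTop 1] with m hm
      exact two_mem (by exact_mod_cast hm)
  have h2 := (h.2.2.comp h1).atTop_div_const (Real.log_pos one_lt_two)
  refine h2.congr fun m => ?_
  have : Real.log 2 ≠ 0 := (Real.log_pos one_lt_two).ne'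
  simp only [Function.comp, gauge]
  rw [one_div, ← Real.rpow_neg two_pos.le, neg_neg, Real.log_rpow two_pos]
  field_simp

/-- The condition on `s` in the definition of `phiAssouad`. -/
def PhiCond (E : Set (Fin d → ℝ)) (φ : ℝ → ℝ) (s : ℝ) : Prop :=
  ∃ C : ℝ, 0 < C ∧ ∀ R ∈ Set.Ioo (0:ℝ) 1, ∀ x ∈ E,
    coverNumber (E ∩ Metric.ball x R) (R ^ (1 + φ R)) ≤ ENNReal.ofReal (C * R ^ (-(φ R * s)))

/-- The condition on `s` in the definition of `phiAssouadUpper`. -/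
def UpCond (E : Set (Fin d → ℝ)) (φ : ℝ → ℝ) (s : ℝ) : Prop :=
  ∃ C : ℝ, 0 < C ∧ ∀ r R : ℝ, 0 < r → r ≤ R ^ (1 + φ R) →
    R ^ (1 + φ R) ≤ R → R < 1 → ∀ x ∈ E,
    coverNumber (E ∩ Metric.ball x R) r ≤ ENNReal.ofReal (C * (R / r) ^ s)

lemma exists_exp {R : ℝ} (h0 : 0 < R) : ∃ x : ℝ, R = 2 ^ (-x) :=
  ⟨-Real.logb 2 R, by rw [neg_neg, Real.rpow_logb two_pos (by norm_num) h0]⟩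

lemma exists_exp' {R : ℝ} (h0 : 0 < R) (h1 : R < 1) : ∃ x : ℝ, 0 < x ∧ R = 2 ^ (-x) :=
  ⟨-Real.logb 2 R, by simpa using Real.logb_neg one_lt_two h0 h1,
    by rw [neg_neg, Real.rpow_logb two_pos (by norm_num) h0]⟩

variable {φ : ℝ → ℝ} {s : ℝ}

theorem phiCond_iff (hE : E.Nonempty) (h : WeakDim φ) (hs : 0 ≤ s) :
    PhiCond E φ s ↔ PhiBound (prof E) (gauge φ) s := by
  have hP := isProfile_prof hE
  constructor
  · rintro ⟨C, hC0, hC⟩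
    obtain ⟨c, rfl⟩ := exists_exp hC0
    refine phiBound_of_eventually hP h.gauge hs (K := 1) (C := 2 * d + (-c + s)) fun m hm _ => ?_
    have hm' : (0 : ℝ) < m := by exact_mod_cast hm
    have h1 : prof E m ⌊gauge φ m⌋₊ ≤ 2 * d + (-c + gauge φ m * s) := by
      refine prof_le_of_cover hE fun y hy => ?_
      have h2 := hC _ (two_mem hm') y hy
      rw [← Real.rpow_mul two_pos.le, ← Real.rpow_mul two_pos.le, ← Real.rpow_add two_pos] at h2
      rw [← two_neg_nat, ← two_neg_nat]
      refine (coverNumber_anti _ (Real.rpow_le_rpow_of_exponent_le one_le_two ?_)).trans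
        (h2.trans_eq ?_)
      · have := h.gauge.floor_le m
        rw [gauge] at this
        push_cast
        rw [gauge]
        linarith
      · congr 2; rw [gauge]; ring
    have h3 := Nat.lt_floor_add_one (gauge φ m)
    nlinarith
  · rintro ⟨C, hC⟩
    obtain ⟨k, hk⟩ := exists_nat_ge (2 + φ (2 ^ (-1 : ℝ)))
    refine ⟨2 ^ (2 * d + (C + d * k) : ℝ), by positivity, fun R hR y hy => ?_⟩
    obtain ⟨x, hx, rfl⟩ := exists_exp' hR.1 hR.2
    rw [← Real.rpow_mul two_pos.le, ← Real.rpow_mul two_pos.le, ← Real.rpow_add two_pos]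
    have f1 := Nat.floor_le hx.le
    have f2 := (Nat.lt_floor_add_one x).le
    have f3 := h.gauge_le hx f1
    have f4 := h.le_gauge hx f1 f2
    have f5 := h.gauge.floor_le ⌊x⌋₊
    have f6 := Nat.lt_floor_add_one (gauge φ ⌊x⌋₊)
    refine coverNumber_le_two hE y (m := ⌊x⌋₊) (w := ⌊gauge φ ⌊x⌋₊⌋₊ + k) ?_ ?_ ?_
    · rw [← two_neg_nat]
      exact Real.rpow_le_rpow_of_exponent_le one_le_two (by linarith)
    · rw [← two_neg_nat]
      refine Real.rpow_le_rpow_of_exponent_le one_le_two ?_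
      push_cast
      linarith
    · have g1 := hP.sub ⌊x⌋₊ ⌊gauge φ ⌊x⌋₊⌋₊ k
      have g2 := hP.le (⌊x⌋₊ + ⌊gauge φ ⌊x⌋₊⌋₊) k
      have g3 := hC ⌊x⌋₊
      have g4 : s * (⌊gauge φ ⌊x⌋₊⌋₊ : ℝ) ≤ s * (φ (2 ^ (-x)) * x) := by gcongr; linarith
      linarith

theorem upCond_iff (hE : E.Nonempty) (h : WeakDim φ) (hs : 0 ≤ s) :
    UpCond E φ s ↔ UpBound (prof E) (gauge φ) s := by
  have hP := isProfile_prof hE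
  constructor
  · rintro ⟨C, hC0, hC⟩
    obtain ⟨c, rfl⟩ := exists_exp hC0
    refine upBound_of_eventually hP hs (K := 1) (C := 2 * d + (-c + s)) fun m hm w _ hw => ?_
    have hm' : (0 : ℝ) < m := by exact_mod_cast hm
    have h1 : prof E m w ≤ 2 * d + (-c + (w + 1) * s) := by
      refine prof_le_of_cover hE fun y hy => ?_
      have f2 := Nat.lt_floor_add_one (gauge φ m)
      have f3 : (⌊gauge φ m⌋₊ : ℝ) ≤ w := by exact_mod_cast hw
      have f4 := h.gauge_nonneg m
      have f5 : -(m : ℝ) * (1 + φ (2 ^ (-(m : ℝ)))) = -m - gauge φ m := by rw [gauge]; ring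
      have h2 := hC (2 ^ (-(m + w + 1 : ℝ))) (2 ^ (-(m : ℝ))) (by positivity)
        (by
          rw [← Real.rpow_mul two_pos.le, f5]
          exact Real.rpow_le_rpow_of_exponent_le one_le_two (by linarith))
        (by
          rw [← Real.rpow_mul two_pos.le, f5]
          exact Real.rpow_le_rpow_of_exponent_le one_le_two (by linarith))
        (two_mem hm').2 y hy
      rw [← Real.rpow_sub two_pos, ← Real.rpow_mul two_pos.le, ← Real.rpow_add two_pos] at h2
      rw [← two_neg_nat, ← two_neg_nat]
      refine (coverNumber_anti _ (Real.rpow_le_rpow_of_exponent_le one_le_two ?_)).trans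
        (h2.trans_eq ?_)
      · push_cast; linarith
      · congr 2; ring
    linarith
  · rintro ⟨C, hC⟩
    refine ⟨2 ^ (2 * d + (C + 2 * s) : ℝ), by positivity, fun r R hr hrR hRR hR1 p hp => ?_⟩
    obtain ⟨x, hx, rfl⟩ := exists_exp' (hr.trans_le (hrR.trans hRR)) hR1
    obtain ⟨y, rfl⟩ := exists_exp hr
    rw [← Real.rpow_mul two_pos.le, Real.rpow_le_rpow_left_iff one_lt_two] at hrR
    rw [← Real.rpow_sub two_pos, ← Real.rpow_mul two_pos.le, ← Real.rpow_add two_pos]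
    have f1 := Nat.floor_le hx.le
    have f2 := (Nat.lt_floor_add_one x).le
    have f3 := h.gauge_le hx f1
    have f5 := h.gauge.floor_le ⌊x⌋₊
    have f6 := h.gauge_nonneg ⌊x⌋₊
    have f7 := Nat.le_ceil y
    have f8 := Nat.ceil_lt_add_one (a := y) (by nlinarith)
    have f9 : ⌊x⌋₊ + ⌊gauge φ ⌊x⌋₊⌋₊ ≤ ⌈y⌉₊ := by
      have : (⌊x⌋₊ : ℝ) + ⌊gauge φ ⌊x⌋₊⌋₊ ≤ ⌈y⌉₊ := by linarith
      exact_mod_cast this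
    obtain ⟨w, hw⟩ := Nat.exists_eq_add_of_le ((Nat.le_add_right _ _).trans f9)
    have hw' : (⌈y⌉₊ : ℝ) = ⌊x⌋₊ + w := by exact_mod_cast hw
    refine coverNumber_le_two hE p (m := ⌊x⌋₊) (w := w) ?_ ?_ ?_
    · rw [← two_neg_nat]
      exact Real.rpow_le_rpow_of_exponent_le one_le_two (by linarith)
    · rw [← two_neg_nat]
      refine Real.rpow_le_rpow_of_exponent_le one_le_two ?_
      push_cast
      linarith
    · have g3 := hC ⌊x⌋₊ w (by omega)
      have g4 : s * (w : ℝ) ≤ s * (y - x + 2) := by gcongr; linarith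
      linarith

/-- Conditions that imply each other up to an arbitrarily small loss in the exponent define the same
dimension. This includes the case of empty sets, where both infima have the value `0`. -/
lemma sInf_eq_of_shift {P Q : ℝ → Prop} (hPQ : ∀ s ε, 0 ≤ s → 0 < ε → P s → Q (s + ε))
    (hQP : ∀ s ε, 0 ≤ s → 0 < ε → Q s → P (s + ε)) :
    sInf {s : ℝ | 0 ≤ s ∧ P s} = sInf {s : ℝ | 0 ≤ s ∧ Q s} := by
  have key : ∀ {P Q : ℝ → Prop}, (∀ s ε, 0 ≤ s → 0 < ε → P s → Q (s + ε)) →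
      (∀ s ε, 0 ≤ s → 0 < ε → Q s → P (s + ε)) →
      sInf {s : ℝ | 0 ≤ s ∧ P s} ≤ sInf {s : ℝ | 0 ≤ s ∧ Q s} := by
    intro P Q hPQ hQP
    have hb : ∀ P : ℝ → Prop, BddBelow {s : ℝ | 0 ≤ s ∧ P s} := fun P => ⟨0, fun s hs => hs.1⟩
    rcases {s : ℝ | 0 ≤ s ∧ Q s}.eq_empty_or_nonempty with he | hne
    · have : {s : ℝ | 0 ≤ s ∧ P s} = ∅ := by
        refine eq_empty_of_forall_notMem fun s hs => ?_
        have : s + 1 ∈ {s : ℝ | 0 ≤ s ∧ Q s} := ⟨by linarith [hs.1], hPQ s 1 hs.1 one_pos hs.2⟩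
        rw [he] at this; exact this
      rw [he, this]
    · refine le_csInf hne fun s hs => le_of_forall_pos_le_add fun ε hε => ?_
      exact csInf_le (hb P) ⟨by linarith [hs.1], hQP s ε hs.1 hε hs.2⟩
  exact le_antisymm (key hPQ hQP) (key hQP hPQ)

variable {F M : Set (Fin d → ℝ)}

theorem phiAssouadUpper_eq (hF : F.Nonempty) (hM : M.Nonempty)
    (hS : Shadow (largeExp (prof F)) (prof F) (prof M)) (h : WeakDim φ) :
    phiAssouadUpper F φ = phiAssouadUpper M φ := by
  refine sInf_eq_of_shift (P := UpCond F φ) (Q := UpCond M φ) (fun s ε hs hε hs' => ?_)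
    (fun s ε hs hε hs' => ?_)
  · rw [upCond_iff hM h (by positivity)]
    exact UpBound.of_shadow (isProfile_prof hF) (isProfile_prof hM) hS h.gauge hs hε
      ((upCond_iff hF h hs).1 hs')
  · rw [upCond_iff hF h (by positivity)]
    exact UpBound.of_shadow' (isProfile_prof hF) (isProfile_prof hM) hS h.gauge hs hε
      ((upCond_iff hM h hs).1 hs')

theorem phiAssouad_eq (hF : F.Nonempty) (hM : M.Nonempty)
    (hS : Shadow (largeExp (prof F)) (prof F) (prof M)) (h : IsDimFunction φ) :
    phiAssouad F φ = phiAssouad M φ := by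
  have h' := h.weakDim
  refine sInf_eq_of_shift (P := PhiCond F φ) (Q := PhiCond M φ) (fun s ε hs hε hs' => ?_)
    (fun s ε hs hε hs' => ?_)
  · rw [phiCond_iff hM h' (by positivity)]
    exact PhiBound.of_shadow (isProfile_prof hF) (isProfile_prof hM) hS h'.gauge hs hε
      ((phiCond_iff hF h' hs).1 hs')
  · rw [phiCond_iff hF h' (by positivity)]
    exact PhiBound.of_shadow' (isProfile_prof hF) (isProfile_prof hM) hS h'.gauge
      (tendsto_gauge h) hs hε ((phiCond_iff hM h' hs).1 hs')

lemma assouadDim_eq_upper (E : Set (Fin d → ℝ)) : assouadDim E = phiAssouadUpper E fun _ => 0 := by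
  simp [assouadDim, phiAssouadUpper]

end

section
/-! ### Moran sets with dyadic ratios -/

/-- The contraction ratios of the Moran set with construction levels `p 0, p 1, …`: its cubes of generation
`n` have side `2 ^ (-p n)` when `p 0 = 0`. -/
noncomputable def ratio (p : ℕ → ℕ) (n : ℕ) : ℝ := 2 ^ p n / 2 ^ p (n + 1)

/-- Distance between the left endpoints of the two children of an interval of generation `i`. -/
noncomputable def gap (p : ℕ → ℕ) (i : ℕ) : ℝ := (2 ^ p i)⁻¹ - (2 ^ p (i + 1))⁻¹

/-- The coordinates of the lower corner of the cube of generation `n` with address `b`. -/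
noncomputable def corner {d : ℕ} (p : ℕ → ℕ) (b : ℕ → Fin d → Bool) (n : ℕ) (j : Fin d) : ℝ :=
  ∑ i ∈ Finset.range n, if b i j then gap p i else 0

variable {d : ℕ} {p : ℕ → ℕ}

lemma corner_succ (b : ℕ → Fin d → Bool) (n : ℕ) (j : Fin d) :
    corner p b (n + 1) j = corner p b n j + if b n j then gap p n else 0 :=
  Finset.sum_range_succ _ _

/-- The composition of maps along `l`, started at generation `k`, in coordinates. The factor `2 ^ p k`
rescales a cube of generation `k` to the unit cube. -/
lemma moranComp_eq (p : ℕ → ℕ) (l : List (Fin d → Bool)) (y : Fin d → ℝ) (j : Fin d) : ∀ k,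
    moranComp d (ratio p) k l y j = 2 ^ p k * ((∑ i ∈ Finset.range l.length,
      if l.getD i (fun _ => false) j then gap p (k + i) else 0) + y j / 2 ^ p (k + l.length)) := by
  induction l with
  | nil => intro k; simp [moranComp]; field_simp
  | cons b l ih =>
    intro k
    have h1 := ih (k + 1)
    rw [moranComp, moranMap, h1, List.length_cons, Finset.sum_range_succ']
    simp only [List.getD_cons_zero, List.getD_cons_succ, add_zero]
    have e : ∀ i, k + 1 + i = k + (i + 1) := fun i => by ring
    simp only [e]
    rw [ratio]
    split_ifs
    · rw [gap]; field_simp; ring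
    · field_simp; ring

theorem mem_moranSet_iff (hp0 : p 0 = 0) {x : Fin d → ℝ} : x ∈ moranSet d (ratio p) ↔
    ∀ n, ∃ b : ℕ → Fin d → Bool, ∃ y ∈ Icc (0 : Fin d → ℝ) 1, ∀ j,
      x j = corner p b n j + y j / 2 ^ p n := by
  simp only [moranSet, mem_iInter, mem_iUnion, mem_ofPred_eq, mem_image, exists_prop]
  refine forall_congr' fun n => ⟨?_, ?_⟩
  · rintro ⟨l, rfl, y, hy, rfl⟩
    refine ⟨fun i => l.getD i fun _ => false, y, hy, fun j => ?_⟩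
    rw [moranComp_eq]
    simp [hp0, corner]
  · rintro ⟨b, y, hy, h⟩
    refine ⟨(List.range n).map b, by simp, y, hy, ?_⟩
    funext j
    rw [moranComp_eq, h j, corner]
    simp only [hp0, pow_zero, one_mul, List.length_map, List.length_range, zero_add]
    congr 1
    refine Finset.sum_congr rfl fun i hi => ?_
    have hi' := Finset.mem_range.1 hi
    simp [List.getD_eq_getElem?_getD, hi']

section
variable (hp : StrictMono p)
include hp

lemma gap_pos (i : ℕ) : 0 < gap p i := by
  rw [gap, sub_pos]
  exact inv_strictAnti₀ (by positivity) (pow_lt_pow_right₀ one_lt_two (hp (Nat.lt_succ_self i)))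

lemma ratio_mem (n : ℕ) : 0 < ratio p n ∧ ratio p n ≤ 1 / 2 := by
  refine ⟨by unfold ratio; positivity, ?_⟩
  rw [ratio, div_le_div_iff₀ (by positivity) two_pos, one_mul, ← pow_succ]
  exact pow_le_pow_right₀ one_le_two (hp (Nat.lt_succ_self n))

lemma corner_mono (b : ℕ → Fin d → Bool) (j : Fin d) {n N : ℕ} (h : n ≤ N) :
    corner p b n j ≤ corner p b N j := by
  refine Finset.sum_le_sum_of_subset_of_nonneg (Finset.range_mono h) fun i _ _ => ?_
  split_ifs
  · exact (gap_pos hp i).le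
  · exact le_rfl

lemma corner_sub_le (b : ℕ → Fin d → Bool) (j : Fin d) {n N : ℕ} (h : n ≤ N) :
    corner p b N j - corner p b n j ≤ (2 ^ p n)⁻¹ - (2 ^ p N)⁻¹ := by
  induction N, h using Nat.le_induction with
  | base => simp
  | succ N _ ih =>
    have := (gap_pos hp N).le
    rw [corner_succ]
    rw [gap] at *
    split_ifs <;> linarith

lemma corner_mem (hp0 : p 0 = 0) (b : ℕ → Fin d → Bool) (n : ℕ) (hb : ∀ i ≥ n, b i = fun _ => false) :
    corner p b n ∈ moranSet d (ratio p) := by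
  rw [mem_moranSet_iff hp0]
  intro N
  refine ⟨b, fun j => 2 ^ p N * (corner p b n j - corner p b N j), ?_, fun j => by field_simp; ring⟩
  rcases le_total N n with h | h
  · refine ⟨fun j => ?_, fun j => ?_⟩
    · have := corner_mono hp b j h
      exact mul_nonneg (by positivity) (by linarith)
    · have := corner_sub_le hp b j h
      have h2 : (0 : ℝ) < (2 ^ p n)⁻¹ := by positivity
      calc 2 ^ p N * (corner p b n j - corner p b N j) ≤ (2 : ℝ) ^ p N * (2 ^ p N)⁻¹ := by
            gcongr; linarith
        _ = 1 := by field_simp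
  · have : ∀ j, corner p b N j = corner p b n j := fun j => by
      symm
      refine Finset.sum_subset (Finset.range_mono h) fun i _ hi => ?_
      rw [Finset.mem_range, not_lt] at hi
      simp [hb i hi]
    simp only [this, sub_self, mul_zero]
    exact ⟨le_rfl, fun _ => zero_le_one⟩

/-- Corners of generation `n` lie on the grid of mesh `2 ^ (-p n)`. -/
lemma corner_int (b : ℕ → Fin d → Bool) (j : Fin d) (n : ℕ) :
    ∃ k : ℤ, corner p b n j = k / 2 ^ p n := by
  induction n with
  | zero => exact ⟨0, by simp [corner]⟩
  | succ n ih =>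
    obtain ⟨k, hk⟩ := ih
    obtain ⟨g, hg⟩ := Nat.exists_eq_add_of_le (hp (Nat.lt_succ_self n)).le
    rw [corner_succ, hk]
    refine ⟨k * 2 ^ g + if b n j then 2 ^ g - 1 else 0, ?_⟩
    rw [gap]
    simp only [Nat.succ_eq_add_one] at hg
    rw [hg, pow_add]
    split_ifs
    · push_cast; field_simp
    · push_cast; field_simp; ring

lemma corner_inj (b b' : ℕ → Fin d → Bool) (j : Fin d) (n : ℕ)
    (h : corner p b n j = corner p b' n j) : ∀ i < n, b i j = b' i j := by
  -- the last digits agree: otherwise the corners of the previous stage, which are multiples of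
  -- `2 ^ (- p n)`, would differ by `gap p n`, which lies strictly between `0` and `2 ^ (- p n)`
  have key : ∀ (b b' : ℕ → Fin d → Bool) (n : ℕ), corner p b (n + 1) j = corner p b' (n + 1) j →
      b n j = true → b' n j = true := by
    intro b b' n h h1
    by_contra h2
    rw [corner_succ, corner_succ, if_pos h1, if_neg h2] at h
    obtain ⟨k, hk⟩ := corner_int hp b j n
    obtain ⟨k', hk'⟩ := corner_int hp b' j n
    rw [hk, hk'] at h
    have h3 : gap p n = ((k' - k : ℤ) : ℝ) / 2 ^ p n := by
      push_cast; rw [sub_div]; linarith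
    have h4 := gap_pos hp n
    have h5 : gap p n < 1 / 2 ^ p n := by
      have : (0 : ℝ) < (2 ^ p (n + 1))⁻¹ := by positivity
      rw [gap, one_div]; linarith
    rw [h3, div_lt_div_iff_of_pos_right (by positivity)] at h5
    rw [h3, div_pos_iff_of_pos_right (by positivity)] at h4
    have h6 : (k' - k : ℤ) < 1 := by exact_mod_cast h5
    have h7 : (0 : ℤ) < k' - k := by exact_mod_cast h4
    omega
  induction n with
  | zero => intro i hi; omega
  | succ n ih =>
    have hn : b n j = b' n j := Bool.eq_iff_iff.2 ⟨key b b' n h, key b' b n h.symm⟩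
    rw [corner_succ, corner_succ, hn, add_left_inj] at h
    intro i hi
    rcases Nat.lt_succ_iff_lt_or_eq.1 hi with hi | rfl
    · exact ih h i hi
    · exact hn

/-- The `2 ^ (d * k)` corners whose address is zero except at the generations `i₀, …, i₀ + k - 1` lie in a single
cell of level `m` and in distinct cells of level `p (i₀ + k)`. -/
lemma le_num_moran (hp0 : p 0 = 0) {m w i₀ k : ℕ} (h0 : m ≤ p i₀) (h1 : p (i₀ + k) ≤ m + w) :
    2 ^ (d * k) ≤ num (moranSet d (ratio p)) m w := by
  classical
  set b : (Fin k → Fin d → Bool) → ℕ → Fin d → Bool := fun τ i =>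
    if h : i₀ ≤ i ∧ i - i₀ < k then τ ⟨i - i₀, h.2⟩ else fun _ => false with hb
  have hbt : ∀ τ (i : Fin k), b τ (i₀ + i) = τ i := fun τ i => by
    simp [hb]
  have hmem : ∀ τ, corner p (b τ) (i₀ + k) ∈ moranSet d (ratio p) := fun τ =>
    corner_mem hp hp0 _ _ fun i hi => by
      rw [hb]; simp only; rw [dif_neg]; omega
  have h00 : ∀ τ j, corner p (b τ) i₀ j = 0 := fun τ j => by
    refine Finset.sum_eq_zero fun i hi => ?_
    rw [Finset.mem_range] at hi
    have : b τ i = fun _ => false := by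
      rw [hb]; simp only; rw [dif_neg]; omega
    simp [this]
  set f : (Fin k → Fin d → Bool) → Fin d → ℤ := fun τ => cell (m + w) (corner p (b τ) (i₀ + k))
  have hinj : Function.Injective f := by
    intro τ τ' h
    have hj : ∀ j, corner p (b τ) (i₀ + k) j = corner p (b τ') (i₀ + k) j := fun j => by
      have hfl : ∀ τ, ((f τ j : ℤ) : ℝ) = 2 ^ (m + w) * corner p (b τ) (i₀ + k) j := fun τ => by
        obtain ⟨z, hz⟩ := corner_int hp (b τ) j (i₀ + k)
        obtain ⟨g, hg⟩ := Nat.exists_eq_add_of_le h1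
        have : (2 : ℝ) ^ (m + w) * corner p (b τ) (i₀ + k) j = ((2 ^ g * z : ℤ) : ℝ) := by
          rw [hz, hg, pow_add]; push_cast; field_simp
        simp only [f, cell]
        rw [this, Int.floor_intCast]
      have e := hfl τ
      rw [h, hfl τ'] at e
      exact (mul_left_cancel₀ (by positivity) e).symm
    funext i j
    rw [← hbt τ i, ← hbt τ' i]
    exact corner_inj hp _ _ j _ (hj j) _ (by omega)
  have hsub : range f ⊆ kids (moranSet d (ratio p)) m (m + w) 0 := by
    rintro _ ⟨τ, rfl⟩
    refine ⟨_, hmem τ, ?_, rfl⟩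
    funext j
    have a1 := corner_mono hp (b τ) j (Nat.le_add_right i₀ k)
    have a2 := corner_sub_le hp (b τ) j (Nat.le_add_right i₀ k)
    rw [h00] at a1 a2
    have a3 : ((2 : ℝ) ^ p i₀)⁻¹ ≤ (2 ^ m)⁻¹ :=
      inv_anti₀ (by positivity) (pow_le_pow_right₀ one_le_two h0)
    have a4 : (0 : ℝ) < (2 ^ p (i₀ + k))⁻¹ := by positivity
    simp only [cell, Pi.zero_apply]
    rw [Int.floor_eq_zero_iff]
    refine ⟨by positivity, ?_⟩
    calc (2 : ℝ) ^ m * corner p (b τ) (i₀ + k) j < 2 ^ m * (2 ^ m)⁻¹ := by gcongr; linarith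
      _ = 1 := by field_simp
  have hcard := ncard_le_ncard hsub (kids_finite m w 0)
  rw [← image_univ, ncard_image_of_injective _ hinj, ncard_univ, Nat.card_eq_fintype_card] at hcard
  simp only [Fintype.card_fun, Fintype.card_bool, Fintype.card_fin] at hcard
  rw [pow_mul]
  exact hcard.trans (le_num m w 0)

/-- A cell of level `m + w` meeting the set is determined, within a cell of level `m`, by the digits of the
generations `i₀, …, i₀ + k - 1` and one extra choice in each coordinate at either end, since the cubes of
the construction may straddle neighbouring cells. -/
lemma num_moran_le (hp0 : p 0 = 0) {m w i₀ k : ℕ} (h0 : p i₀ ≤ m) (h1 : m + w ≤ p (i₀ + k)) :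
    num (moranSet d (ratio p)) m w ≤ 2 ^ (d * (k + 2)) := by
  classical
  refine num_le_of fun c => ?_
  let X := (Fin d → Bool) × (Fin k → Fin d → Bool) × (Fin d → Bool)
  let g : X → Fin d → ℤ := fun t j =>
    ⌊(2 : ℝ) ^ (m + w) * (((c j / 2 ^ (m - p i₀) - if t.1 j then 1 else 0 : ℤ) : ℝ) / 2 ^ p i₀ +
      ∑ i : Fin k, if t.2.1 i j then gap p (i₀ + i) else 0)⌋ + if t.2.2 j then 1 else 0
  have hsub : kids (moranSet d (ratio p)) m (m + w) c ⊆ range g := by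
    rintro _ ⟨x, hx, rfl, rfl⟩
    obtain ⟨b, y, hy, hxy⟩ := (mem_moranSet_iff hp0).1 hx (i₀ + k)
    have hsplit : ∀ j, corner p b (i₀ + k) j = corner p b i₀ j +
        ∑ i : Fin k, if b (i₀ + i) j then gap p (i₀ + i) else 0 := fun j => by
      rw [corner, Finset.sum_range_add, ← corner]
      congr 1
      exact (Fin.sum_univ_eq_sum_range (fun i => if b (i₀ + i) j then gap p (i₀ + i) else 0) k).symm
    have hint := fun j => corner_int hp b j i₀
    choose z hz using hint
    have hq : ∀ j, cell m x j / 2 ^ (m - p i₀) = ⌊2 ^ p i₀ * x j⌋ := fun j => by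
      have := cell_div (p i₀) (m - p i₀) x j
      rwa [Nat.add_sub_cancel' h0] at this
    have hfl : ∀ {u : ℝ} {v : ℝ}, u ≤ v → v ≤ u + 1 → ⌊v⌋ = ⌊u⌋ ∨ ⌊v⌋ = ⌊u⌋ + 1 := by
      intro u v huv hvu
      have h1 := Int.floor_mono huv
      have h2 := Int.floor_mono hvu
      rw [Int.floor_add_one] at h2
      omega
    have hy0 : ∀ j, 0 ≤ y j := hy.1
    have hy1 : ∀ j, y j ≤ 1 := hy.2
    have hA : ∀ j, ⌊2 ^ p i₀ * x j⌋ = z j ∨ ⌊2 ^ p i₀ * x j⌋ = z j + 1 := fun j => by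
      have e1 := corner_mono hp b j (Nat.le_add_right i₀ k)
      have e2 := corner_sub_le hp b j (Nat.le_add_right i₀ k)
      have e3 : 0 ≤ y j / 2 ^ p (i₀ + k) := div_nonneg (hy0 j) (by positivity)
      have e4 : y j / 2 ^ p (i₀ + k) ≤ (2 ^ p (i₀ + k))⁻¹ := by
        rw [inv_eq_one_div]; gcongr; exact hy1 j
      have e5 : (z j : ℝ) = 2 ^ p i₀ * corner p b i₀ j := by rw [hz]; field_simp
      have := hfl (u := z j) (v := 2 ^ p i₀ * x j)
        (by rw [e5, hxy j]; exact mul_le_mul_of_nonneg_left (by linarith) (by positivity))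
        (by
          calc (2 : ℝ) ^ p i₀ * x j ≤ 2 ^ p i₀ * (corner p b i₀ j + (2 ^ p i₀)⁻¹) := by
                rw [hxy j]; exact mul_le_mul_of_nonneg_left (by linarith) (by positivity)
            _ = z j + 1 := by rw [e5]; field_simp)
      rwa [Int.floor_intCast] at this
    have hB : ∀ j, cell (m + w) x j = ⌊(2 : ℝ) ^ (m + w) * corner p b (i₀ + k) j⌋ ∨
        cell (m + w) x j = ⌊(2 : ℝ) ^ (m + w) * corner p b (i₀ + k) j⌋ + 1 := fun j => by
      have e3 : 0 ≤ y j / 2 ^ p (i₀ + k) := div_nonneg (hy0 j) (by positivity)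
      have e4 : y j / 2 ^ p (i₀ + k) ≤ (2 ^ (m + w))⁻¹ := by
        rw [inv_eq_one_div]
        gcongr
        · exact hy1 j
        · exact one_le_two
      refine hfl (by rw [hxy j]; exact mul_le_mul_of_nonneg_left (by linarith) (by positivity)) ?_
      calc (2 : ℝ) ^ (m + w) * x j ≤ 2 ^ (m + w) * (corner p b (i₀ + k) j + (2 ^ (m + w))⁻¹) := by
            rw [hxy j]; exact mul_le_mul_of_nonneg_left (by linarith) (by positivity)
        _ = _ := by field_simp
    refine ⟨(fun j => decide (⌊2 ^ p i₀ * x j⌋ = z j + 1), fun i => b (i₀ + i),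
      fun j => decide (cell (m + w) x j = ⌊(2 : ℝ) ^ (m + w) * corner p b (i₀ + k) j⌋ + 1)), ?_⟩
    funext j
    simp only [g, hq, decide_eq_true_eq]
    have e1 : (⌊2 ^ p i₀ * x j⌋ - if ⌊2 ^ p i₀ * x j⌋ = z j + 1 then 1 else 0 : ℤ) = z j := by
      rcases hA j with h | h
      · rw [if_neg (by omega), h, sub_zero]
      · rw [if_pos h, h]; ring
    rw [e1, ← hz, ← hsplit]
    rcases hB j with h | h
    · rw [if_neg (by omega), h, add_zero]
    · rw [if_pos h, h]
  refine (ncard_le_ncard hsub (finite_range g)).trans ?_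
  rw [← image_univ]
  refine (ncard_image_le finite_univ).trans_eq ?_
  rw [ncard_univ, Nat.card_eq_fintype_card]
  simp only [X, Fintype.card_prod, Fintype.card_fun, Fintype.card_bool, Fintype.card_fin]
  ring

end

end

section
/-! ### Moran sets with prescribed rates -/

lemma sqrt_step (n : ℕ) : Nat.sqrt n ≤ Nat.sqrt (n + 1) ∧ Nat.sqrt (n + 1) ≤ Nat.sqrt n + 1 :=
  ⟨Nat.sqrt_le_sqrt (Nat.le_succ n), Nat.sqrt_succ_le_succ_sqrt n⟩

/-- A sequence of levels `p` whose counting function `cnt` has almost the increments of `f`. The levels are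
`0` and those at which `f` or `⌊√n⌋` increases. The square roots make the sequence infinite even when `f` is
bounded, at negligible density. Here `cnt n` is the number of levels that are at most `n`. -/
lemma exists_positions {f : ℕ → ℕ} (h0 : ∀ n, f n ≤ f (n + 1)) (h1 : ∀ n, f (n + 1) ≤ f n + 1) :
    ∃ p cnt : ℕ → ℕ, StrictMono p ∧ p 0 = 0 ∧ (∀ n, 1 ≤ cnt n) ∧
      (∀ n, p (cnt n - 1) ≤ n ∧ n ≤ p (cnt n)) ∧
      ∀ m w, f (m + w) + cnt m ≤ cnt (m + w) + f m ∧
        cnt (m + w) + f m + Nat.sqrt m ≤ f (m + w) + cnt m + Nat.sqrt (m + w) := by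
  classical
  let P : ℕ → Prop := fun n => n = 0 ∨ f (n - 1) < f n ∨ Nat.sqrt (n - 1) < Nat.sqrt n
  have hP0 : P 0 := Or.inl rfl
  have hinf : {n | P n}.Infinite := by
    refine infinite_of_forall_exists_gt fun k => ⟨(k + 1) * (k + 1), ?_, by nlinarith⟩
    refine Or.inr (Or.inr ?_)
    rw [Nat.sqrt_eq, Nat.sqrt_lt]
    have : 0 < (k + 1) * (k + 1) := by positivity
    omega
  have hc1 : ∀ n, 1 ≤ Nat.count P (n + 1) := fun n => by
    have := Nat.count_monotone P (show 1 ≤ n + 1 by omega)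
    rwa [Nat.count_succ, Nat.count_zero, if_pos hP0] at this
  refine ⟨Nat.nth P, fun n => Nat.count P (n + 1), Nat.nth_strictMono hinf, Nat.nth_zero_of_zero hP0,
    hc1, fun n => ⟨?_, ?_⟩, fun m w => ?_⟩ <;> beta_reduce
  · exact Nat.lt_succ_iff.1 (Nat.nth_lt_of_lt_count (Nat.sub_lt (hc1 n) one_pos))
  · exact (Nat.le_succ n).trans (Nat.le_nth_count hinf _)
  · induction w with
    | zero => simp [add_comm]
    | succ w ih =>
      have e : m + (w + 1) = m + w + 1 := rfl
      have hs := sqrt_step (m + w)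
      have hf0 := h0 (m + w)
      have hf1 := h1 (m + w)
      rw [e, Nat.count_succ P (m + w + 1)]
      by_cases hP : P (m + w + 1)
      · rw [if_pos hP]
        have : f (m + w) < f (m + w + 1) ∨ Nat.sqrt (m + w) < Nat.sqrt (m + w + 1) := by
          rcases hP with h | h
          · omega
          · exact h
        omega
      · rw [if_neg hP]
        have : ¬ f (m + w) < f (m + w + 1) := fun h => hP (Or.inr (Or.inl h))
        omega

lemma sqrt_add_le (m w : ℕ) (hm : 0 < Nat.sqrt m) :
    (Nat.sqrt (m + w) : ℝ) - Nat.sqrt m ≤ 1 + w / Nat.sqrt m := by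
  have h1 : (Nat.sqrt (m + w) : ℝ) * Nat.sqrt (m + w) ≤ m + w := by
    exact_mod_cast Nat.sqrt_le (m + w)
  have h2 : (m : ℝ) < (Nat.sqrt m + 1) * (Nat.sqrt m + 1) := by
    exact_mod_cast Nat.lt_succ_sqrt m
  have hs : (0 : ℝ) < Nat.sqrt m := by exact_mod_cast hm
  by_contra! h
  set s := (Nat.sqrt m : ℝ)
  set t := (Nat.sqrt (m + w) : ℝ)
  have h3 : (w : ℝ) / s * s = w := by field_simp
  have h4 : (0 : ℝ) ≤ w / s := by positivity
  nlinarith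

/-- Every sequence of rates in `[0, d]` is realised by a homogeneous Moran set, up to an error `o(w)` in the
profile. -/
theorem exists_moran {d : ℕ} {a : ℕ → ℝ} (ha : ∀ n, 0 ≤ a n ∧ a n ≤ d) :
    ∃ M, IsHomogeneousMoran d M ∧ M.Nonempty ∧ ∀ ε > (0 : ℝ), ∃ K : ℕ, ∀ m ≥ K, ∀ w ≥ K,
      |prof M m w - ∑ l ∈ Finset.Ico m (m + w), a l| ≤ ε * w := by
  set A : ℕ → ℝ := fun n => ∑ l ∈ Finset.range n, a l with hA
  have hA1 : ∀ n, A (n + 1) = A n + a n := fun n => Finset.sum_range_succ _ _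
  have hA0 : ∀ n, 0 ≤ A n := fun n => Finset.sum_nonneg fun l _ => (ha l).1
  set f : ℕ → ℕ := fun n => ⌊A n / d⌋₊ with hf
  have hd0 : (0 : ℝ) ≤ d := Nat.cast_nonneg d
  have hfA : ∀ n, (d : ℝ) * f n ≤ A n ∧ A n ≤ d * f n + d := by
    intro n
    rcases Nat.eq_zero_or_pos d with hd | hd
    · have : A n = 0 := Finset.sum_eq_zero fun l _ => by
        have := ha l
        rw [hd, Nat.cast_zero] at this
        exact le_antisymm this.2 this.1
      simp [hd, this]
    · have hd' : (0 : ℝ) < d := by exact_mod_cast hd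
      have h1 := Nat.floor_le (div_nonneg (hA0 n) hd0)
      have h2 := (Nat.lt_floor_add_one (A n / d)).le
      rw [le_div_iff₀' hd'] at h1
      rw [div_le_iff₀' hd'] at h2
      exact ⟨h1, by linarith⟩
  obtain ⟨p, cnt, hp, hp0, hc1, hpc, hcnt⟩ := exists_positions (f := f)
    (fun n => Nat.floor_mono (div_le_div_of_nonneg_right (by rw [hA1]; linarith [(ha n).1]) hd0))
    (fun n => by
      rw [hf]
      simp only
      rw [← Nat.floor_add_one (div_nonneg (hA0 n) hd0)]
      refine Nat.floor_mono ?_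
      rw [hA1, add_div]
      have := div_le_one_of_le₀ (ha n).2 hd0
      linarith)
  set M := moranSet d (ratio p)
  have hMne : M.Nonempty := ⟨_, corner_mem hp hp0 (fun _ _ => false) 0 fun _ _ => rfl⟩
  refine ⟨M, ⟨_, ratio_mem hp, rfl⟩, hMne, fun ε hε => ?_⟩
  have hsum : ∀ m w, ∑ l ∈ Finset.Ico m (m + w), a l = A (m + w) - A m := fun m w =>
    Finset.sum_Ico_eq_sub _ (Nat.le_add_right m w)
  -- the profile of `M` counts, up to an additive constant, the positions in the window
  have hlow : ∀ m w, (d : ℝ) * (cnt (m + w) - cnt m - 1) ≤ prof M m w := by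
    intro m w
    have hpos : 0 ≤ prof M m w := Real.logb_nonneg one_lt_two (by
      exact_mod_cast num_pos hMne m w)
    rcases le_or_gt (cnt (m + w)) (cnt m) with h | h
    · refine le_trans (mul_nonpos_of_nonneg_of_nonpos hd0 ?_) hpos
      have : (cnt (m + w) : ℝ) ≤ cnt m := by exact_mod_cast h
      linarith
    · have := le_num_moran (d := d) hp hp0 (m := m) (w := w) (i₀ := cnt m)
        (k := cnt (m + w) - 1 - cnt m) (hpc m).2
        (by rw [show cnt m + (cnt (m + w) - 1 - cnt m) = cnt (m + w) - 1 by omega]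
            exact (hpc _).1)
      rw [prof, Real.le_logb_iff_rpow_le one_lt_two (by exact_mod_cast num_pos hMne m w)]
      have e : (d : ℝ) * (cnt (m + w) - cnt m - 1) = ((d * (cnt (m + w) - 1 - cnt m) : ℕ) : ℝ) := by
        push_cast [show cnt m ≤ cnt (m + w) - 1 by omega, hc1 (m + w)]
        ring
      rw [e, Real.rpow_natCast]
      exact_mod_cast this
  have hupp : ∀ m w, prof M m w ≤ (d : ℝ) * (cnt (m + w) - cnt m + 3) := by
    intro m w
    have hmono : cnt m ≤ cnt (m + w) := by
      have h1 := (hcnt m w).1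
      have h2 : f m ≤ f (m + w) := by
        have h3 : A m ≤ A (m + w) := by
          have h4 := hsum m w
          have h5 : 0 ≤ ∑ l ∈ Finset.Ico m (m + w), a l := Finset.sum_nonneg fun l _ => (ha l).1
          linarith
        exact Nat.floor_mono (div_le_div_of_nonneg_right h3 hd0)
      omega
    have := num_moran_le (d := d) hp hp0 (m := m) (w := w) (i₀ := cnt m - 1)
      (k := cnt (m + w) + 1 - cnt m) (hpc m).1
      (by rw [show cnt m - 1 + (cnt (m + w) + 1 - cnt m) = cnt (m + w) by have := hc1 m; omega]
          exact (hpc _).2)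
    rw [prof, Real.logb_le_iff_le_rpow one_lt_two (by exact_mod_cast num_pos hMne m w)]
    have e : (d : ℝ) * (cnt (m + w) - cnt m + 3) =
        ((d * (cnt (m + w) + 1 - cnt m + 2) : ℕ) : ℝ) := by
      push_cast [show cnt m ≤ cnt (m + w) + 1 by omega]
      ring
    rw [e, Real.rpow_natCast]
    exact_mod_cast this
  obtain ⟨q, hq⟩ := exists_nat_gt (2 * (d : ℝ) / ε)
  obtain ⟨r, hr⟩ := exists_nat_gt (2 * (5 * d : ℝ) / ε)
  refine ⟨max ((q + 1) * (q + 1)) r, fun m hm w hw => ?_⟩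
  have hsq : q + 1 ≤ Nat.sqrt m := Nat.le_sqrt.2 (le_trans (le_max_left _ _) hm)
  have hrw : r ≤ w := le_trans (le_max_right _ _) hw
  have hsR : (q : ℝ) + 1 ≤ Nat.sqrt m := by exact_mod_cast hsq
  have hrR : (r : ℝ) ≤ w := by exact_mod_cast hrw
  have hq0 : (0 : ℝ) ≤ q := Nat.cast_nonneg q
  have h1 := sqrt_add_le m w (by omega)
  have h2 : (f (m + w) : ℝ) + cnt m ≤ cnt (m + w) + f m := by exact_mod_cast (hcnt m w).1
  have h3 : (cnt (m + w) : ℝ) + f m + Nat.sqrt m ≤ f (m + w) + cnt m + Nat.sqrt (m + w) := by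
    exact_mod_cast (hcnt m w).2
  have h4 : (d : ℝ) * (w / Nat.sqrt m) ≤ ε / 2 * w := by
    rw [div_lt_iff₀ hε] at hq
    rw [← mul_div_assoc, div_le_iff₀ (by linarith)]
    have hw0 : (0 : ℝ) ≤ w := Nat.cast_nonneg w
    have : (d : ℝ) ≤ ε / 2 * Nat.sqrt m := by nlinarith
    nlinarith
  have h5 : 5 * (d : ℝ) ≤ ε / 2 * w := by
    rw [div_lt_iff₀ hε] at hr
    nlinarith
  have g1 := hfA m
  have g2 := hfA (m + w)
  have k1 := hlow m w
  have k2 := hupp m w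
  have l1 := mul_le_mul_of_nonneg_left h2 hd0
  have l2 := mul_le_mul_of_nonneg_left h3 hd0
  have l3 := mul_le_mul_of_nonneg_left h1 hd0
  rw [hsum, abs_le]
  constructor <;> nlinarith

/-- Shadowing is stable under perturbations of size `o(w)`. -/
theorem Shadow.of_close {B : ℝ} {D S G : ℕ → ℕ → ℝ} (h : Shadow B D S)
    (hc : ∀ ε > (0 : ℝ), ∃ K : ℕ, ∀ m ≥ K, ∀ w ≥ K, |G m w - S m w| ≤ ε * w) : Shadow B D G where
  upper ε hε := by
    obtain ⟨K, hK⟩ := h.upper (ε / 2) (by positivity)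
    obtain ⟨K', hK'⟩ := hc (ε / 2) (by positivity)
    refine ⟨max K K', fun m hm w hw => ?_⟩
    obtain ⟨m', h1, h2⟩ := hK m (le_trans (le_max_left _ _) hm) w (le_trans (le_max_left _ _) hw)
    have h3 := (abs_le.1 (hK' m (le_trans (le_max_right _ _) hm) w
      (le_trans (le_max_right _ _) hw))).2
    refine ⟨m', h1.trans ?_, by linarith⟩
    have : (0 : ℝ) ≤ m := Nat.cast_nonneg m
    nlinarith
  lower ε hε := by
    -- with `ε ≤ 1 / 2` the nearby level `m'` is at least `m / 2`, hence still large
    obtain ⟨K, hK⟩ := h.lower (min (ε / 2) (1 / 2)) (by positivity)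
    obtain ⟨K', hK'⟩ := hc (ε / 2) (by positivity)
    refine ⟨max K (2 * K'), fun m hm w hw => ?_⟩
    have e1 := min_le_left (ε / 2) (1 / 2)
    have e2 := min_le_right (ε / 2) (1 / 2)
    have hm0 : (0 : ℝ) ≤ m := Nat.cast_nonneg m
    have hw0 : (0 : ℝ) ≤ w := Nat.cast_nonneg w
    have hm2 : 2 * K' ≤ m := le_trans (le_max_right _ _) hm
    have hw2 : 2 * K' ≤ w := le_trans (le_max_right _ _) hw
    rcases hK m (le_trans (le_max_left _ _) hm) w (le_trans (le_max_left _ _) hw) with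
      ⟨m', h1, h2⟩ | h1
    · left
      have hm2' : (2 : ℝ) * K' ≤ m := by exact_mod_cast hm2
      have h4 : (K' : ℝ) ≤ m' := by
        have := (abs_le.1 h1).1
        nlinarith
      have h3 := (abs_le.1 (hK' m' (by exact_mod_cast h4) w (by omega))).1
      exact ⟨m', h1.trans (by nlinarith), by nlinarith⟩
    · right
      exact h1.trans (by nlinarith)
  mid δ hδ A ε hε := by
    obtain ⟨K, hK⟩ := h.mid δ hδ A (ε / 2) (by positivity)
    obtain ⟨K', hK'⟩ := hc (ε / 2) (by positivity)
    refine ⟨K, fun m hm w h1 h2 N => ?_⟩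
    obtain ⟨m', hm', w', hw', h3, h4⟩ := hK m hm w h1 h2 (max N (max K' 1))
    have hw1 : 1 ≤ w' := le_trans (le_trans (le_max_right _ _) (le_max_right _ _)) hw'
    have hwp : (0 : ℝ) < w' := by exact_mod_cast hw1
    have h5 := (abs_le.1 (hK' m' (le_trans (le_trans (le_max_left _ _) (le_max_right _ _)) hm') w'
      (le_trans (le_trans (le_max_left _ _) (le_max_right _ _)) hw'))).1
    refine ⟨m', le_trans (le_max_left _ _) hm', w', le_trans (le_max_left _ _) hw',
      h3.trans (by linarith), h4.trans ?_⟩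
    have h6 : S m' w' / w' ≤ G m' w' / w' + ε / 2 := by
      rw [div_add' _ _ _ hwp.ne', div_le_div_iff_of_pos_right hwp]
      linarith
    exact mul_le_mul_of_nonneg_right (by linarith) (Nat.cast_nonneg w)

end

end MoranGeneric

open MoranGeneric in
theorem statement11 (d : ℕ) (F : Set (Fin d → ℝ)) (hF : F.Nonempty) (hFb : IsBounded F)
    {A : Type*} (φf : A → ℝ → ℝ) (hφf : ∀ α, IsDimFunction (φf α))
    (Ai : ℕ → Set A) (hcover : ∀ α, ∃ i, α ∈ Ai i)
    (hlim : ∀ i : ℕ, ∀ α ∈ Ai i, ∀ β ∈ Ai i, ∃ l : ENNReal,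
      Filter.Tendsto (fun R => ENNReal.ofReal (φf α R / φf β R))
        (nhdsWithin 0 (Set.Ioo 0 1)) (nhds l)) :
    ∃ M : Set (Fin d → ℝ), IsHomogeneousMoran d M ∧ assouadDim F = assouadDim M ∧
      ∀ α : A, ∀ ψ : ℝ → ℝ, IsDimFunction ψ →
        (∃ c : ℝ, 0 < c ∧ Filter.Tendsto (fun R => ψ R / φf α R)
          (nhdsWithin 0 (Set.Ioo 0 1)) (nhds c)) →
        phiAssouad F ψ = phiAssouad M ψ ∧ phiAssouadUpper F ψ = phiAssouadUpper M ψ := by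
  obtain ⟨a, ha, hS⟩ := exists_rate (isProfile_prof hF)
  obtain ⟨M, hM, hMne, hclose⟩ := exists_moran ha
  have hS' := hS.of_close hclose
  refine ⟨M, hM, ?_, fun _ ψ hψ _ => ⟨phiAssouad_eq hF hMne hS' hψ,
    phiAssouadUpper_eq hF hMne hS' hψ.weakDim⟩⟩
  rw [assouadDim_eq_upper, assouadDim_eq_upper]
  exact phiAssouadUpper_eq hF hMne hS' weakDim_zero
end

section
/- Let f be a polynomial of degree N, with 2 ≤ N < ∞, having non-negative coefficients and satisfying f(1) = 1 (i.e. f is a probability generating function of a finitely supported distribution), and assume m := f'(1) satisfies 1 < m < N. Let f_k denote the k-fold composition of f with itself. Then for every ε > 0 and every s ∈ (0,1), lim_{k→∞} (1/N^{(s+ε)k}) · log f_k( exp( m^{−(1−s)k} ) ) = 0. -/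
/-!
Put `g t = log f (exp t)`, so that `log f_k (exp t) = g^[k] t`. For `t ≥ 0` one has
`0 ≤ g t ≤ N t`, and since `g 0 = 0` and `g' 0 = m`, every `m' > m` satisfies `g t ≤ m' t` on some
interval `[0, η]`.

Fix `1 < a < log N / log m` and `m' = N ^ (1 / a) > m`. The potential
`V t = t * (min t η) ^ (a - 1)`, which is `t ^ a` below `η` and linear above `η`, satisfies
`V (g t) ≤ N * V t` for all `t ≥ 0` (`potential_step`): below `η` because `m' ^ a = N`, above `η`
because `g t ≤ N t`. Hence `V (g^[k] t) ≤ N ^ k * t ^ a`, and as `x ≤ η + η ^ (-(a - 1)) * V x`,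
`g^[k] t ≤ η + η ^ (-(a - 1)) * N ^ k * t ^ a` (`iterate_bound`). At `t = m ^ (-(1 - s) k)`,
dividing by `N ^ ((s + ε) k)` leaves two geometric sequences, with ratios `N ^ (-(s + ε))` and
`N ^ (1 - (s + ε)) * m ^ (-(1 - s) a)`. The second ratio is less than `1` once `a` is close enough
to `log N / log m`.
-/

/-- The potential that grows by a factor of at most `N` along each step of `t ↦ log f (exp t)`:
it equals `t ^ a` for `0 < t ≤ η` and continues linearly beyond `η`. -/
noncomputable def potential (η a t : ℝ) : ℝ := t * (min t η) ^ (a - 1)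

lemma potential_step {g : ℝ → ℝ} {N m' η a : ℝ} (hη : 0 < η) (ha : 1 < a) (hm' : 0 < m')
    (hN : m' * m' ^ (a - 1) = N) (h0 : ∀ t, 0 ≤ t → 0 ≤ g t) (h1 : ∀ t, 0 ≤ t → g t ≤ N * t)
    (h2 : ∀ t, 0 ≤ t → t ≤ η → g t ≤ m' * t) {t : ℝ} (ht : 0 ≤ t) :
    potential η a (g t) ≤ N * potential η a t := by
  have hg := h0 t ht
  have ha' : 0 ≤ a - 1 := by linarith
  unfold potential
  rcases le_total t η with h | h
  · have hgt := h2 t ht h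
    calc g t * (min (g t) η) ^ (a - 1) ≤ (m' * t) * (m' * t) ^ (a - 1) := by
          have : min (g t) η ≤ m' * t := (min_le_left _ _).trans hgt
          have h3 : 0 ≤ min (g t) η := le_min hg hη.le
          gcongr
      _ = N * (t * (min t η) ^ (a - 1)) := by
          rw [min_eq_left h, Real.mul_rpow hm'.le ht, ← hN]; ring
  · calc g t * (min (g t) η) ^ (a - 1) ≤ (N * t) * η ^ (a - 1) := by
          have : min (g t) η ≤ η := min_le_right _ _
          have h3 : 0 ≤ min (g t) η := le_min hg hη.le
          have h4 := h1 t ht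
          have h5 : 0 ≤ N * t := hg.trans h4
          gcongr
      _ = N * (t * (min t η) ^ (a - 1)) := by
          rw [min_eq_right h]; ring

lemma iterate_bound {g : ℝ → ℝ} {N m' η a : ℝ} (hη : 0 < η) (ha : 1 < a) (hm' : 0 < m')
    (hN : m' * m' ^ (a - 1) = N) (h0 : ∀ t, 0 ≤ t → 0 ≤ g t) (h1 : ∀ t, 0 ≤ t → g t ≤ N * t)
    (h2 : ∀ t, 0 ≤ t → t ≤ η → g t ≤ m' * t) {t : ℝ} (ht : 0 < t) (k : ℕ) :
    0 ≤ g^[k] t ∧ g^[k] t ≤ η + η ^ (-(a - 1)) * (N ^ k * t ^ a) := by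
  have hN0 : 0 < N := hN ▸ mul_pos hm' (Real.rpow_pos_of_pos hm' _)
  have key : 0 ≤ g^[k] t ∧ potential η a (g^[k] t) ≤ N ^ k * potential η a t := by
    induction k with
    | zero => simpa using ht.le
    | succ k ih =>
      rw [Function.iterate_succ_apply']
      refine ⟨h0 _ ih.1, (potential_step hη ha hm' hN h0 h1 h2 ih.1).trans ?_⟩
      rw [pow_succ', mul_assoc]
      exact mul_le_mul_of_nonneg_left ih.2 hN0.le
  have hpos : potential η a t ≤ t ^ a := by
    have ha' : 0 ≤ a - 1 := by linarith
    have h4 : 0 ≤ min t η := le_min ht.le hη.le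
    calc t * (min t η) ^ (a - 1) ≤ t * t ^ (a - 1) := by
          have := min_le_left t η
          gcongr
      _ = t ^ a := by
          rw [Real.rpow_sub_one ht.ne']; field_simp
  have hk : potential η a (g^[k] t) ≤ N ^ k * t ^ a :=
    key.2.trans (mul_le_mul_of_nonneg_left hpos (by positivity))
  refine ⟨key.1, ?_⟩
  generalize g^[k] t = x at key hk
  have hx := key.1
  have hηp : 0 < η ^ (-(a - 1)) := Real.rpow_pos_of_pos hη _
  rcases le_total x η with h | h
  · have : 0 ≤ η ^ (-(a - 1)) * (N ^ k * t ^ a) := by positivity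
    linarith
  · have h5 : η ^ (-(a - 1)) * potential η a x = x := by
      unfold potential
      rw [min_eq_right h, mul_left_comm, ← Real.rpow_add hη]; simp
    have := mul_le_mul_of_nonneg_left hk hηp.le
    linarith

section GeneratingFunction

variable {p : Polynomial ℝ}

lemma one_le_eval (hcoeff : ∀ j, 0 ≤ p.coeff j) (hone : p.eval 1 = 1) {x : ℝ} (hx : 1 ≤ x) :
    1 ≤ p.eval x := by
  rw [← hone, Polynomial.eval_eq_sum_range, Polynomial.eval_eq_sum_range]
  refine Finset.sum_le_sum fun j _ => mul_le_mul_of_nonneg_left ?_ (hcoeff j)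
  rw [one_pow]; exact one_le_pow₀ hx

lemma eval_le_pow (hcoeff : ∀ j, 0 ≤ p.coeff j) (hone : p.eval 1 = 1) {x : ℝ} (hx : 1 ≤ x) :
    p.eval x ≤ x ^ p.natDegree := by
  have h : x ^ p.natDegree = p.eval 1 * x ^ p.natDegree := by rw [hone, one_mul]
  rw [h, Polynomial.eval_eq_sum_range, Polynomial.eval_eq_sum_range, Finset.sum_mul]
  refine Finset.sum_le_sum fun j hj => ?_
  rw [one_pow, mul_one]
  exact mul_le_mul_of_nonneg_left
    (pow_le_pow_right₀ hx (Nat.lt_succ_iff.mp (Finset.mem_range.mp hj))) (hcoeff j)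

lemma eval_pos_of_pos (hcoeff : ∀ j, 0 ≤ p.coeff j) (hone : p.eval 1 = 1) {x : ℝ} (hx : 0 < x) :
    0 < p.eval x := by
  have hp : p ≠ 0 := by rintro rfl; simp at hone
  rw [Polynomial.eval_eq_sum_range]
  refine Finset.sum_pos' (fun j _ => mul_nonneg (hcoeff j) (by positivity))
    ⟨p.natDegree, by simp, mul_pos ?_ (by positivity)⟩
  exact lt_of_le_of_ne (hcoeff _) (Ne.symm (by simpa using hp))

lemma log_iterate_eval (hcoeff : ∀ j, 0 ≤ p.coeff j) (hone : p.eval 1 = 1) (k : ℕ) (t : ℝ) :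
    Real.log ((fun x => p.eval x)^[k] (Real.exp t)) =
      (fun t => Real.log (p.eval (Real.exp t)))^[k] t := by
  have h : Function.Semiconj Real.exp (fun t => Real.log (p.eval (Real.exp t)))
      (fun x => p.eval x) := fun t =>
    Real.exp_log (eval_pos_of_pos hcoeff hone (Real.exp_pos t))
  rw [← (h.iterate_right k).eq t, Real.log_exp]

lemma exists_log_eval_le (hone : p.eval 1 = 1) {m' : ℝ}
    (hm' : (Polynomial.derivative p).eval 1 < m') :
    ∃ η > 0, ∀ t, 0 ≤ t → t ≤ η → Real.log (p.eval (Real.exp t)) ≤ m' * t := by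
  have hd : HasDerivAt (fun t => Real.log (p.eval (Real.exp t)))
      ((Polynomial.derivative p).eval 1) 0 := by
    have h1 : HasDerivAt (fun t => p.eval (Real.exp t))
        ((Polynomial.derivative p).eval (Real.exp 0) * Real.exp 0) 0 :=
      (p.hasDerivAt (Real.exp 0)).comp 0 (Real.hasDerivAt_exp 0)
    simpa [hone] using h1.log (by simp [hone])
  have hs := (hasDerivAt_iff_tendsto_slope.mp hd).eventually (gt_mem_nhds hm')
  rw [eventually_nhdsWithin_iff, Metric.eventually_nhds_iff] at hs
  obtain ⟨δ, hδ, h⟩ := hs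
  refine ⟨δ / 2, by positivity, fun t ht0 ht => ?_⟩
  rcases ht0.eq_or_lt with rfl | hpos
  · simp [hone]
  · have h2 := h (y := t) (by rw [Real.dist_eq, sub_zero, abs_of_pos hpos]; linarith) hpos.ne'
    rw [slope_def_field] at h2
    simp only [Real.exp_zero, hone, Real.log_one, sub_zero] at h2
    exact ((div_lt_iff₀ hpos).mp h2).le

end GeneratingFunction

theorem statement12 (N : ℕ) (hN : 2 ≤ N) (p : Polynomial ℝ)
    (hdeg : p.natDegree = N) (hcoeff : ∀ j, 0 ≤ p.coeff j) (hone : p.eval 1 = 1)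
    (m : ℝ) (hm : m = (Polynomial.derivative p).eval 1) (hm1 : 1 < m) (hmN : m < N)
    (ε s : ℝ) (hε : 0 < ε) (hs : s ∈ Set.Ioo (0:ℝ) 1) :
    Filter.Tendsto (fun k : ℕ =>
      (1 / (N : ℝ) ^ ((s + ε) * (k : ℝ))) *
        Real.log ((fun x => p.eval x)^[k] (Real.exp (m ^ (-((1 - s) * (k : ℝ)))))))
      Filter.atTop (nhds 0) := by
  obtain ⟨hs0, hs1⟩ := hs
  have hm0 : 0 < m := by linarith
  have hN1 : (1 : ℝ) < N := hm1.trans hmN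
  have hN0 : (0 : ℝ) < N := by linarith
  have hlm : 0 < Real.log m := Real.log_pos hm1
  have hlN : 0 < Real.log N := Real.log_pos hN1
  have h1s : 0 < 1 - s := by linarith
  -- The lower bound on `a` makes the ratio `N ^ (1 - (s + ε)) * m ^ (-(1 - s) a)` less than `1`.
  obtain ⟨a, haL, haU⟩ : ∃ a, max 1 ((1 - (s + ε)) * Real.log N / ((1 - s) * Real.log m)) < a ∧
      a < Real.log N / Real.log m := by
    refine exists_between (max_lt ?_ ?_)
    · rw [lt_div_iff₀ hlm, one_mul]; exact Real.log_lt_log hm0 hmN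
    · rw [div_lt_div_iff₀ (by positivity) hlm]
      have : 0 < ε * (Real.log N * Real.log m) := by positivity
      linarith
  have ha1 : 1 < a := (le_max_left _ _).trans_lt haL
  have ha0 : 0 < a := by linarith
  have ha2 : (1 - (s + ε)) * Real.log N < a * ((1 - s) * Real.log m) :=
    (div_lt_iff₀ (by positivity)).mp ((le_max_right _ _).trans_lt haL)
  have ham : a * Real.log m < Real.log N := (lt_div_iff₀ hlm).mp haU
  set m' : ℝ := (N : ℝ) ^ (1 / a) with hm'
  have hm'0 : 0 < m' := Real.rpow_pos_of_pos hN0 _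
  have hmm' : m < m' := by
    rw [← Real.log_lt_log_iff hm0 hm'0, hm', Real.log_rpow hN0, one_div, inv_mul_eq_div,
      lt_div_iff₀ ha0]
    linarith
  have hm'N : m' * m' ^ (a - 1) = N := by
    have h : m' * m' ^ (a - 1) = m' ^ a := by rw [Real.rpow_sub_one hm'0.ne']; field_simp
    rw [h, hm', ← Real.rpow_mul hN0.le, one_div, inv_mul_cancel₀ ha0.ne', Real.rpow_one]
  obtain ⟨η, hη, hloc⟩ := exists_log_eval_le hone (m' := m') (by rw [← hm]; exact hmm')
  have hbound := fun k : ℕ => iterate_bound (g := fun t => Real.log (p.eval (Real.exp t)))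
    hη ha1 hm'0 hm'N
    (fun t ht => Real.log_nonneg (one_le_eval hcoeff hone (Real.one_le_exp ht)))
    (fun t ht => by
      have h := Real.log_le_log (eval_pos_of_pos hcoeff hone (Real.exp_pos t))
        (eval_le_pow hcoeff hone (Real.one_le_exp ht))
      rwa [Real.log_pow, Real.log_exp, hdeg] at h)
    hloc (t := m ^ (-((1 - s) * (k : ℝ)))) (Real.rpow_pos_of_pos hm0 _) k
  simp only [log_iterate_eval hcoeff hone]
  have hr1 : (N : ℝ) ^ (-(s + ε)) < 1 := Real.rpow_lt_one_of_one_lt_of_neg hN1 (by linarith)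
  have hr2 : (N : ℝ) ^ (1 - (s + ε)) * m ^ (-((1 - s) * a)) < 1 := by
    rw [← Real.log_neg_iff (by positivity), Real.log_mul (by positivity) (by positivity),
      Real.log_rpow hN0, Real.log_rpow hm0]
    linarith
  have hlim : Filter.Tendsto (fun k : ℕ => η * ((N : ℝ) ^ (-(s + ε))) ^ k +
      η ^ (-(a - 1)) * ((N : ℝ) ^ (1 - (s + ε)) * m ^ (-((1 - s) * a))) ^ k)
      Filter.atTop (nhds 0) := by
    simpa using ((tendsto_pow_atTop_nhds_zero_of_lt_one (by positivity) hr1).const_mul η).add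
      ((tendsto_pow_atTop_nhds_zero_of_lt_one (by positivity) hr2).const_mul (η ^ (-(a - 1))))
  refine squeeze_zero (fun k => mul_nonneg (by positivity) (hbound k).1) (fun k => ?_) hlim
  refine (mul_le_mul_of_nonneg_left (hbound k).2 (by positivity)).trans (le_of_eq ?_)
  have e1 : 1 / (N : ℝ) ^ ((s + ε) * (k : ℝ)) = ((N : ℝ) ^ (-(s + ε))) ^ k := by
    rw [← Real.rpow_mul_natCast hN0.le, neg_mul, Real.rpow_neg hN0.le, one_div]
  have e2 : (N : ℝ) ^ (1 - (s + ε)) = (N : ℝ) ^ (-(s + ε)) * N := by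
    rw [show 1 - (s + ε) = -(s + ε) + 1 by ring, Real.rpow_add_one hN0.ne']
  have e3 : (m ^ (-((1 - s) * (k : ℝ)))) ^ a = (m ^ (-((1 - s) * a))) ^ k := by
    rw [← Real.rpow_mul hm0.le, ← Real.rpow_mul_natCast hm0.le]
    congr 1; ring
  rw [e1, e2, e3, mul_pow, mul_pow]
  ring
end
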